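/- arXiv:1604.08053 — 3 statements merged into one kernel-verified Lean document; each statement's English description precedes it below -/
import Mathlib

section
/- Let G be a bridgeless cubic graph and f ∈ E(G). Then for every value a with 1 ≤ a ≤ 5, the all-positive signed graph (G, 𝟙) admits a nowhere-zero 6-flow (D, φ) with φ(f) = a. -/
open Finset SimpleGraph

attribute [local instance] Classical.propDecidable

variable {V : Type}

/-- `σ` is a valid `±1` signature on the edges of `G`. -/
def IsSignature (G : SimpleGraph V) (σ : Sym2 V → ℤ) : Prop :=
  ∀ e ∈ G.edgeSet, σ e = 1 ∨ σ e = -1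

/-- The set of negative edges of the signed graph `(G, σ)`. -/
def NegEdges (G : SimpleGraph V) (σ : Sym2 V → ℤ) : Set (Sym2 V) :=
  {e | e ∈ G.edgeSet ∧ σ e = -1}

/-- A bidirected orientation of the signed graph `(G, σ)`: `τ v e = 1` means that the
half-edge of `e` at `v` points towards `v`, and `τ v e = -1` that it points away from `v`.
On a positive edge the two half-edges are directed consistently, while on a negative edge
both half-edges point outwards (extroverted) or both point inwards (introverted). -/
def IsOrientation (G : SimpleGraph V) (σ : Sym2 V → ℤ) (τ : V → Sym2 V → ℤ) : Prop :=
  (∀ v e, τ v e = 1 ∨ τ v e = -1) ∧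
  ∀ u v, G.Adj u v → τ u s(u, v) * τ v s(u, v) = - σ s(u, v)

/-- `(τ, φ)` is an integer-valued flow on the signed graph `(G, σ)`:
Kirchhoff's law holds at every vertex. -/
def IsFlow [Fintype V] (G : SimpleGraph V) (σ : Sym2 V → ℤ)
    (τ : V → Sym2 V → ℤ) (φ : Sym2 V → ℤ) : Prop :=
  IsOrientation G σ τ ∧
    ∀ v : V, (∑ w : V, if G.Adj v w then τ v s(v, w) * φ s(v, w) else 0) = 0

/-- `(τ, φ)` is a nowhere-zero `k`-flow on `(G, σ)`. -/
def IsNZFlow [Fintype V] (G : SimpleGraph V) (σ : Sym2 V → ℤ) (k : ℤ)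
    (τ : V → Sym2 V → ℤ) (φ : Sym2 V → ℤ) : Prop :=
  IsFlow G σ τ φ ∧ ∀ e ∈ G.edgeSet, 0 < |φ e| ∧ |φ e| < k

/-- A signed graph is flow-admissible if it admits a nowhere-zero `k`-flow for some `k`. -/
def FlowAdmissible [Fintype V] (G : SimpleGraph V) (σ : Sym2 V → ℤ) : Prop :=
  ∃ (k : ℤ) (τ : V → Sym2 V → ℤ) (φ : Sym2 V → ℤ), IsNZFlow G σ k τ φ

/-- The flow number `F(G, σ)`: the least `k` admitting a nowhere-zero `k`-flow. -/
noncomputable def flowNumber [Fintype V] (G : SimpleGraph V) (σ : Sym2 V → ℤ) : ℕ :=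
  sInf {k : ℕ | ∃ τ φ, IsNZFlow G σ (k : ℤ) τ φ}

/-- An edge-cut of `G`: the set of edges crossing a nontrivial vertex partition. -/
def IsEdgeCut (G : SimpleGraph V) (X : Set (Sym2 V)) : Prop :=
  ∃ S : Set V, S.Nonempty ∧ Sᶜ.Nonempty ∧
    X = {e | e ∈ G.edgeSet ∧ ∃ a ∈ S, ∃ b ∈ Sᶜ, e = s(a, b)}

/-- The all-positive signature. -/
def allPos : Sym2 V → ℤ := fun _ => 1

/-- `G` is cubic (3-regular). -/
def CubicGraph (G : SimpleGraph V) : Prop := ∀ v : V, (G.neighborSet v).ncard = 3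

/-- `G` has no bridge. -/
def Bridgeless (G : SimpleGraph V) : Prop := ∀ e ∈ G.edgeSet, ¬ G.IsBridge e

/-- A walk is directed (with respect to the orientation `τ` of `(G, σ)`) if every dart of
the walk traverses a positive edge in the direction of its orientation. -/
def IsDirectedWalk {G : SimpleGraph V} (σ : Sym2 V → ℤ) (τ : V → Sym2 V → ℤ) {u v : V}
    (p : G.Walk u v) : Prop :=
  ∀ d ∈ p.darts, σ s(d.toProd.1, d.toProd.2) = 1 ∧
    τ d.toProd.2 s(d.toProd.1, d.toProd.2) = 1

/-- `M` is a perfect matching (1-factor) of `G`. -/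
def IsPM (G : SimpleGraph V) (M : Set (Sym2 V)) : Prop :=
  M ⊆ G.edgeSet ∧ ∀ v : V, ∃! e, e ∈ M ∧ v ∈ e

/-- `c` is a proper 3-edge-coloring of `G`. -/
def IsProper3EdgeColoring (G : SimpleGraph V) (c : Sym2 V → Fin 3) : Prop :=
  ∀ e₁ ∈ G.edgeSet, ∀ e₂ ∈ G.edgeSet, e₁ ≠ e₂ → (∃ w, w ∈ e₁ ∧ w ∈ e₂) → c e₁ ≠ c e₂

/-!
Directed multigraphs allow vertices to be identified without losing edges. If every cut has at
least three edges, delete `f` and look for a nowhere-zero labelling with values in `ZMod 2 × A`,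
where `A` has at least three elements, whose divergence is `a` at one end of `f` and `-a` at the
other. Start from a connected subgraph of the right degree parities through both ends, and
repeatedly attach to the current vertex set `H` a connected even subgraph joined to `H` by at least
two edges. The union of these subgraphs carries the `ZMod 2`-coordinate. In the `A`-coordinate the
values on their edges are free, so they can absorb any demand, while the connecting edges, coming at
least two at a time, can be given nonzero values of any prescribed sum.

Cuts with no edge or two edges are removed by identifying two vertices, which turns every flow of
the identified graph into one of the original graph after correcting a single edge. Finally
`ZMod 2 × ZMod 3 ≃ ZMod 6`, and Hoffman's circulation theorem lifts a nowhere-zero `ZMod 6`-flow to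
an integer flow with absolute values below `6` without changing the representative at `f`.
-/

/-- A directed multigraph on the vertex type `V` whose edges are the elements of `E`; parallel edges
and loops are allowed. Cuts ignore the directions, which only fix the signs of flow values. -/
structure Multidigraph (V E : Type*) where
  /-- The tail of an edge. -/
  src : E → V
  /-- The head of an edge. -/
  tgt : E → V

namespace Multidigraph

variable {V E : Type*} (D : Multidigraph V E)

/-! ### Divergence and cuts -/

section Divergence

variable {A B : Type*} [AddCommGroup A] [AddCommGroup B] [Fintype E]

/-- The divergence of an edge labelling: outgoing minus incoming values at each vertex. The
labelling is a flow when its divergence is `0`. -/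
noncomputable def divergence : (E → A) →+ (V → A) where
  toFun g := ∑ e, (Pi.single (D.src e) (g e) - Pi.single (D.tgt e) (g e))
  map_zero' := by simp
  map_add' g h := by
    simp only [Pi.add_apply, Pi.single_add, add_sub_add_comm, sum_add_distrib]

lemma divergence_apply (g : E → A) (v : V) :
    D.divergence g v =
      ∑ e, ((if D.src e = v then g e else 0) - (if D.tgt e = v then g e else 0)) := by
  simp [divergence, Finset.sum_apply, Pi.single_apply, eq_comm]

lemma divergence_single (e : E) (a : A) :
    D.divergence (Pi.single e a) = Pi.single (D.src e) a - Pi.single (D.tgt e) a := by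
  change ∑ e', _ = _
  rw [sum_eq_single e (fun e' _ he' => by simp [Pi.single_eq_of_ne he']) (by simp)]
  simp

lemma divergence_hom_comp (h : A →+ B) (g : E → A) (v : V) :
    D.divergence (fun e => h (g e)) v = h (D.divergence g v) := by
  simp only [divergence_apply, map_sum, map_sub, apply_ite h, map_zero]

lemma sum_divergence (g : E → A) (S : Finset V) :
    ∑ v ∈ S, D.divergence g v =
      ∑ e, ((if D.src e ∈ S then g e else 0) - (if D.tgt e ∈ S then g e else 0)) := by
  simp only [divergence_apply]
  rw [sum_comm]
  simp only [sum_sub_distrib, sum_ite_eq]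

lemma sum_univ_divergence [Fintype V] (g : E → A) : ∑ v, D.divergence g v = 0 := by
  simp [sum_divergence]

/-- The edges with exactly one endpoint in `S`. -/
noncomputable def cut (S : Finset V) : Finset E :=
  {e | ¬ (D.src e ∈ S ↔ D.tgt e ∈ S)}

@[simp]
lemma mem_cut {S : Finset V} {e : E} : e ∈ D.cut S ↔ ¬ (D.src e ∈ S ↔ D.tgt e ∈ S) := by
  simp [cut]

lemma sum_divergence_eq_sum_cut (g : E → A) (S : Finset V) :
    ∑ v ∈ S, D.divergence g v = ∑ e ∈ D.cut S, if D.src e ∈ S then g e else -g e := by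
  rw [sum_divergence, cut, sum_filter]
  refine sum_congr rfl fun e _ => ?_
  by_cases hs : D.src e ∈ S <;> by_cases ht : D.tgt e ∈ S <;> simp [hs, ht]

lemma divergence_indicator_src_mem {g : E → A} {K : Finset V}
    (hK : ∀ e, g e ≠ 0 → (D.src e ∈ K ↔ D.tgt e ∈ K)) :
    D.divergence ({e | D.src e ∈ K}.indicator g) = (K : Set V).indicator (D.divergence g) := by
  funext v
  simp only [Set.indicator_apply, divergence_apply, Set.mem_ofPred_eq, mem_coe]
  by_cases hv : v ∈ K
  · rw [if_pos hv]
    refine sum_congr rfl fun e _ => ?_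
    have := hK e
    grind
  · rw [if_neg hv]
    refine sum_eq_zero fun e _ => ?_
    have := hK e
    grind

end Divergence

/-! ### Hoffman's circulation theorem -/

section Hoffman

lemma le_sub_single {lo hi : E → ℤ} (hle : lo ≤ hi) {e : E} (he : lo e < hi e) :
    lo ≤ hi - Pi.single e 1 := fun e' => by
  obtain rfl | hne := eq_or_ne e' e
  · simpa using Int.le_sub_one_of_lt he
  · simpa [hne] using hle e'

variable [Fintype E]

/-- The largest net outflow from `S` of a labelling with values between `lo` and `hi`. -/
noncomputable def cutCapacity (lo hi : E → ℤ) (S : Finset V) : ℤ :=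
  ∑ e, ((if D.src e ∈ S ∧ D.tgt e ∉ S then hi e else 0) -
    (if D.tgt e ∈ S ∧ D.src e ∉ S then lo e else 0))

lemma cutCapacity_self (g : E → ℤ) (S : Finset V) :
    D.cutCapacity g g S = ∑ v ∈ S, D.divergence g v := by
  rw [sum_divergence, cutCapacity]
  refine sum_congr rfl fun e _ => ?_
  by_cases hs : D.src e ∈ S <;> by_cases ht : D.tgt e ∈ S <;> simp [hs, ht]

lemma cutCapacity_sub_single (lo hi : E → ℤ) (e : E) (S : Finset V) :
    D.cutCapacity lo (hi - Pi.single e 1) S =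
      D.cutCapacity lo hi S - if D.src e ∈ S ∧ D.tgt e ∉ S then 1 else 0 := by
  have hsingle : (if D.src e ∈ S ∧ D.tgt e ∉ S then (1 : ℤ) else 0) =
      ∑ e', if D.src e' ∈ S ∧ D.tgt e' ∉ S then (Pi.single e 1 : E → ℤ) e' else 0 := by
    rw [sum_eq_single e (fun e' _ he' => by simp [Pi.single_eq_of_ne he']) (by simp)]
    simp
  rw [hsingle, cutCapacity, cutCapacity, ← sum_sub_distrib]
  refine sum_congr rfl fun e' _ => ?_
  rw [Pi.sub_apply]
  split_ifs <;> ring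

lemma cutCapacity_add_single (lo hi : E → ℤ) (e : E) (S : Finset V) :
    D.cutCapacity (lo + Pi.single e 1) hi S =
      D.cutCapacity lo hi S - if D.tgt e ∈ S ∧ D.src e ∉ S then 1 else 0 := by
  have hsingle : (if D.tgt e ∈ S ∧ D.src e ∉ S then (1 : ℤ) else 0) =
      ∑ e', if D.tgt e' ∈ S ∧ D.src e' ∉ S then (Pi.single e 1 : E → ℤ) e' else 0 := by
    rw [sum_eq_single e (fun e' _ he' => by simp [Pi.single_eq_of_ne he']) (by simp)]
    simp
  rw [hsingle, cutCapacity, cutCapacity, ← sum_sub_distrib]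
  refine sum_congr rfl fun e' _ => ?_
  rw [Pi.add_apply]
  split_ifs <;> ring

lemma cutCapacity_inter_add_union_le {lo hi : E → ℤ} (hle : lo ≤ hi) {S T : Finset V} {e : E}
    (hS : D.src e ∈ S ∧ D.tgt e ∉ S) (hT : D.tgt e ∈ T ∧ D.src e ∉ T) :
    D.cutCapacity lo hi (S ∩ T) + D.cutCapacity lo hi (S ∪ T) + (hi e - lo e) ≤
      D.cutCapacity lo hi S + D.cutCapacity lo hi T := by
  have hgap : hi e - lo e = ∑ e', if e' = e then hi e' - lo e' else 0 := by simp
  simp only [hgap, cutCapacity, ← sum_add_distrib]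
  refine sum_le_sum fun e' _ => ?_
  have := hle e'
  by_cases he : e' = e
  · subst he
    simp [hS, hT]
  · by_cases hsS : D.src e' ∈ S <;> by_cases htS : D.tgt e' ∈ S <;>
      by_cases hsT : D.src e' ∈ T <;> by_cases htT : D.tgt e' ∈ T <;>
      simp [he, hsS, htS, hsT, htT, this]

/-- Hoffman's circulation theorem with demands. While some `lo e < hi e`, one of the two bounds can
be tightened: otherwise tight cuts on both sides of `e` would contradict submodularity. -/
theorem exists_divergence_eq_of_le_cutCapacity [Fintype V] {lo hi : E → ℤ} {b : V → ℤ}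
    (hle : lo ≤ hi) (hb : ∑ v, b v = 0) (hcut : ∀ S, ∑ v ∈ S, b v ≤ D.cutCapacity lo hi S) :
    ∃ g, lo ≤ g ∧ g ≤ hi ∧ D.divergence g = b := by
  induction hN : (∑ e, (hi e - lo e)).toNat using Nat.strong_induction_on generalizing lo hi with
  | _ N ih =>
  rcases hle.eq_or_lt with rfl | hlt
  · have hbound : ∀ v ∈ univ, b v ≤ D.divergence lo v := fun v _ => by
      simpa [cutCapacity_self] using hcut {v}
    have heq := (sum_eq_sum_iff_of_le hbound).1 (by rw [hb, sum_univ_divergence])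
    exact ⟨lo, le_rfl, le_rfl, funext fun v => (heq v (mem_univ v)).symm⟩
  obtain ⟨-, e, he⟩ := Pi.lt_def.1 hlt
  have htight : lo ≤ hi - Pi.single e 1 := le_sub_single hle he
  have hpos : 0 < ∑ e, (hi e - lo e) :=
    sum_pos' (fun e' _ => sub_nonneg.2 (hle e')) ⟨e, mem_univ e, sub_pos.2 he⟩
  by_cases hlower : ∀ S, ∑ v ∈ S, b v ≤ D.cutCapacity lo (hi - Pi.single e 1) S
  · obtain ⟨g, hlo, hhi, hg⟩ := ih _ (by simpa [sub_right_comm, ← hN] using hpos) htight hlower rfl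
    exact ⟨g, hlo, hhi.trans (sub_le_self _ (Pi.single_nonneg.2 zero_le_one)), hg⟩
  by_cases hraise : ∀ S, ∑ v ∈ S, b v ≤ D.cutCapacity (lo + Pi.single e 1) hi S
  · obtain ⟨g, hlo, hhi, hg⟩ :=
      ih _ (by simpa [← sub_sub, ← hN] using hpos) (le_sub_iff_add_le.1 htight) hraise rfl
    exact ⟨g, (le_add_of_nonneg_right (Pi.single_nonneg.2 zero_le_one)).trans hlo, hhi, hg⟩
  push Not at hlower hraise
  obtain ⟨S, hS⟩ := hlower
  obtain ⟨T, hT⟩ := hraise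
  have hbST := sum_union_inter (s₁ := S) (s₂ := T) (f := b)
  rw [cutCapacity_sub_single] at hS
  rw [cutCapacity_add_single] at hT
  have hSe : D.src e ∈ S ∧ D.tgt e ∉ S := by
    by_contra hSe
    rw [if_neg hSe] at hS
    linarith [hcut S]
  have hTe : D.tgt e ∈ T ∧ D.src e ∉ T := by
    by_contra hTe
    rw [if_neg hTe] at hT
    linarith [hcut T]
  rw [if_pos hSe] at hS
  rw [if_pos hTe] at hT
  have hsub := D.cutCapacity_inter_add_union_le hle hSe hTe
  linarith [hcut (S ∩ T), hcut (S ∪ T), Int.le_of_sub_one_lt hS, Int.le_of_sub_one_lt hT]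

end Hoffman

/-! ### Menger's theorem in the form of connected parity subgraphs -/

section Connected

/-- Two vertices are linked by `C` if they are the endpoints of an edge in `C`. -/
def Linked (C : Finset E) (x y : V) : Prop :=
  ∃ e ∈ C, D.src e = x ∧ D.tgt e = y ∨ D.src e = y ∧ D.tgt e = x

/-- The vertices joined to `r` by edges of `C`. -/
noncomputable def component [Fintype V] (C : Finset E) (r : V) : Finset V :=
  {x | Relation.ReflTransGen (D.Linked C) r x}

lemma mem_component [Fintype V] {C : Finset E} {r x : V} :
    x ∈ D.component C r ↔ Relation.ReflTransGen (D.Linked C) r x := by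
  simp [component]

lemma src_mem_component_iff [Fintype V] {C : Finset E} {r : V} {e : E} (he : e ∈ C) :
    D.src e ∈ D.component C r ↔ D.tgt e ∈ D.component C r := by
  simp only [mem_component]
  exact ⟨fun h => h.tail ⟨e, he, .inl ⟨rfl, rfl⟩⟩, fun h => h.tail ⟨e, he, .inr ⟨rfl, rfl⟩⟩⟩

variable [Fintype E]

/-- The edges with both endpoints in `S`. -/
noncomputable def edgesWithin (S : Finset V) : Finset E :=
  {e | D.src e ∈ S ∧ D.tgt e ∈ S}

@[simp]
lemma mem_edgesWithin {S : Finset V} {e : E} :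
    e ∈ D.edgesWithin S ↔ D.src e ∈ S ∧ D.tgt e ∈ S := by
  simp [edgesWithin]

/-- The subgraph with vertex set `K` and edge set `C` is connected and contains the
vertex `r`. -/
structure IsConnectedSubgraph (r : V) (K : Finset V) (C : Finset E) : Prop where
  root_mem : r ∈ K
  subset_edgesWithin : C ⊆ D.edgesWithin K
  reachable : ∀ x ∈ K, Relation.ReflTransGen (D.Linked C) r x

/-- The parity of the number of edges of `C` at each vertex, where a loop counts twice. -/
noncomputable def degreeParity (C : Finset E) : V → ZMod 2 :=
  D.divergence ((C : Set E).indicator 1)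

lemma degreeParity_union {C C' : Finset E} (h : Disjoint C C') :
    D.degreeParity (C ∪ C') = D.degreeParity C + D.degreeParity C' := by
  rw [degreeParity, coe_union, Set.indicator_union_of_disjoint (disjoint_coe.2 h), ← Pi.add_def,
    map_add]
  rfl

lemma degreeParity_support {g : E → ℤ} (hg : ∀ e, |g e| ≤ 1) (v : V) :
    D.degreeParity {e | g e ≠ 0} v = D.divergence g v := by
  have hcast : (({e | g e ≠ 0} : Finset E) : Set E).indicator 1 = fun e => (g e : ZMod 2) := by
    funext e
    have := abs_le.1 (hg e)
    obtain h | h | h : g e = -1 ∨ g e = 0 ∨ g e = 1 := by omega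
    all_goals simp [h]
  rw [degreeParity, hcast]
  exact D.divergence_hom_comp (Int.castAddHom (ZMod 2)) g v

lemma isConnectedSubgraph_component [Fintype V] (C : Finset E) (r : V) :
    D.IsConnectedSubgraph r (D.component C r) {e ∈ C | D.src e ∈ D.component C r} where
  root_mem := D.mem_component.2 .refl
  subset_edgesWithin e he := by
    obtain ⟨heC, hsrc⟩ := mem_filter.1 he
    exact D.mem_edgesWithin.2 ⟨hsrc, (D.src_mem_component_iff heC).1 hsrc⟩
  reachable x hx := by
    induction D.mem_component.1 hx with
    | refl => exact .refl
    | @tail y z hy hyz ih =>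
      have hyK := D.mem_component.2 hy
      obtain ⟨e, he, hends⟩ := hyz
      refine (ih hyK).tail ⟨e, mem_filter.2 ⟨he, ?_⟩, hends⟩
      rcases hends with ⟨hsrc, -⟩ | ⟨-, htgt⟩
      · exact hsrc ▸ hyK
      · exact (D.src_mem_component_iff he).2 (htgt ▸ hyK)

lemma exists_unit_flow_of_le_card_cut [Finite V] (F : Finset E) (u v : V) (k : ℕ)
    (h : ∀ S : Finset V, u ∈ S → v ∉ S → k ≤ #(F ∩ D.cut S)) :
    ∃ g : E → ℤ, (∀ e, |g e| ≤ if e ∈ F then 1 else 0) ∧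
      D.divergence g = Pi.single u (k : ℤ) - Pi.single v (k : ℤ) := by
  cases nonempty_fintype V
  let cap : E → ℤ := fun e => if e ∈ F then 1 else 0
  have hcap : 0 ≤ cap := fun e => by simp only [cap]; split_ifs <;> simp
  have hcapacity : ∀ S, D.cutCapacity (-cap) cap S = #(F ∩ D.cut S) := fun S => by
    have hcard : (#(F ∩ D.cut S) : ℤ) = ∑ e, if e ∈ F ∩ D.cut S then 1 else 0 := by
      rw [sum_boole, filter_univ_mem]
    rw [hcard, cutCapacity]
    refine sum_congr rfl fun e _ => ?_
    by_cases hs : D.src e ∈ S <;> by_cases ht : D.tgt e ∈ S <;> simp [cap, hs, ht]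
  obtain ⟨g, hlo, hhi, hg⟩ := D.exists_divergence_eq_of_le_cutCapacity
    (neg_le_self hcap) (b := Pi.single u (k : ℤ) - Pi.single v (k : ℤ)) (by simp) fun S => by
      rw [hcapacity]
      simp only [Pi.sub_apply, sum_sub_distrib, sum_pi_single']
      have := h S
      split_ifs <;> grind
  exact ⟨g, fun e => abs_le.2 ⟨hlo e, hhi e⟩, hg⟩

section Support

variable {A : Type*} [AddCommGroup A] [Fintype V] {g : E → A} {C : Finset E} {u v : V} {a : A}

lemma mem_component_of_divergence_eq (hC : Function.support g ⊆ C) (ha : a ≠ 0)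
    (hg : D.divergence g = Pi.single u a - Pi.single v a) : v ∈ D.component C u := by
  have hu : u ∈ D.component C u := D.mem_component.2 .refl
  by_contra hv
  have hsum : ∑ w ∈ D.component C u, D.divergence g w = 0 := by
    rw [sum_divergence_eq_sum_cut]
    refine sum_eq_zero fun e he => ?_
    have hge : g e = 0 :=
      not_not.1 fun h => D.mem_cut.1 he (D.src_mem_component_iff (hC h))
    simp [hge]
  simp [hg, hu, hv, ha] at hsum

lemma divergence_indicator_src_mem_component (hC : Function.support g ⊆ C) (ha : a ≠ 0)
    (hg : D.divergence g = Pi.single u a - Pi.single v a) :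
    D.divergence ({e | D.src e ∈ D.component C u}.indicator g) =
      Pi.single u a - Pi.single v a := by
  rw [D.divergence_indicator_src_mem fun e he => D.src_mem_component_iff (hC he),
    Set.indicator_eq_self.2, hg]
  intro w hw
  obtain rfl | hwu := eq_or_ne w u
  · exact D.mem_component.2 .refl
  obtain rfl | hwv := eq_or_ne w v
  · exact D.mem_component_of_divergence_eq hC ha hg
  · simp [hg, hwu, hwv] at hw

end Support

theorem exists_isConnectedSubgraph_of_le_card_cut [Finite V] {F : Finset E} {u v : V} {k : ℕ}
    (hk : k ≠ 0) (h : ∀ S : Finset V, u ∈ S → v ∉ S → k ≤ #(F ∩ D.cut S)) :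
    ∃ K C, D.IsConnectedSubgraph u K C ∧ v ∈ K ∧ C ⊆ F ∧
      D.degreeParity C = Pi.single u (k : ZMod 2) - Pi.single v (k : ZMod 2) := by
  cases nonempty_fintype V
  have hk' : (k : ℤ) ≠ 0 := Nat.cast_ne_zero.2 hk
  obtain ⟨g, hgF, hg⟩ := D.exists_unit_flow_of_le_card_cut F u v k h
  let C : Finset E := {e | g e ≠ 0}
  have hC : Function.support g ⊆ C := fun e he => by simpa [C] using he
  let K := D.component C u
  let g' := {e | D.src e ∈ K}.indicator g
  have hsupport : ({e ∈ C | D.src e ∈ K} : Finset E) = ({e | g' e ≠ 0} : Finset E) := by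
    ext e
    simp [C, g', and_comm]
  have hunit : ∀ e, |g' e| ≤ 1 := fun e => by
    by_cases he : D.src e ∈ K
    · simpa [g', he] using (hgF e).trans (by split_ifs <;> simp)
    · simp [g', he]
  refine ⟨K, ({e ∈ C | D.src e ∈ K} : Finset E), D.isConnectedSubgraph_component C u,
    D.mem_component_of_divergence_eq hC hk' hg, fun e he => ?_, funext fun w => ?_⟩
  · by_contra heF
    have hge : g e = 0 := by simpa [heF] using hgF e
    simp [C, hge] at he
  · rw [hsupport, D.degreeParity_support hunit, D.divergence_indicator_src_mem_component hC hk' hg]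
    simp [Pi.single_apply, apply_ite (Int.cast : ℤ → ZMod 2)]

end Connected

/-! ### Nowhere-zero solvability -/

section Solvable

variable {A : Type*} [AddCommGroup A]

lemma exists_forall_ne_zero_sum_eq {ι : Type*} (hA : 3 ≤ ENat.card A) {s : Finset ι} (hs : 1 < #s)
    (a : A) : ∃ x : ι → A, (∀ i, x i ≠ 0) ∧ ∑ i ∈ s, x i = a := by
  obtain ⟨i, hi, j, hj, hij⟩ := one_lt_card.1 hs
  obtain ⟨c, hc, -⟩ := ENat.exists_ne_ne_of_three_le hA 0 0
  let rest : A := ∑ _l ∈ (s.erase i).erase j, c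
  obtain ⟨y, hy, hya⟩ := ENat.exists_ne_ne_of_three_le hA 0 (a - rest)
  refine ⟨fun l => if l = i then y else if l = j then a - rest - y else c, fun l => ?_, ?_⟩
  · dsimp only
    split_ifs
    exacts [hy, sub_ne_zero.2 hya.symm, hc]
  · have hrest : ∑ l ∈ (s.erase i).erase j,
        (if l = i then y else if l = j then a - rest - y else c) = rest :=
      sum_congr rfl fun l hl => by
        simp only [mem_erase] at hl
        rw [if_neg hl.2.1, if_neg hl.1]
    rw [← add_sum_erase _ _ hi, ← add_sum_erase _ _ (mem_erase.2 ⟨hij.symm, hj⟩), hrest,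
      if_pos rfl, if_neg hij.symm, if_pos rfl]
    abel

lemma add_ne_zero_of_disjoint {g h : E → A} {F F' X Y : Finset E} (hF : Disjoint F F')
    (hgF : Function.support g ⊆ F) (hhF : Function.support h ⊆ F')
    (hg : ∀ e ∈ F, e ∉ X → g e ≠ 0) (hh : ∀ e ∈ F', e ∉ Y → h e ≠ 0) (e : E) (he : e ∈ F ∪ F')
    (heXY : e ∉ X ∪ Y) : (g + h) e ≠ 0 := by
  rw [mem_union, not_or] at heXY
  rcases mem_union.1 he with he | he
  · have hhe : h e = 0 := not_not.1 fun hhe => disjoint_left.1 hF he (hhF hhe)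
    simpa [hhe] using hg e he heXY.1
  · have hge : g e = 0 := not_not.1 fun hge => disjoint_left.1 hF (hgF hge) he
    simpa [hge] using hh e he heXY.2

variable [Fintype E]

/-- The edges with one endpoint in `S` and the other in `T`. -/
noncomputable def edgesBetween (S T : Finset V) : Finset E :=
  {e | D.src e ∈ S ∧ D.tgt e ∈ T ∨ D.src e ∈ T ∧ D.tgt e ∈ S}

@[simp]
lemma mem_edgesBetween {S T : Finset V} {e : E} :
    e ∈ D.edgesBetween S T ↔
      D.src e ∈ S ∧ D.tgt e ∈ T ∨ D.src e ∈ T ∧ D.tgt e ∈ S := by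
  simp [edgesBetween]

lemma edgesWithin_union (H K : Finset V) :
    D.edgesWithin (H ∪ K) = D.edgesBetween H K ∪ (D.edgesWithin H ∪ D.edgesWithin K) := by
  ext e
  simp only [mem_edgesWithin, mem_edgesBetween, mem_union]
  tauto

lemma disjoint_edgesWithin {H K : Finset V} (h : Disjoint H K) :
    Disjoint (D.edgesWithin H) (D.edgesWithin K) :=
  disjoint_left.2 fun _ heH heK =>
    disjoint_left.1 h (D.mem_edgesWithin.1 heH).1 (D.mem_edgesWithin.1 heK).1

lemma disjoint_edgesBetween_edgesWithin_union {H K : Finset V} (h : Disjoint H K) :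
    Disjoint (D.edgesBetween H K) (D.edgesWithin H ∪ D.edgesWithin K) := by
  refine disjoint_left.2 fun e he => ?_
  have hsrc : D.src e ∈ H → D.src e ∉ K := fun hs => disjoint_left.1 h hs
  have htgt : D.tgt e ∈ H → D.tgt e ∉ K := fun ht => disjoint_left.1 h ht
  simp only [mem_edgesWithin, mem_edgesBetween, mem_union] at he ⊢
  tauto

lemma support_divergence_subset {g : E → A} {S : Finset V}
    (hg : Function.support g ⊆ D.edgesWithin S) : Function.support (D.divergence g) ⊆ S := by
  intro v hv
  rw [Function.mem_support, divergence_apply] at hv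
  obtain ⟨e, -, he⟩ := exists_ne_zero_of_sum_ne_zero hv
  have hge : g e ≠ 0 := by
    rintro hge
    simp [hge] at he
  have hends := D.mem_edgesWithin.1 (hg hge)
  have : D.src e = v ∨ D.tgt e = v := by
    by_contra! h
    simp [h] at he
  rcases this with rfl | rfl
  exacts [hends.1, hends.2]

lemma exists_divergence_eq_single_sub_single {C : Finset E} {x y : V}
    (h : Relation.ReflTransGen (D.Linked C) x y) (a : A) :
    ∃ g : E → A, D.divergence g = Pi.single x a - Pi.single y a ∧ Function.support g ⊆ C := by
  induction h with
  | refl => exact ⟨0, by simp, by simp⟩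
  | tail _ hlink ih =>
    obtain ⟨g, hg, hgC⟩ := ih
    obtain ⟨e, he, hends⟩ := hlink
    have hsingle : Function.support (Pi.single e a : E → A) ⊆ C :=
      Pi.support_single_subset.trans (by simpa using he)
    obtain ⟨rfl, rfl⟩ | ⟨rfl, rfl⟩ := hends
    · refine ⟨g + Pi.single e a, ?_,
        (Function.support_add _ _).trans (Set.union_subset hgC hsingle)⟩
      rw [map_add, hg, divergence_single, sub_add_sub_cancel]
    · refine ⟨g - Pi.single e a, ?_,
        (Function.support_sub _ _).trans (Set.union_subset hgC hsingle)⟩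
      rw [map_sub, hg, divergence_single, sub_sub_sub_cancel_right]

variable {D}

lemma IsConnectedSubgraph.exists_divergence_eq [Fintype V] {r : V} {K : Finset V} {C : Finset E}
    (hK : D.IsConnectedSubgraph r K C) {b : V → A} (hbK : Function.support b ⊆ K)
    (hb : ∑ v, b v = 0) :
    ∃ g : E → A, D.divergence g = b ∧ Function.support g ⊆ C := by
  have hpath : ∀ v, ∃ g : E → A,
      D.divergence g = Pi.single r (b v) - Pi.single v (b v) ∧ Function.support g ⊆ C := fun v => by
    by_cases hv : b v = 0
    · exact ⟨0, by simp [hv], by simp⟩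
    · exact D.exists_divergence_eq_single_sub_single (hK.reachable v (hbK hv)) (b v)
  choose g hg hgC using hpath
  refine ⟨-∑ v, g v, ?_, fun e he => ?_⟩
  · have hroot : ∑ v, (Pi.single r (b v) : V → A) = 0 := by
      simpa [hb] using (map_sum (AddMonoidHom.single (fun _ => A) r) b univ).symm
    rw [map_neg, map_sum]
    simp only [hg, sum_sub_distrib, hroot, zero_sub, neg_neg]
    exact univ_sum_single b
  · by_contra heC
    have hzero : ∀ v, g v e = 0 := fun v => not_not.1 fun h => heC (hgC v h)
    simp [hzero] at he

/-- Every zero-sum demand on `H` is met by an `A`-valued labelling of the edges within `H` that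
vanishes on none of those edges outside `X`. -/
def IsNowhereZeroSolvable (D : Multidigraph V E) [Fintype V] (A : Type*) [AddCommGroup A]
    (H : Finset V) (X : Finset E) : Prop :=
  ∀ b : V → A, Function.support b ⊆ H → ∑ v, b v = 0 →
    ∃ g : E → A, D.divergence g = b ∧ Function.support g ⊆ D.edgesWithin H ∧
      ∀ e ∈ D.edgesWithin H, e ∉ X → g e ≠ 0

theorem IsConnectedSubgraph.isNowhereZeroSolvable [Fintype V] [Nontrivial A] {r : V}
    {K : Finset V} {C : Finset E} (hK : D.IsConnectedSubgraph r K C) :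
    D.IsNowhereZeroSolvable A K C := by
  intro b hbK hb
  obtain ⟨a, ha⟩ := exists_ne (0 : A)
  let g₀ : E → A := fun e => if e ∈ D.edgesWithin K \ C then a else 0
  have hg₀ : Function.support g₀ ⊆ D.edgesWithin K := fun e he =>
    (mem_sdiff.1 (ite_ne_right_iff.1 he).1).1
  obtain ⟨g, hg, hgC⟩ := hK.exists_divergence_eq (b := b - D.divergence g₀)
    ((Function.support_sub _ _).trans (Set.union_subset hbK (D.support_divergence_subset hg₀)))
    (by simp [hb, sum_univ_divergence])
  refine ⟨g₀ + g, by simp [hg], ?_, fun e he heC => ?_⟩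
  · exact (Function.support_add _ _).trans
      (Set.union_subset hg₀ (hgC.trans (coe_subset.2 hK.subset_edgesWithin)))
  · have hge : g e = 0 := not_not.1 fun h => heC (hgC h)
    have hg₀e : g₀ e = a := if_pos (mem_sdiff.2 ⟨he, heC⟩)
    simpa [hge, hg₀e] using ha

variable (D) in
lemma exists_support_eq_edgesBetween (hA : 3 ≤ ENat.card A) {H K : Finset V} (hHK : Disjoint H K)
    (hcard : 1 < #(D.edgesBetween H K)) (a : A) :
    ∃ g : E → A, Function.support g = D.edgesBetween H K ∧ ∑ v ∈ K, D.divergence g v = a := by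
  obtain ⟨x, hx, hxa⟩ := exists_forall_ne_zero_sum_eq hA hcard a
  refine ⟨fun e => if e ∈ D.edgesBetween H K then if D.src e ∈ K then x e else -x e else 0, ?_, ?_⟩
  · ext e
    by_cases he : e ∈ D.edgesBetween H K <;> by_cases hs : D.src e ∈ K <;>
      simp [-mem_edgesBetween, he, hs, hx]
  · rw [sum_divergence_eq_sum_cut, ← hxa]
    have hsub : D.edgesBetween H K ⊆ D.cut K := fun e he => by
      have := disjoint_left.1 hHK
      simp only [mem_edgesBetween, mem_cut] at he ⊢
      grind
    rw [← sum_subset hsub fun e _ he => by simp [he]]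
    refine sum_congr rfl fun e he => ?_
    by_cases hs : D.src e ∈ K <;> simp [he, hs]

theorem IsNowhereZeroSolvable.union [Fintype V] (hA : 3 ≤ ENat.card A) {H K : Finset V}
    {X Y : Finset E} (hH : D.IsNowhereZeroSolvable A H X) (hK : D.IsNowhereZeroSolvable A K Y)
    (hHK : Disjoint H K) (hcard : 1 < #(D.edgesBetween H K)) :
    D.IsNowhereZeroSolvable A (H ∪ K) (X ∪ Y) := by
  intro b hbHK hb
  obtain ⟨g, hgsupp, hgb⟩ := D.exists_support_eq_edgesBetween hA hHK hcard (∑ v ∈ K, b v)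
  have hbetween : D.edgesBetween H K ⊆ D.edgesWithin (H ∪ K) :=
    D.edgesWithin_union H K ▸ subset_union_left
  let r : V → A := b - D.divergence g
  have hrHK : Function.support r ⊆ ↑(H ∪ K) :=
    (Function.support_sub _ _).trans (Set.union_subset hbHK
      (D.support_divergence_subset (hgsupp.trans_subset (coe_subset.2 hbetween))))
  have hrK : ∑ v ∈ K, r v = 0 := by simp [r, hgb]
  have hrH : ∑ v ∈ H, r v = 0 := by
    have hr : ∑ v ∈ H ∪ K, r v = 0 := by
      rw [sum_subset (subset_univ _) fun v _ hv => not_not.1 fun h => hv (hrHK h)]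
      simp [r, hb, sum_univ_divergence]
    rwa [sum_union hHK, hrK, add_zero] at hr
  obtain ⟨gH, hgH, hgHsupp, hgHne⟩ := hH ((H : Set V).indicator r) Set.support_indicator_subset
    (by simpa [Set.indicator_apply] using hrH)
  obtain ⟨gK, hgK, hgKsupp, hgKne⟩ := hK ((K : Set V).indicator r) Set.support_indicator_subset
    (by simpa [Set.indicator_apply] using hrK)
  have hsplit : (H : Set V).indicator r + (K : Set V).indicator r = r := by
    rw [Pi.add_def, ← Set.indicator_union_of_disjoint (disjoint_coe.2 hHK), ← coe_union,
      Set.indicator_eq_self.2 hrHK]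
  have hsupp : Function.support (gH + gK) ⊆ ↑(D.edgesWithin H ∪ D.edgesWithin K) := by
    rw [coe_union]
    exact (Function.support_add _ _).trans (Set.union_subset_union hgHsupp hgKsupp)
  have hsumne : ∀ e ∈ D.edgesWithin H ∪ D.edgesWithin K, e ∉ X ∪ Y → (gH + gK) e ≠ 0 :=
    fun e => add_ne_zero_of_disjoint (D.disjoint_edgesWithin hHK) hgHsupp hgKsupp hgHne hgKne e
  refine ⟨g + (gH + gK), ?_, ?_, fun e he heXY => ?_⟩
  · rw [map_add, map_add, hgH, hgK, hsplit, add_sub_cancel]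
  · rw [edgesWithin_union, coe_union]
    exact (Function.support_add _ _).trans (Set.union_subset_union hgsupp.subset hsupp)
  · rw [edgesWithin_union] at he
    exact add_ne_zero_of_disjoint (D.disjoint_edgesBetween_edgesWithin_union hHK) hgsupp.subset
      hsupp (X := ∅) (fun e he _ => hgsupp.superset he) hsumne e he (by simpa using heXY)

end Solvable

/-! ### Attaching even subgraphs -/

section Attach

variable [Fintype E]

variable {D} in
lemma IsConnectedSubgraph.vertices_subset {r : V} {B K : Finset V} {C : Finset E}
    (hK : D.IsConnectedSubgraph r K C) (hr : r ∈ B) (hC : C ⊆ D.edgesWithin B) : K ⊆ B := by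
  intro x hx
  cases hK.reachable x hx with
  | refl => exact hr
  | tail _ hlink =>
    obtain ⟨e, he, ⟨-, rfl⟩ | ⟨rfl, -⟩⟩ := hlink
    exacts [(D.mem_edgesWithin.1 (hC he)).2, (D.mem_edgesWithin.1 (hC he)).1]

variable [Fintype V] {H : Finset V}

lemma card_edgesBetween_inter_add_sdiff_le (B S : Finset V) :
    #(D.edgesBetween (B ∩ S) (B ∩ S ∪ H)ᶜ) + #(D.edgesBetween (B \ S) (B \ S ∪ H)ᶜ) ≤
      #(D.edgesBetween B (B ∪ H)ᶜ) + 2 * #(D.edgesWithin B ∩ D.cut S) := by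
  have hunion : D.edgesBetween (B ∩ S) (B ∩ S ∪ H)ᶜ ∪ D.edgesBetween (B \ S) (B \ S ∪ H)ᶜ ⊆
      D.edgesBetween B (B ∪ H)ᶜ ∪ D.edgesWithin B ∩ D.cut S := fun e he => by
    simp only [mem_edgesBetween, mem_edgesWithin, mem_union, mem_inter, mem_sdiff, mem_compl,
      mem_cut] at he ⊢
    tauto
  have hinter : D.edgesBetween (B ∩ S) (B ∩ S ∪ H)ᶜ ∩ D.edgesBetween (B \ S) (B \ S ∪ H)ᶜ ⊆
      D.edgesWithin B ∩ D.cut S := fun e he => by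
    simp only [mem_edgesBetween, mem_edgesWithin, mem_union, mem_inter, mem_sdiff, mem_compl,
      mem_cut] at he ⊢
    tauto
  have := card_union_add_card_inter (D.edgesBetween (B ∩ S) (B ∩ S ∪ H)ᶜ)
    (D.edgesBetween (B \ S) (B \ S ∪ H)ᶜ)
  have := (card_le_card hunion).trans (card_union_le _ _)
  have := card_le_card hinter
  omega

/-- Take for `B` a minimal nonempty subset of `Hᶜ` joined to `Hᶜ \ B` by at most one edge. -/
lemma exists_block (hH : H ≠ univ) :
    ∃ B, B.Nonempty ∧ Disjoint H B ∧ #(D.edgesBetween B (B ∪ H)ᶜ) ≤ 1 ∧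
      ∀ S, (B ∩ S).Nonempty → (B \ S).Nonempty → 2 ≤ #(D.edgesWithin B ∩ D.cut S) := by
  let P : Finset V → Prop := fun B =>
    B.Nonempty ∧ Disjoint H B ∧ #(D.edgesBetween B (B ∪ H)ᶜ) ≤ 1
  have hcompl : P Hᶜ := by
    refine ⟨nonempty_iff_ne_empty.2 (compl_eq_empty_iff H |>.not.2 hH), disjoint_compl_right, ?_⟩
    simp [edgesBetween, compl_union]
  obtain ⟨B, -, ⟨hBne, hHB, hBcard⟩, hBmin⟩ := exists_minimal_le_of_wellFoundedLT P _ hcompl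
  have hsmall : ∀ B' ⊂ B, B'.Nonempty → 2 ≤ #(D.edgesBetween B' (B' ∪ H)ᶜ) := by
    intro B' hB' hne
    by_contra! hlt
    exact hB'.2 (hBmin ⟨hne, hHB.mono_right hB'.1, Nat.le_of_lt_succ hlt⟩ hB'.1)
  refine ⟨B, hBne, hHB, hBcard, fun S hinter hsdiff => ?_⟩
  have hinterB : B ∩ S ⊂ B := inter_subset_left.ssubset_of_ne fun h => by
    simp [sdiff_eq_empty_iff_subset.2 (inter_eq_left.1 h)] at hsdiff
  have hsdiffB : B \ S ⊂ B := sdiff_subset.ssubset_of_ne fun h => by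
    simp [disjoint_iff_inter_eq_empty.1 (sdiff_eq_left.1 h)] at hinter
  have := D.card_edgesBetween_inter_add_sdiff_le (H := H) B S
  have := hsmall _ hinterB hinter
  have := hsmall _ hsdiffB hsdiff
  omega

lemma one_lt_card_edgesBetween {B : Finset V} (hB : 3 ≤ #(D.cut B))
    (hout : #(D.edgesBetween B (B ∪ H)ᶜ) ≤ 1) : 1 < #(D.edgesBetween H B) := by
  have hsub : D.cut B ⊆ D.edgesBetween B (B ∪ H)ᶜ ∪ D.edgesBetween H B := fun e he => by
    simp only [mem_edgesBetween, mem_union, mem_compl, mem_cut] at he ⊢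
    tauto
  have := (card_le_card hsub).trans (card_union_le _ _)
  omega

theorem exists_isConnectedSubgraph_degreeParity_eq_zero (hH : H ≠ univ)
    (h : ∀ S : Finset V, S.Nonempty → Disjoint H S → 3 ≤ #(D.cut S)) :
    ∃ r K C, Disjoint H K ∧ D.IsConnectedSubgraph r K C ∧ D.degreeParity C = 0 ∧
      1 < #(D.edgesBetween H K) := by
  obtain ⟨B, hBne, hHB, hout, hBcut⟩ := D.exists_block hH
  have hcard := D.one_lt_card_edgesBetween (h B hBne hHB) hout
  obtain ⟨e, he, e', he', hne⟩ := one_lt_card.1 hcard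
  have hend : ∀ e ∈ D.edgesBetween H B, ∃ p ∈ B, ∀ K, p ∈ K → e ∈ D.edgesBetween H K := by
    intro e he
    simp only [mem_edgesBetween] at he ⊢
    rcases he with ⟨hs, ht⟩ | ⟨hs, ht⟩
    · exact ⟨D.tgt e, ht, fun K hK => .inl ⟨hs, hK⟩⟩
    · exact ⟨D.src e, hs, fun K hK => .inr ⟨hK, ht⟩⟩
  obtain ⟨p, hp, hpe⟩ := hend e he
  obtain ⟨q, hq, hqe⟩ := hend e' he'
  obtain ⟨K, C, hK, hqK, hC, hparity⟩ :=
    D.exists_isConnectedSubgraph_of_le_card_cut (u := p) (v := q) two_ne_zero fun S hpS hqS =>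
      hBcut S ⟨p, mem_inter.2 ⟨hp, hpS⟩⟩ ⟨q, mem_sdiff.2 ⟨hq, hqS⟩⟩
  refine ⟨p, K, C, hHB.mono_right (hK.vertices_subset hp hC), hK, ?_,
    one_lt_card.2 ⟨e, hpe K hK.root_mem, e', hqe K hqK, hne⟩⟩
  simp [hparity, CharTwo.two_eq_zero]

end Attach

/-! ### Flows with values in `ZMod 2 × A` -/

section Flow

variable [Fintype E] {A : Type*} [AddCommGroup A]

theorem exists_isNowhereZeroSolvable_univ [Fintype V] (hA : 3 ≤ ENat.card A) {u v : V}
    (huv : ∀ S : Finset V, u ∈ S → v ∉ S → 2 ≤ #(D.cut S))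
    (h : ∀ S : Finset V, S.Nonempty → u ∉ S → v ∉ S → 3 ≤ #(D.cut S)) (d : ZMod 2) :
    ∃ X, D.degreeParity X = Pi.single u d - Pi.single v d ∧
      D.IsNowhereZeroSolvable A univ X := by
  have : Nontrivial A := (ENat.one_lt_card_iff_nontrivial A).1 (lt_of_lt_of_le (by norm_num) hA)
  let P : Finset V → Prop := fun H => u ∈ H ∧ v ∈ H ∧ ∃ X ⊆ D.edgesWithin H,
    D.degreeParity X = Pi.single u d - Pi.single v d ∧ D.IsNowhereZeroSolvable A H X
  have hP : ∃ H, P H := by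
    obtain ⟨k, hk, hk2, rfl⟩ : ∃ k : ℕ, k ≠ 0 ∧ k ≤ 2 ∧ (k : ZMod 2) = d := by
      fin_cases d
      exacts [⟨2, two_ne_zero, le_rfl, rfl⟩, ⟨1, one_ne_zero, one_le_two, rfl⟩]
    obtain ⟨K, C, hK, hvK, -, hparity⟩ :=
      D.exists_isConnectedSubgraph_of_le_card_cut (F := univ) hk fun S huS hvS => by
        simpa using hk2.trans (huv S huS hvS)
    exact ⟨K, hK.root_mem, hvK, C, hK.subset_edgesWithin, hparity, hK.isNowhereZeroSolvable⟩
  obtain ⟨H₀, hH₀⟩ := hP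
  obtain ⟨H, -, ⟨hu, hv, X, hXH, hX, hsolv⟩, hmax⟩ := exists_maximal_ge_of_wellFoundedGT P _ hH₀
  suffices hH : H = univ from ⟨X, hX, hH ▸ hsolv⟩
  by_contra hH
  obtain ⟨r, K, C, hHK, hK, hC, hcard⟩ :=
    D.exists_isConnectedSubgraph_degreeParity_eq_zero hH fun S hS hHS =>
      h S hS (disjoint_left.1 hHS hu) (disjoint_left.1 hHS hv)
  have hPunion : P (H ∪ K) := by
    refine ⟨mem_union_left _ hu, mem_union_left _ hv, X ∪ C, ?_, ?_,
      hsolv.union hA hK.isNowhereZeroSolvable hHK hcard⟩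
    · rw [edgesWithin_union]
      exact (union_subset_union hXH hK.subset_edgesWithin).trans subset_union_right
    · rw [D.degreeParity_union
        ((D.disjoint_edgesWithin hHK).mono hXH hK.subset_edgesWithin), hX, hC, add_zero]
  exact disjoint_left.1 hHK (hmax hPunion subset_union_left (mem_union_right _ hK.root_mem))
    hK.root_mem

theorem exists_forall_ne_zero_divergence_eq [Finite V] (hA : 3 ≤ ENat.card A) {u v : V}
    (huv : ∀ S : Finset V, u ∈ S → v ∉ S → 2 ≤ #(D.cut S))
    (h : ∀ S : Finset V, S.Nonempty → u ∉ S → v ∉ S → 3 ≤ #(D.cut S)) (c : ZMod 2 × A) :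
    ∃ ψ : E → ZMod 2 × A, D.divergence ψ = Pi.single u c - Pi.single v c ∧ ∀ e, ψ e ≠ 0 := by
  cases nonempty_fintype V
  obtain ⟨X, hX, hsolv⟩ := D.exists_isNowhereZeroSolvable_univ hA huv h c.1
  obtain ⟨g, hg, -, hgX⟩ := hsolv (Pi.single u c.2 - Pi.single v c.2) (by simp) (by simp)
  refine ⟨fun e => ((X : Set E).indicator 1 e, g e), funext fun w => Prod.ext ?_ ?_,
    fun e he => ?_⟩
  · rw [← AddMonoidHom.coe_fst, ← divergence_hom_comp]
    refine (congrFun hX w).trans ?_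
    simp [Pi.single_apply, apply_ite Prod.fst]
  · rw [← AddMonoidHom.coe_snd, ← divergence_hom_comp]
    refine (congrFun hg w).trans ?_
    simp [Pi.single_apply, apply_ite Prod.snd]
  · obtain ⟨hfst, hsnd⟩ := Prod.ext_iff.1 he
    have heX : e ∉ X := fun heX => by simp [heX] at hfst
    exact hgX e (by simp) heX hsnd

end Flow

/-! ### Prescribing the value of a flow on an edge -/

section Prescribe

variable {A : Type*} [AddCommGroup A]

/-- The graph obtained by deleting the edge `f`. -/
def deleteEdge (f : E) : Multidigraph V {e // e ≠ f} where
  src e := D.src e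
  tgt e := D.tgt e

variable [Fintype E]

/-- A labelling that obeys Kirchhoff's law and vanishes on no edge. -/
structure IsNowhereZeroFlow (ψ : E → A) : Prop where
  divergence_eq_zero : D.divergence ψ = 0
  ne_zero : ∀ e, ψ e ≠ 0

lemma divergence_eq_add_divergence_deleteEdge (f : E) (g : E → A) :
    D.divergence g = Pi.single (D.src f) (g f) - Pi.single (D.tgt f) (g f) +
      (D.deleteEdge f).divergence fun e => g e :=
  Fintype.sum_eq_add_sum_subtype_ne _ f

lemma map_cut_deleteEdge (f : E) (S : Finset V) :
    ((D.deleteEdge f).cut S).map (.subtype _) = (D.cut S).erase f := by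
  ext e
  simp [deleteEdge, and_comm]

theorem exists_isNowhereZeroFlow_of_three_le_card_cut [Finite V] (hA : 3 ≤ ENat.card A)
    (h : ∀ S : Finset V, S.Nonempty → (∃ v, v ∉ S) → 3 ≤ #(D.cut S)) (f : E) {a : ZMod 2 × A}
    (ha : a ≠ 0) : ∃ ψ, D.IsNowhereZeroFlow ψ ∧ ψ f = a := by
  have hcard : ∀ S, #((D.deleteEdge f).cut S) = #((D.cut S).erase f) := fun S => by
    rw [← map_cut_deleteEdge, card_map]
  obtain ⟨ψ, hψ, hψne⟩ := (D.deleteEdge f).exists_forall_ne_zero_divergence_eq hA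
    (u := D.tgt f) (v := D.src f) (c := a)
    (fun S ht hs => by
      rw [hcard, card_erase_of_mem (D.mem_cut.2 (by tauto))]
      exact Nat.sub_le_sub_right (h S ⟨_, ht⟩ ⟨_, hs⟩) 1)
    (fun S hS ht hs => by
      rw [hcard, erase_eq_of_notMem (by simp [ht, hs])]
      exact h S hS ⟨_, hs⟩)
  let ψ' : E → ZMod 2 × A := fun e => if he : e = f then a else ψ ⟨e, he⟩
  have hf : ψ' f = a := dif_pos rfl
  have hne : (fun e : {e // e ≠ f} => ψ' e) = ψ := funext fun e => dif_neg e.2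
  refine ⟨ψ', ⟨?_, fun e => ?_⟩, hf⟩
  · rw [D.divergence_eq_add_divergence_deleteEdge f, hne, hf, hψ, sub_add_sub_cancel', sub_self]
  · obtain rfl | he := eq_or_ne e f
    · rwa [hf]
    · exact (dif_neg he).trans_ne (hψne _)

end Prescribe

/-! ### Reducing cuts with at most two edges -/

section Reduce

variable {A W : Type*} [AddCommGroup A]

/-- The image of the graph under a map of vertices, which identifies the vertices of each fibre. -/
def map (p : V → W) : Multidigraph W E where
  src := p ∘ D.src
  tgt := p ∘ D.tgt

/-- The quotient map of the identification of `y` with `x`. -/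
noncomputable def identify {x y : V} (hxy : x ≠ y) (v : V) : {v // v ≠ y} :=
  if hv : v = y then ⟨x, hxy⟩ else ⟨v, hv⟩

lemma exists_eq_pair_of_card_eq_two {s : Finset E} (hs : #s = 2) (f : E) :
    ∃ e e', e ≠ e' ∧ e ≠ f ∧ s = {e, e'} := by
  obtain ⟨e, e', hne, rfl⟩ := card_eq_two.1 hs
  obtain rfl | hef := eq_or_ne e f
  · exact ⟨e', e, hne.symm, hne.symm, pair_comm _ _⟩
  · exact ⟨e, e', hne, hef, rfl⟩

variable [Fintype E]

/-- No single edge forms a cut. -/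
def IsBridgeless : Prop :=
  ∀ S, #(D.cut S) ≠ 1

variable {D}

lemma IsBridgeless.map [Finite V] (hD : D.IsBridgeless) (p : V → W) : (D.map p).IsBridgeless := by
  cases nonempty_fintype V
  intro S
  convert hD {v | p v ∈ S} using 2
  ext e
  simp [Multidigraph.map]

lemma divergence_map_apply [Fintype V] (p : V → W) (g : E → A) (w : W) :
    (D.map p).divergence g w = ∑ v with p v = w, D.divergence g v := by
  rw [sum_divergence, divergence_apply]
  exact sum_congr rfl fun e _ => congrArg₂ _ (if_congr (by simp [map]) rfl rfl)
    (if_congr (by simp [map]) rfl rfl)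

lemma exists_divergence_eq_of_divergence_map_identify_eq_zero [Finite V] {x y : V} (hxy : x ≠ y)
    {g : E → A} (hg : (D.map (identify hxy)).divergence g = 0) :
    ∃ c, D.divergence g = Pi.single x c - Pi.single y c := by
  cases nonempty_fintype V
  have hother : ∀ v, v ≠ x → v ≠ y → D.divergence g v = 0 := fun v hx hy => by
    have hfibre : ∀ w, identify hxy w = identify hxy v → w = v := fun w hw => by
      grind [identify]
    have hsum := congrFun hg (identify hxy v)
    rw [divergence_map_apply] at hsum
    refine (sum_eq_single v (fun w hw hne => ?_) (by simp)).symm.trans hsum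
    exact absurd (hfibre w (by simpa using hw)) hne
  have hpair : D.divergence g x + D.divergence g y = 0 := by
    rw [← sum_pair hxy, ← D.sum_univ_divergence g]
    exact sum_subset (subset_univ _) fun v _ hv => hother v (by aesop) (by aesop)
  refine ⟨D.divergence g x, funext fun v => ?_⟩
  obtain rfl | hx := eq_or_ne v x
  · simp [hxy]
  obtain rfl | hy := eq_or_ne v y
  · simp [hx, eq_neg_of_add_eq_zero_right hpair]
  · simp [hx, hy, hother v hx hy]

lemma eq_or_eq_neg_of_cut_eq_pair {S : Finset V} {e e' : E} (hne : e ≠ e')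
    (hcut : D.cut S = {e, e'}) {g : E → A} (hg : D.divergence g = 0) :
    g e = g e' ∨ g e = -g e' := by
  have hsum := D.sum_divergence_eq_sum_cut g S
  simp only [hg, hcut, sum_pair hne, Pi.zero_apply, sum_const_zero] at hsum
  have := neg_eq_of_add_eq_zero_left hsum.symm
  split_ifs at this <;> simp_all

lemma isNowhereZeroFlow_sub_single_of_cut_eq_pair {S : Finset V} {e e' : E} (hne : e ≠ e')
    (hcut : D.cut S = {e, e'}) {ψ : E → A} {c : A} (hψ : ∀ e, ψ e ≠ 0)
    (hdiv : D.divergence ψ = Pi.single (D.src e) c - Pi.single (D.tgt e) c) :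
    D.IsNowhereZeroFlow (ψ - Pi.single e c) := by
  have hflow : D.divergence (ψ - Pi.single e c) = 0 := by
    rw [map_sub, hdiv, divergence_single, sub_self]
  refine ⟨hflow, fun i => ?_⟩
  obtain rfl | hi := eq_or_ne i e
  · have he' : (ψ - Pi.single i c : E → A) e' ≠ 0 := by simpa [hne.symm] using hψ e'
    rcases eq_or_eq_neg_of_cut_eq_pair hne hcut hflow with h | h
    · rwa [h]
    · rwa [h, neg_ne_zero]
  · simpa [hi] using hψ i

theorem IsBridgeless.exists_isNowhereZeroFlow [Finite V] (hD : D.IsBridgeless)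
    (hA : 3 ≤ ENat.card A) (f : E) {a : ZMod 2 × A} (ha : a ≠ 0) :
    ∃ ψ, D.IsNowhereZeroFlow ψ ∧ ψ f = a := by
  induction hn : Nat.card V using Nat.strong_induction_on generalizing V with
  | _ n ih =>
  by_cases h : ∀ S : Finset V, S.Nonempty → (∃ v, v ∉ S) → 3 ≤ #(D.cut S)
  · exact D.exists_isNowhereZeroFlow_of_three_le_card_cut hA h f ha
  push Not at h
  obtain ⟨S, ⟨x, hx⟩, ⟨y, hy⟩, hlt⟩ := h
  have hidentify : ∀ x y : V, x ≠ y → ∃ ψ : E → ZMod 2 × A, ∃ c,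
      D.divergence ψ = Pi.single x c - Pi.single y c ∧ ψ f = a ∧ ∀ e, ψ e ≠ 0 := by
    intro x y hxy
    obtain ⟨ψ, hψ, hψf⟩ :=
      ih _ (hn ▸ Finite.card_subtype_lt (x := y) (by simp)) (hD.map (identify hxy)) rfl
    obtain ⟨c, hc⟩ := exists_divergence_eq_of_divergence_map_identify_eq_zero hxy
      hψ.divergence_eq_zero
    exact ⟨ψ, c, hc, hψf, hψ.ne_zero⟩
  have hcard : #(D.cut S) = 0 ∨ #(D.cut S) = 2 := by
    have := hD S
    omega
  rcases hcard with hcard | hcard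
  · obtain ⟨ψ, c, hψ, hψf, hψne⟩ := hidentify x y (ne_of_mem_of_not_mem hx hy)
    have hc : c = 0 := by
      have := D.sum_divergence_eq_sum_cut ψ S
      simpa [card_eq_zero.1 hcard, hψ, hx, hy] using this
    exact ⟨ψ, ⟨by simp [hψ, hc], hψne⟩, hψf⟩
  · obtain ⟨e, e', hne, hef, hcut⟩ := exists_eq_pair_of_card_eq_two hcard f
    have hends : D.src e ≠ D.tgt e := fun h =>
      D.mem_cut.1 (hcut ▸ mem_insert_self e {e'}) (h ▸ Iff.rfl)
    obtain ⟨ψ, c, hψ, hψf, hψne⟩ := hidentify _ _ hends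
    exact ⟨_, isNowhereZeroFlow_sub_single_of_cut_eq_pair hne hcut hψne hψ, by simp [hef.symm, hψf]⟩

end Reduce

/-! ### Tutte's theorem: integer flows from modular flows -/

section Tutte

variable {D} [Fintype E]

lemma IsNowhereZeroFlow.hom_comp {A B : Type*} [AddCommGroup A] [AddCommGroup B] {ψ : E → A}
    (hψ : D.IsNowhereZeroFlow ψ) {h : A →+ B} (hh : Function.Injective h) :
    D.IsNowhereZeroFlow fun e => h (ψ e) where
  divergence_eq_zero := funext fun v => by
    simp [divergence_hom_comp, hψ.divergence_eq_zero]
  ne_zero e := (map_ne_zero_iff h hh).2 (hψ.ne_zero e)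

lemma neg_sum_divergence_lt {x : E → ℤ} {n : ℤ} (hx : ∀ e, x e ∈ Set.Ioo 0 n) (f : E)
    (S : Finset V) :
    -∑ v ∈ S, D.divergence x v < n * D.cutCapacity (fun e => if e = f then 0 else -1) 0 S + n := by
  suffices h : -∑ v ∈ S, D.divergence x v ≤
      n * D.cutCapacity (fun e => if e = f then 0 else -1) 0 S + x f by
    linarith [(hx f).2]
  have hf : x f = ∑ e, if e = f then x e else 0 := by simp
  rw [hf, ← cutCapacity_self, cutCapacity, cutCapacity, mul_sum, ← sum_add_distrib,
    ← sum_neg_distrib]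
  refine sum_le_sum fun e _ => ?_
  obtain ⟨hpos, hlt⟩ := hx e
  by_cases hs : D.src e ∈ S <;> by_cases ht : D.tgt e ∈ S <;> by_cases he : e = f <;>
    simp only [hs, ht, he, Pi.zero_apply] <;> grind

/-- Some values of `x` are lowered by `n`. Hoffman's condition survives keeping the value at `f`,
since this changes the sums over cuts by less than `n`. -/
theorem exists_isNowhereZeroFlow_of_dvd_divergence [Finite V] {x : E → ℤ} {n : ℤ}
    (hx : ∀ e, x e ∈ Set.Ioo 0 n) (hdvd : ∀ v, n ∣ D.divergence x v) (f : E) :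
    ∃ φ : E → ℤ, D.IsNowhereZeroFlow φ ∧ (∀ e, |φ e| < n) ∧ φ f = x f := by
  cases nonempty_fintype V
  have hn : 0 < n := (hx f).1.trans (hx f).2
  choose b hb using hdvd
  have hsum : ∑ v, -b v = 0 := by
    have := D.sum_univ_divergence x
    simp only [hb, ← mul_sum, mul_eq_zero, hn.ne', false_or] at this
    simp [this]
  obtain ⟨y, hlo, hhi, hy⟩ := D.exists_divergence_eq_of_le_cutCapacity
    (lo := fun e => if e = f then 0 else -1) (hi := 0)
    (fun e => by dsimp only; split_ifs <;> simp) hsum fun S => by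
      have := neg_sum_divergence_lt (D := D) hx f S
      simp only [hb, ← mul_sum, sum_neg_distrib] at this ⊢
      refine Int.le_of_lt_add_one (lt_of_mul_lt_mul_left ?_ hn.le)
      linarith
  have hyf : y f = 0 := le_antisymm (hhi f) (by simpa using hlo f)
  have hy01 : ∀ e, y e = 0 ∨ y e = -1 := fun e => by
    have hle : y e ≤ 0 := hhi e
    have hge : (if e = f then 0 else -1) ≤ y e := hlo e
    split_ifs at hge <;> omega
  refine ⟨x + n • y, ⟨funext fun v => ?_, fun e => ?_⟩, fun e => ?_, by simp [hyf]⟩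
  · rw [map_add, map_zsmul, hy]
    simp [hb]
  all_goals
    obtain ⟨hpos, hlt⟩ := hx e
    rw [Pi.add_apply, Pi.smul_apply, smul_eq_mul]
  · rcases hy01 e with h | h <;> rw [h] <;> omega
  · rcases hy01 e with h | h <;> rw [h, abs_lt] <;> constructor <;> omega

theorem IsNowhereZeroFlow.exists_int [Finite V] {n : ℕ} [NeZero n] {ψ : E → ZMod n}
    (hψ : D.IsNowhereZeroFlow ψ) (f : E) :
    ∃ φ : E → ℤ, D.IsNowhereZeroFlow φ ∧ (∀ e, |φ e| < n) ∧ φ f = (ψ f).val := by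
  refine exists_isNowhereZeroFlow_of_dvd_divergence (x := fun e => (ψ e).val) (fun e => ?_)
    (fun v => ?_) f
  · exact ⟨mod_cast ZMod.val_pos.2 (hψ.ne_zero e), mod_cast ZMod.val_lt (ψ e)⟩
  · rw [← ZMod.intCast_zmod_eq_zero_iff_dvd]
    refine (D.divergence_hom_comp (Int.castAddHom (ZMod n)) _ v).symm.trans ?_
    simp [hψ.divergence_eq_zero]

theorem IsBridgeless.exists_int_isNowhereZeroFlow [Finite V] (hD : D.IsBridgeless) (f : E) {a : ℤ}
    (ha : 1 ≤ a) (ha' : a ≤ 5) :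
    ∃ φ : E → ℤ, D.IsNowhereZeroFlow φ ∧ (∀ e, |φ e| < 6) ∧ φ f = a := by
  let crt : ZMod 6 ≃+* ZMod 2 × ZMod 3 := ZMod.chineseRemainder (by decide : Nat.Coprime 2 3)
  lift a to ℕ using by omega
  have hval : (a : ZMod 6).val = a := ZMod.val_cast_of_lt (by omega)
  have hne : crt a ≠ 0 := by
    rw [map_ne_zero_iff _ crt.injective, ← ZMod.val_pos]
    omega
  obtain ⟨ψ, hψ, hψf⟩ := hD.exists_isNowhereZeroFlow (A := ZMod 3) (by simp) f hne
  obtain ⟨φ, hφ, hlt, hφf⟩ := (hψ.hom_comp (h := (crt.symm : ZMod 2 × ZMod 3 →+ ZMod 6))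
    crt.symm.injective).exists_int f
  exact ⟨φ, hφ, hlt, by simpa [hψf, hval] using hφf⟩

end Tutte

end Multidigraph

/-! ### Simple graphs as directed multigraphs -/

/-- The edges of a simple graph, each directed by the (arbitrary) order in which `Quot.out` lists
its two endpoints. -/
noncomputable def Multidigraph.ofSimpleGraph (G : SimpleGraph V) : Multidigraph V G.edgeSet where
  src e := (Quot.out e.1).1
  tgt e := (Quot.out e.1).2

/-- The orientation of all half-edges given by the same choice as `Multidigraph.ofSimpleGraph`. -/
noncomputable def outOrientation (v : V) (e : Sym2 V) : ℤ :=
  if v = (Quot.out e).1 then -1 else 1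

lemma isOrientation_outOrientation (G : SimpleGraph V) :
    IsOrientation G allPos outOrientation := by
  refine ⟨fun v e => by unfold outOrientation; split_ifs <;> simp, fun u v huv => ?_⟩
  have hout : s((Quot.out s(u, v)).1, (Quot.out s(u, v)).2) = s(u, v) := Quot.out_eq _
  rcases Sym2.eq_iff.1 hout with ⟨hu, -⟩ | ⟨hv, -⟩
  · simp [outOrientation, allPos, hu, huv.ne']
  · simp [outOrientation, allPos, hv, huv.ne]

namespace Multidigraph

variable {G : SimpleGraph V}

lemma mk_src_tgt_ofSimpleGraph (e : G.edgeSet) :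
    s((ofSimpleGraph G).src e, (ofSimpleGraph G).tgt e) = e :=
  Quot.out_eq e.1

lemma src_ne_tgt_ofSimpleGraph (e : G.edgeSet) :
    (ofSimpleGraph G).src e ≠ (ofSimpleGraph G).tgt e :=
  (G.mem_edgeSet.1 (mk_src_tgt_ofSimpleGraph e ▸ e.2)).ne

variable [Fintype G.edgeSet]

lemma mk_mem_cut_ofSimpleGraph {u v : V} (huv : G.Adj u v) (S : Finset V) :
    ⟨s(u, v), huv⟩ ∈ (ofSimpleGraph G).cut S ↔ ¬ (u ∈ S ↔ v ∈ S) := by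
  rw [mem_cut]
  rcases Sym2.eq_iff.1 (mk_src_tgt_ofSimpleGraph ⟨s(u, v), huv⟩) with ⟨hu, hv⟩ | ⟨hv, hu⟩
  · rw [hu, hv]
  · rw [hu, hv, @iff_comm (v ∈ S)]

lemma isBridge_of_cut_ofSimpleGraph_eq_singleton {S : Finset V} {e : G.edgeSet}
    (hS : (ofSimpleGraph G).cut S = {e}) : G.IsBridge e := by
  have he : e ∈ (ofSimpleGraph G).cut S := hS ▸ mem_singleton_self e
  have edge_eq_of_crosses (d : G.Dart) (hd : ¬ (d.fst ∈ S ↔ d.snd ∈ S)) : d.edge = e := by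
    have hmem := (mk_mem_cut_ofSimpleGraph d.adj S).2 hd
    rw [hS, mem_singleton] at hmem
    exact congrArg Subtype.val hmem
  rw [← mk_src_tgt_ofSimpleGraph, isBridge_iff_forall_walk_mem_edges, mk_src_tgt_ofSimpleGraph]
  intro p
  obtain ⟨d, hdp, hd⟩ : ∃ d ∈ p.darts, ¬ (d.fst ∈ S ↔ d.snd ∈ S) := by
    rw [mem_cut] at he
    by_cases hsrc : (ofSimpleGraph G).src e ∈ S
    · obtain ⟨d, hdp, hfst, hsnd⟩ := p.exists_boundary_dart S hsrc (by simp_all)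
      exact ⟨d, hdp, fun h => hsnd (h.1 hfst)⟩
    · obtain ⟨d, hdp, hfst, hsnd⟩ := p.exists_boundary_dart (Sᶜ : Set V) hsrc (by simp_all)
      exact ⟨d, hdp, fun h => hsnd fun hmem => hfst (h.2 hmem)⟩
  exact edge_eq_of_crosses d hd ▸ List.mem_map_of_mem hdp

lemma isBridgeless_ofSimpleGraph (hG : Bridgeless G) : (ofSimpleGraph G).IsBridgeless := by
  intro S hS
  obtain ⟨e, he⟩ := card_eq_one.1 hS
  exact hG e e.2 (isBridge_of_cut_ofSimpleGraph_eq_singleton he)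

lemma divergence_ofSimpleGraph_eq_neg_sum_incident (φ : Sym2 V → ℤ) (v : V) :
    (ofSimpleGraph G).divergence (fun e => φ e) v =
      -∑ e : G.edgeSet, if v ∈ e.1 then outOrientation v e * φ e else 0 := by
  rw [divergence_apply, ← sum_neg_distrib]
  refine sum_congr rfl fun e _ => ?_
  have hne := src_ne_tgt_ofSimpleGraph e
  have hmem : v ∈ e.1 ↔ v = (ofSimpleGraph G).src e ∨ v = (ofSimpleGraph G).tgt e := by
    rw [← mk_src_tgt_ofSimpleGraph e, Sym2.mem_iff]
  have hsign : outOrientation v e = if v = (ofSimpleGraph G).src e then -1 else 1 := rfl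
  grind

lemma divergence_ofSimpleGraph [Fintype V] (φ : Sym2 V → ℤ) (v : V) :
    (ofSimpleGraph G).divergence (fun e => φ e) v =
      -∑ w, if G.Adj v w then outOrientation v s(v, w) * φ s(v, w) else 0 := by
  rw [divergence_ofSimpleGraph_eq_neg_sum_incident, neg_inj, ← sum_filter, ← sum_filter]
  refine (sum_bij (fun w hw => ⟨s(v, w), (mem_filter.1 hw).2⟩) ?_ ?_ ?_ fun _ _ => rfl).symm
  · simp
  · exact fun w _ w' _ h => Sym2.congr_right.1 (congrArg Subtype.val h)
  · rintro ⟨e, he⟩ hve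
    obtain ⟨w, rfl⟩ := (mem_filter.1 hve).2
    exact ⟨w, by simpa using he, rfl⟩

lemma IsNowhereZeroFlow.isNZFlow [Fintype V] {φ : Sym2 V → ℤ} {k : ℤ}
    (hφ : (ofSimpleGraph G).IsNowhereZeroFlow fun e => φ e) (hk : ∀ e ∈ G.edgeSet, |φ e| < k) :
    IsNZFlow G allPos k outOrientation φ := by
  refine ⟨⟨isOrientation_outOrientation G, fun v => ?_⟩,
    fun e he => ⟨abs_pos.2 (hφ.ne_zero ⟨e, he⟩), hk e he⟩⟩
  rw [← neg_eq_zero, ← divergence_ofSimpleGraph, hφ.divergence_eq_zero, Pi.zero_apply]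

end Multidigraph

theorem stmt10_general [Fintype V] (G : SimpleGraph V) (hbl : Bridgeless G)
    (f : Sym2 V) (hf : f ∈ G.edgeSet) (a : ℤ) (ha : 1 ≤ a) (ha' : a ≤ 5) :
    ∃ τ φ, IsNZFlow G allPos 6 τ φ ∧ φ f = a := by
  let _ : Fintype G.edgeSet := Fintype.ofFinite _
  obtain ⟨φ, hφ, hlt, hφf⟩ :=
    (Multidigraph.isBridgeless_ofSimpleGraph hbl).exists_int_isNowhereZeroFlow ⟨f, hf⟩ ha ha'
  obtain ⟨φ, rfl⟩ : ∃ φ' : Sym2 V → ℤ, (fun e : G.edgeSet => φ' e) = φ :=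
    ⟨Function.extend Subtype.val φ 0, funext (Subtype.val_injective.extend_apply φ 0)⟩
  exact ⟨outOrientation, φ, hφ.isNZFlow fun e he => hlt ⟨e, he⟩, hφf⟩

/-- A bridgeless cubic graph admits a nowhere-zero 6-flow with any
prescribed value `a ∈ {1, …, 5}` on a prescribed edge. -/
theorem stmt10 [Fintype V] (G : SimpleGraph V) (hcubic : CubicGraph G) (hbl : Bridgeless G)
    (f : Sym2 V) (hf : f ∈ G.edgeSet) (a : ℤ) (ha : 1 ≤ a) (ha' : a ≤ 5) :
    ∃ τ φ, IsNZFlow G allPos 6 τ φ ∧ φ f = a :=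
  stmt10_general G hbl f hf a ha ha'
end

section
/- Let (G, σ) be a flow-admissible signed cubic graph with exactly two negative edges n₁ and n₂. If G contains a bridge, then (G, σ) admits a nowhere-zero 6-flow (D, φ) with φ(n₁) = φ(n₂) = 1. -/
open Finset SimpleGraph

attribute [local instance] Classical.propDecidable

variable {V : Type}

/-!
Summing Kirchhoff's law over all vertices shows that one negative edge emits at both ends what the
other absorbs, so a flow with value `1` on both is a flow along the positive edges, regarded as a
directed multigraph, with one unit entering at each end of `n₁` and leaving at each end of `n₂`.
Flow-admissibility forces the bridge to be positive and to separate `n₁` from `n₂`. Contracting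
the far side of the bridge to a vertex `x`, it suffices to find, on each side, a nowhere-zero
6-flow carrying one unit from each of the ends `u`, `v` of the negative edge to `x`; the two flows
are glued after correcting the value on the bridge, which becomes `±2`.

Each side is handled by Seymour's 6-flow argument. A minimal counterexample has no cuts of size at
most one, nor 2-cuts of zero demand: the flow obtained by merging two vertices across such a cut
could be repaired. Hoffman's circulation theorem then yields a `ZMod 2`-flow whose support
is connected and contains `u`, `v`, `x`; adding cycles one piece at a time, each attached by two
edges, one constructs a `ZMod 3`-flow that is nonzero wherever the `ZMod 2`-flow vanishes. The
pair is a `ZMod 6`-flow, and Hoffman's theorem lifts it to `ℤ`.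
-/

/-- A directed multigraph on vertices `α` and edges `β`, loops and parallel edges allowed.
The directions serve only as a reference orientation for integer-valued flows. -/
structure OrientedMultigraph (α β : Type*) where
  src : β → α
  tgt : β → α

namespace OrientedMultigraph

section Boundary

variable {α β M N : Type*} [AddCommGroup M] [AddCommGroup N]
  (D : OrientedMultigraph α β)

/-- The boundary of `f`: the net outflow of `f` at each vertex. -/
noncomputable def boundary [Fintype β] : (β → M) →+ (α → M) where
  toFun f v := ∑ e, ((if D.src e = v then f e else 0) - (if D.tgt e = v then f e else 0))
  map_zero' := by ext; simp
  map_add' f g := by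
    ext v
    simp only [Pi.add_apply, ← sum_add_distrib]
    exact sum_congr rfl fun e _ => by split_ifs <;> abel

/-- The edges with exactly one end in `X`. -/
noncomputable def cut [Fintype β] (X : Finset α) : Finset β :=
  {e | ¬(D.src e ∈ X ↔ D.tgt e ∈ X)}

/-- The edges with both ends in `X`. -/
noncomputable def inside [Fintype β] (X : Finset α) : Finset β :=
  {e | D.src e ∈ X ∧ D.tgt e ∈ X}

variable [Fintype β]

theorem boundary_apply (f : β → M) (v : α) :
    D.boundary f v =
      ∑ e, ((if D.src e = v then f e else 0) - (if D.tgt e = v then f e else 0)) := rfl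

@[simp]
theorem mem_cut {X : Finset α} {e : β} : e ∈ D.cut X ↔ ¬(D.src e ∈ X ↔ D.tgt e ∈ X) := by
  simp [cut]

@[simp]
theorem mem_inside {X : Finset α} {e : β} : e ∈ D.inside X ↔ D.src e ∈ X ∧ D.tgt e ∈ X := by
  simp [inside]

theorem boundary_comp_hom (θ : M →+ N) (f : β → M) (v : α) :
    D.boundary (θ ∘ f) v = θ (D.boundary f v) := by
  simp only [boundary_apply, map_sum, map_sub, Function.comp_apply, apply_ite θ, map_zero]

theorem boundary_single (e : β) (m : M) :
    D.boundary (Pi.single e m) = Pi.single (D.src e) m - Pi.single (D.tgt e) m := by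
  ext v
  rw [boundary_apply, sum_eq_single e (fun e' _ he => by simp [he]) (by simp)]
  simp [Pi.single_apply, eq_comm]

theorem sum_boundary (f : β → M) (X : Finset α) :
    ∑ v ∈ X, D.boundary f v =
      ∑ e, ((if D.src e ∈ X then f e else 0) - (if D.tgt e ∈ X then f e else 0)) := by
  simp only [boundary_apply]
  rw [sum_comm]
  simp only [sum_sub_distrib, sum_ite_eq]

theorem sum_boundary_eq_sum_cut (f : β → M) (X : Finset α) :
    ∑ v ∈ X, D.boundary f v = ∑ e ∈ D.cut X, if D.src e ∈ X then f e else -f e := by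
  rw [sum_boundary, cut, sum_filter]
  refine sum_congr rfl fun e _ => ?_
  by_cases hs : D.src e ∈ X <;> by_cases ht : D.tgt e ∈ X <;> simp [hs, ht]

theorem sum_boundary_eq_zero {f : β → M} {X : Finset α} (hf : ∀ e ∈ D.cut X, f e = 0) :
    ∑ v ∈ X, D.boundary f v = 0 := by
  rw [sum_boundary_eq_sum_cut]
  exact sum_eq_zero fun e he => by simp [hf e he]

theorem sum_univ_boundary [Fintype α] (f : β → M) : ∑ v, D.boundary f v = 0 :=
  D.sum_boundary_eq_zero (by simp)

theorem abs_sum_boundary_of_cut_eq_singleton {f : β → ℤ} {X : Finset α} {e : β}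
    (hX : D.cut X = {e}) : |∑ v ∈ X, D.boundary f v| = |f e| := by
  rw [sum_boundary_eq_sum_cut, hX, sum_singleton]
  split_ifs <;> simp

theorem abs_eq_abs_of_cut_eq_pair {f : β → ℤ} {X : Finset α} {e₀ e₁ : β} (hne : e₀ ≠ e₁)
    (hX : D.cut X = {e₀, e₁}) (hf : ∑ v ∈ X, D.boundary f v = 0) : |f e₀| = |f e₁| := by
  rw [sum_boundary_eq_sum_cut, hX, sum_pair hne] at hf
  rw [abs_eq_abs]
  split_ifs at hf <;> omega

end Boundary

section Hoffman

variable {α β : Type*} [Fintype β] (D : OrientedMultigraph α β)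

/-- The least net outflow of `X` that the capacities `l ≤ f ≤ h` permit. -/
noncomputable def minOutflow (l h : β → ℤ) (X : Finset α) : ℤ :=
  ∑ e ∈ D.cut X, if D.src e ∈ X then l e else -h e

/-- Hoffman's cut condition for an integer flow with capacities `l ≤ f ≤ h` and boundary `p`. -/
structure CutCondition (p : α → ℤ) (l h : β → ℤ) : Prop where
  le : l ≤ h
  minOutflow_le : ∀ X, D.minOutflow l h X ≤ ∑ v ∈ X, p v

variable {D}

theorem minOutflow_eq_sum (l h : β → ℤ) (X : Finset α) : D.minOutflow l h X =
    ∑ e, ((if D.src e ∈ X ∧ D.tgt e ∉ X then l e else 0) -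
      (if D.tgt e ∈ X ∧ D.src e ∉ X then h e else 0)) := by
  rw [minOutflow, cut, sum_filter]
  refine sum_congr rfl fun e _ => ?_
  by_cases hs : D.src e ∈ X <;> by_cases ht : D.tgt e ∈ X <;> simp [hs, ht]

theorem minOutflow_add_le {l h : β → ℤ} (hlh : l ≤ h) {e₀ : β} (he₀ : l e₀ < h e₀)
    (X Y : Finset α) :
    D.minOutflow l (Function.update h e₀ (h e₀ - 1)) X +
        D.minOutflow (Function.update l e₀ (l e₀ + 1)) h Y ≤
      D.minOutflow l h (X ∪ Y) + D.minOutflow l h (X ∩ Y) + 1 := by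
  have one_eq_sum : (1 : ℤ) = ∑ e : β, if e = e₀ then 1 else 0 := by simp
  rw [one_eq_sum]
  simp only [minOutflow_eq_sum, ← sum_add_distrib]
  refine sum_le_sum fun e _ => ?_
  have hle := hlh e
  by_cases he : e = e₀
  · subst he
    by_cases hsX : D.src e ∈ X <;> by_cases hsY : D.src e ∈ Y <;> by_cases htX : D.tgt e ∈ X <;>
      by_cases htY : D.tgt e ∈ Y <;> simp [hsX, hsY, htX, htY] <;> omega
  · by_cases hsX : D.src e ∈ X <;> by_cases hsY : D.src e ∈ Y <;> by_cases htX : D.tgt e ∈ X <;>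
      by_cases htY : D.tgt e ∈ Y <;> simp [he, hsX, hsY, htX, htY, hle]

-- Violating sets `X` and `Y` of the two tightenings uncross to a violating `X ∪ Y` or `X ∩ Y`.
theorem CutCondition.tighten {p : α → ℤ} {l h : β → ℤ} (hlh : D.CutCondition p l h) {e₀ : β}
    (he₀ : l e₀ < h e₀) :
    D.CutCondition p l (Function.update h e₀ (h e₀ - 1)) ∨
      D.CutCondition p (Function.update l e₀ (l e₀ + 1)) h := by
  by_contra! hviolated
  obtain ⟨hupper, hlower⟩ := hviolated
  obtain ⟨X, hX⟩ : ∃ X, ∑ v ∈ X, p v < D.minOutflow l (Function.update h e₀ (h e₀ - 1)) X := by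
    by_contra! hle
    exact hupper ⟨le_update_iff.2 ⟨by omega, fun e _ => hlh.le e⟩, hle⟩
  obtain ⟨Y, hY⟩ : ∃ Y, ∑ v ∈ Y, p v < D.minOutflow (Function.update l e₀ (l e₀ + 1)) h Y := by
    by_contra! hle
    exact hlower ⟨update_le_iff.2 ⟨by omega, fun e _ => hlh.le e⟩, hle⟩
  have huncross := minOutflow_add_le (D := D) hlh.le he₀ X Y
  have hunion := hlh.minOutflow_le (X ∪ Y)
  have hinter := hlh.minOutflow_le (X ∩ Y)
  have hmodular := sum_union_inter (s₁ := X) (s₂ := Y) (f := p)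
  omega

theorem CutCondition.boundary_eq [Fintype α] {p : α → ℤ} (hp : ∑ v, p v = 0) {l : β → ℤ}
    (hl : D.CutCondition p l l) : D.boundary l = p := by
  have hle : ∀ v ∈ univ, D.boundary l v ≤ p v := fun v _ => by
    have hv := hl.minOutflow_le {v}
    rwa [minOutflow, ← sum_boundary_eq_sum_cut, sum_singleton, sum_singleton] at hv
  funext v
  exact (sum_eq_sum_iff_of_le hle).1 (by rw [sum_univ_boundary, hp]) v (mem_univ v)

theorem CutCondition.exists_flow [Fintype α] {p : α → ℤ} (hp : ∑ v, p v = 0) {l h : β → ℤ}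
    (hlh : D.CutCondition p l h) : ∃ f : β → ℤ, l ≤ f ∧ f ≤ h ∧ D.boundary f = p := by
  induction hn : (∑ e, (h e - l e)).toNat using Nat.strong_induction_on generalizing l h with
  | _ n ih =>
  by_cases heq : l = h
  · subst heq
    exact ⟨l, le_rfl, le_rfl, hlh.boundary_eq hp⟩
  obtain ⟨e₀, he₀⟩ : ∃ e₀, l e₀ < h e₀ := (Pi.lt_def.1 (hlh.le.lt_of_ne heq)).2
  have gap_lt : ∀ {l' h' : β → ℤ}, l ≤ l' → h' ≤ h → l' ≤ h' → h' e₀ - l' e₀ < h e₀ - l e₀ →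
      (∑ e, (h' e - l' e)).toNat < n := by
    intro l' h' hl hh hle hlt
    have hsum : ∑ e, (h' e - l' e) < ∑ e, (h e - l e) :=
      sum_lt_sum (fun e _ => sub_le_sub (hh e) (hl e)) ⟨e₀, mem_univ e₀, hlt⟩
    have hnonneg : 0 ≤ ∑ e, (h' e - l' e) := sum_nonneg fun e _ => sub_nonneg.2 (hle e)
    omega
  rcases hlh.tighten he₀ with hupper | hlower
  · have hle : Function.update h e₀ (h e₀ - 1) ≤ h := update_le_self_iff.2 (by omega)
    obtain ⟨f, hlf, hfh, hf⟩ := ih _ (gap_lt le_rfl hle hupper.le (by simp)) hupper rfl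
    exact ⟨f, hlf, hfh.trans hle, hf⟩
  · have hle : l ≤ Function.update l e₀ (l e₀ + 1) := le_update_self_iff.2 (by omega)
    obtain ⟨f, hlf, hfh, hf⟩ := ih _ (gap_lt hle le_rfl hlower.le (by simp)) hlower rfl
    exact ⟨f, hle.trans hlf, hfh, hf⟩

end Hoffman

section NowhereZero

variable {α β : Type*} [Fintype β] (D : OrientedMultigraph α β)

/-- `f` is a nowhere-zero integer `k`-flow with net outflow `p`. -/
def IsNowhereZeroFlow (k : ℤ) (p : α → ℤ) (f : β → ℤ) : Prop :=
  (∀ e, f e ≠ 0 ∧ |f e| < k) ∧ D.boundary f = p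

variable {D}

theorem exists_zeroOne_flow [Fintype α] {r : β → ℤ} {n : ℤ} {p q : α → ℤ} (hn : 0 < n)
    (hr : ∀ e, r e < n) (hr0 : ∀ e, 0 ≤ r e)
    (hrq : ∀ v, D.boundary r v - p v = n * q v) (hp0 : ∑ v, p v = 0)
    (hp : ∀ X : Finset α, ∑ v ∈ X, p v < n) :
    ∃ y : β → ℤ, 0 ≤ y ∧ y ≤ 1 ∧ D.boundary y = q := by
  have sum_q : ∀ X : Finset α, n * ∑ v ∈ X, q v = ∑ v ∈ X, D.boundary r v - ∑ v ∈ X, p v :=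
    fun X => by simp only [mul_sum, ← hrq, sum_sub_distrib]
  refine CutCondition.exists_flow ?_ ⟨zero_le_one, fun X => ?_⟩
  · have := sum_q univ
    rw [sum_univ_boundary, hp0, sub_zero] at this
    exact (mul_eq_zero.1 this).resolve_left hn.ne'
  · have hbound : n * D.minOutflow 0 1 X ≤ ∑ v ∈ X, D.boundary r v := by
      rw [minOutflow, mul_sum, sum_boundary_eq_sum_cut]
      refine sum_le_sum fun e _ => ?_
      split_ifs <;> simp [hr0 e, (hr e).le]
    have hlt : n * D.minOutflow 0 1 X < n * (∑ v ∈ X, q v + 1) := by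
      have := sum_q X
      have := hp X
      linarith
    exact Int.lt_add_one_iff.1 (lt_of_mul_lt_mul_left hlt hn.le)

theorem exists_isNowhereZeroFlow_of_zmod [Fintype α] {n : ℕ} [NeZero n] {p : α → ℤ}
    (hp0 : ∑ v, p v = 0) (hp : ∀ X : Finset α, ∑ v ∈ X, p v < n) {g : β → ZMod n}
    (hg0 : ∀ e, g e ≠ 0) (hg : ∀ v, D.boundary g v = p v) :
    ∃ f, D.IsNowhereZeroFlow n p f := by
  set r : β → ℤ := fun e => (g e).val with hr
  have hr_pos : ∀ e, 0 < r e := fun e => by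
    have := (ZMod.val_ne_zero (g e)).2 (hg0 e)
    simp only [hr]
    omega
  have hr_lt : ∀ e, r e < n := fun e => Nat.cast_lt.2 (ZMod.val_lt (g e))
  have hdvd : ∀ v, ∃ q : ℤ, D.boundary r v - p v = n * q := fun v => by
    refine (ZMod.intCast_zmod_eq_zero_iff_dvd _ n).1 ?_
    have hcast : Int.castAddHom (ZMod n) ∘ r = g := by ext e; simp [hr]
    have := D.boundary_comp_hom (Int.castAddHom (ZMod n)) r v
    rw [hcast, hg] at this
    simpa [sub_eq_zero] using this.symm
  choose q hq using hdvd
  obtain ⟨y, hy0, hy1, hyq⟩ := exists_zeroOne_flow (Nat.cast_pos.2 (NeZero.pos n)) hr_lt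
    (fun e => (hr_pos e).le) hq hp0 hp
  refine ⟨r - n • y, fun e => ?_, ?_⟩
  · have hcases : y e = 0 ∨ y e = 1 := by
      have := hy0 e
      have := hy1 e
      simp only [Pi.zero_apply, Pi.one_apply] at *
      omega
    have := hr_pos e
    have := hr_lt e
    rcases hcases with h | h <;> simp [h, abs_lt] <;> omega
  · ext v
    rw [map_sub, map_nsmul, hyq]
    simp [← hq]

theorem exists_isNowhereZeroFlow_of_zmod_mul [Fintype α] {m n : ℕ} [NeZero m] [NeZero n]
    (hmn : m.Coprime n) {p : α → ℤ} (hp0 : ∑ v, p v = 0)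
    (hp : ∀ X : Finset α, ∑ v ∈ X, p v < m * n) {F : β → ZMod m} {φ : β → ZMod n}
    (hFφ : ∀ e, F e ≠ 0 ∨ φ e ≠ 0) (hF : ∀ v, D.boundary F v = p v)
    (hφ : ∀ v, D.boundary φ v = p v) : ∃ f, D.IsNowhereZeroFlow (m * n) p f := by
  let crt := ZMod.chineseRemainder hmn
  have hpair : ∀ v, D.boundary (fun e => (F e, φ e)) v = ((p v : ℤ) : ZMod m × ZMod n) := fun v =>
    Prod.ext
      ((D.boundary_comp_hom (AddMonoidHom.fst (ZMod m) (ZMod n)) _ v).symm.trans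
        ((hF v).trans (by simp)))
      ((D.boundary_comp_hom (AddMonoidHom.snd (ZMod m) (ZMod n)) _ v).symm.trans
        ((hφ v).trans (by simp)))
  rw [← Nat.cast_mul]
  refine exists_isNowhereZeroFlow_of_zmod hp0 (by exact_mod_cast hp)
    (g := fun e => crt.symm (F e, φ e)) (fun e he => ?_) fun v => ?_
  · have := (map_eq_zero_iff _ crt.symm.injective).1 he
    simp only [Prod.mk_eq_zero] at this
    exact (hFφ e).elim (· this.1) (· this.2)
  · refine (D.boundary_comp_hom crt.symm.toAddMonoidHom _ v).trans ?_
    rw [hpair]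
    simp

end NowhereZero

section Connectivity

variable {α β : Type*} [Fintype β] (D : OrientedMultigraph α β)

/-- The vertex set `X` is connected in the graph formed by the edges of `S` inside `X`. -/
def Connects (S : Set β) (X : Finset α) : Prop :=
  ∀ B ⊂ X, B.Nonempty → ∃ e ∈ S, e ∈ D.inside X ∧ e ∈ D.cut B

/-- The boundaries of the `M`-valued functions supported on `S`. -/
noncomputable def boundaries (M : Type*) [AddCommGroup M] (S : Set β) : AddSubgroup (α → M) :=
  (AddSubgroup.pi Sᶜ fun _ => ⊥).map D.boundary

variable {D}

theorem mem_boundaries {M : Type*} [AddCommGroup M] {S : Set β} {q : α → M} :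
    q ∈ D.boundaries M S ↔ ∃ f : β → M, (∀ e ∉ S, f e = 0) ∧ D.boundary f = q := by
  simp [boundaries, AddSubgroup.mem_map, AddSubgroup.mem_pi]

theorem exists_component [Finite α] (S : Set β) (x : α) :
    ∃ X, x ∈ X ∧ (∀ e ∈ S, e ∉ D.cut X) ∧ D.Connects S X := by
  have := Fintype.ofFinite α
  obtain ⟨X, ⟨hxX, hX⟩, hmin⟩ := exists_minimal_of_wellFoundedLT
    (fun X : Finset α => x ∈ X ∧ ∀ e ∈ S, e ∉ D.cut X) ⟨univ, by simp⟩
  refine ⟨X, hxX, hX, fun B hB hB0 => ?_⟩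
  by_contra! hclosed
  have hBcut : ∀ e ∈ S, e ∉ D.cut B := fun e he heB => by
    have hXe := hX e he
    refine hclosed e he ?_ heB
    simp only [mem_cut, not_not, mem_inside] at hXe heB ⊢
    have := @hB.1 (D.src e)
    have := @hB.1 (D.tgt e)
    tauto
  by_cases hxB : x ∈ B
  · exact hB.2 (hmin ⟨hxB, hBcut⟩ hB.1)
  · obtain ⟨y, hy⟩ := hB0
    refine (mem_sdiff.1 (hmin (y := X \ B) ⟨by simp [hxX, hxB], fun e he => ?_⟩
      sdiff_subset (hB.1 hy))).2 hy
    have hXe := hX e he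
    have hBe := hBcut e he
    simp only [mem_cut, not_not, mem_sdiff] at hXe hBe ⊢
    tauto

variable {M : Type*} [AddCommGroup M]

theorem Connects.single_sub_single_mem {S : Set β} {X : Finset α} (hX : D.Connects S X) {x y : α}
    (hx : x ∈ X) (hy : y ∈ X) (m : M) :
    Pi.single x m - Pi.single y m ∈ D.boundaries M (S ∩ D.inside X) := by
  set B : Finset α := X.filter fun z =>
    Pi.single x m - Pi.single z m ∈ D.boundaries M (S ∩ D.inside X) with hB
  have hxB : x ∈ B := by simp [hB, hx, zero_mem]
  suffices hBX : B = X by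
    rw [← hBX] at hy
    exact (mem_filter.1 hy).2
  by_contra hne
  obtain ⟨e, heS, heX, heB⟩ := hX B ((filter_subset _ _).ssubset_of_ne hne) ⟨x, hxB⟩
  have hedge : Pi.single (D.src e) m - Pi.single (D.tgt e) m ∈
      D.boundaries M (S ∩ D.inside X) := by
    refine mem_boundaries.2 ⟨Pi.single e m, fun e' he' => ?_, D.boundary_single e m⟩
    have hne : e' ≠ e := by
      rintro rfl
      exact he' ⟨heS, heX⟩
    simp [hne]
  rw [mem_inside] at heX
  refine D.mem_cut.1 heB ?_
  simp only [hB, mem_filter, heX.1, heX.2, true_and]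
  constructor <;> intro h
  · simpa using add_mem h hedge
  · simpa using sub_mem h hedge

theorem Connects.mem_boundaries_of_sum_eq_zero {S : Set β} {X : Finset α} (hX : D.Connects S X)
    {q : α → M} (hq : ∀ v ∉ X, q v = 0) (hsum : ∑ v ∈ X, q v = 0) :
    q ∈ D.boundaries M (S ∩ D.inside X) := by
  rcases X.eq_empty_or_nonempty with rfl | ⟨x, hx⟩
  · rw [show q = 0 from funext fun v => hq v (by simp)]
    exact zero_mem _
  have hdecomp : q = ∑ v ∈ X, (Pi.single v (q v) - Pi.single x (q v)) := by
    ext w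
    rw [sum_sub_distrib, Pi.sub_apply, Finset.sum_apply, Finset.sum_apply, sum_pi_single]
    by_cases hw : w = x
    · subst hw; simp [hx, hsum]
    · simp only [Pi.single_eq_of_ne hw, sum_const_zero, sub_zero]
      split_ifs with h
      · rfl
      · exact hq w h
  rw [hdecomp]
  exact sum_mem fun v hv => hX.single_sub_single_mem hv hx _

end Connectivity

section Demand

variable {α β : Type*}

/-- The boundary of two paths to `x`, one from `u` and one from `v`. -/
noncomputable def demand (u v x : α) : α → ℤ :=
  Pi.single u 1 + Pi.single v 1 - Pi.single x 2

theorem sum_demand (u v x : α) (X : Finset α) : ∑ w ∈ X, demand u v x w =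
    (if u ∈ X then 1 else 0) + (if v ∈ X then 1 else 0) - (if x ∈ X then 2 else 0) := by
  simp [demand, sum_add_distrib, sum_sub_distrib, sum_pi_single']

theorem sum_univ_demand [Fintype α] (u v x : α) : ∑ w, demand u v x w = 0 := by
  simp [sum_demand]

theorem abs_sum_demand_le (u v x : α) (X : Finset α) : |∑ w ∈ X, demand u v x w| ≤ 2 := by
  rw [sum_demand, abs_le]
  split_ifs <;> simp

variable [Fintype β] (D : OrientedMultigraph α β)

/-- The subgraph induced by `A` is connected and has no bridge. -/
def TwoEdgeConnectedOn (A : Finset α) : Prop :=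
  ∀ B ⊂ A, B.Nonempty → 2 ≤ #(D.inside A ∩ D.cut B)

variable {D}

theorem boundary_indicator_inside {M : Type*} [AddCommGroup M] {f : β → M} {X : Finset α}
    (hf : ∀ e ∈ D.cut X, f e = 0) :
    D.boundary ((D.inside X : Set β).indicator f) = (X : Set α).indicator (D.boundary f) := by
  ext v
  by_cases hv : v ∈ X
  · rw [Set.indicator_of_mem (mem_coe.2 hv)]
    refine sum_congr rfl fun e _ => ?_
    by_cases hX : e ∈ D.inside X
    · rw [Set.indicator_of_mem (mem_coe.2 hX)]
    · rw [Set.indicator_of_notMem (mem_coe.not.2 hX)]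
      by_cases hcut : e ∈ D.cut X
      · simp [hf e hcut]
      · grind [mem_cut, mem_inside]
  · rw [Set.indicator_of_notMem (mem_coe.not.2 hv)]
    refine sum_eq_zero fun e _ => ?_
    grind [mem_inside, Set.indicator_apply]

theorem intCast_zmod_two_ne_zero {m : ℤ} (hm : |m| ≤ 1) : (m : ZMod 2) ≠ 0 ↔ m ≠ 0 := by
  rw [Ne, ZMod.intCast_zmod_eq_zero_iff_dvd]
  rw [abs_le] at hm
  omega

theorem TwoEdgeConnectedOn.exists_unit_flow [Finite α] {A : Finset α}
    (hA : D.TwoEdgeConnectedOn A) {u v x : α} (hu : u ∈ A) (hv : v ∈ A) (hx : x ∈ A) :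
    ∃ f : β → ℤ, (∀ e, |f e| ≤ 1) ∧ (∀ e ∉ D.inside A, f e = 0) ∧ D.boundary f = demand u v x := by
  have := Fintype.ofFinite α
  set h : β → ℤ := fun e => if e ∈ D.inside A then 1 else 0 with hh
  have minOutflow_eq : ∀ Z, D.minOutflow (-h) h Z = -#(D.inside A ∩ D.cut (Z ∩ A)) := fun Z => by
    have hcut : D.inside A ∩ D.cut (Z ∩ A) = {e ∈ D.cut Z | e ∈ D.inside A} := by
      ext e
      simp only [mem_inter, mem_filter, mem_inside, mem_cut]
      tauto
    rw [hcut, card_filter, minOutflow]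
    push_cast
    rw [← sum_neg_distrib]
    exact sum_congr rfl fun e _ => by simp [hh]
  have sum_demand_inter : ∀ Z, ∑ w ∈ Z, demand u v x w = ∑ w ∈ Z ∩ A, demand u v x w := fun Z => by
    simp [sum_demand, hu, hv, hx]
  have hcut : D.CutCondition (demand u v x) (-h) h := by
    refine ⟨fun e => ?_, fun Z => ?_⟩
    · by_cases he : e ∈ D.inside A <;> simp [hh, he, -mem_inside]
    · rw [minOutflow_eq, sum_demand_inter]
      rcases inter_subset_right.eq_or_ssubset (a := Z ∩ A) with hZ | hZ
      · simp [hZ, sum_demand, hu, hv, hx]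
      rcases (Z ∩ A).eq_empty_or_nonempty with hZ0 | hZ0
      · simp [hZ0]
      have := hA _ hZ hZ0
      have := (abs_le.1 (abs_sum_demand_le u v x (Z ∩ A))).1
      omega
  obtain ⟨f, hlf, hfh, hf⟩ := hcut.exists_flow (sum_univ_demand u v x)
  refine ⟨f, fun e => abs_le.2 ?_, fun e he => ?_, hf⟩
  all_goals
    have := hlf e
    have := hfh e
    simp only [hh, Pi.neg_apply] at *
    split_ifs at * <;> omega

theorem TwoEdgeConnectedOn.exists_connected_support [Finite α] {A : Finset α}
    (hA : D.TwoEdgeConnectedOn A) {u v x : α} (hu : u ∈ A) (hv : v ∈ A) (hx : x ∈ A) :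
    ∃ X ⊆ A, u ∈ X ∧ v ∈ X ∧ x ∈ X ∧ ∃ F : β → ZMod 2, (∀ e ∉ D.inside X, F e = 0) ∧
      D.Connects {e | F e ≠ 0} X ∧ ∀ w, D.boundary F w = demand u v x w := by
  obtain ⟨f, hf1, hfA, hf⟩ := hA.exists_unit_flow hu hv hx
  obtain ⟨X, hxX, hXcut, hX⟩ := D.exists_component {e | f e ≠ 0} x
  have hf_cut : ∀ e ∈ D.cut X, f e = 0 := fun e he => not_not.1 fun h => hXcut e h he
  have hXA : X ⊆ A := by
    by_contra hXA
    obtain ⟨e, hfe, heX, hecut⟩ := hX (X ∩ A)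
      (inter_subset_left.ssubset_of_ne fun h => hXA (inter_eq_left.1 h)) ⟨x, by simp [hx, hxX]⟩
    have heA := not_imp_comm.1 (hfA e) hfe
    simp only [mem_inside, mem_cut, mem_inter] at *
    tauto
  have hsum : ∑ w ∈ X, demand u v x w = 0 := hf ▸ D.sum_boundary_eq_zero hf_cut
  have huvX : u ∈ X ∧ v ∈ X := by
    rw [sum_demand, if_pos hxX] at hsum
    split_ifs at hsum <;> simp_all
  set g := (D.inside X : Set β).indicator f with hg
  refine ⟨X, hXA, huvX.1, huvX.2, hxX, Int.castAddHom (ZMod 2) ∘ g, fun e he => ?_,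
    fun B hB hB0 => ?_, fun w => ?_⟩
  · simp [hg, Set.indicator_of_notMem, he]
  · obtain ⟨e, he, heX, heB⟩ := hX B hB hB0
    refine ⟨e, ?_, heX, heB⟩
    simpa [hg, heX, -mem_inside] using (intCast_zmod_two_ne_zero (hf1 e)).2 he
  · rw [boundary_comp_hom, boundary_indicator_inside hf_cut, hf]
    by_cases hw : w ∈ X
    · simp [hw]
    · have : w ≠ u ∧ w ≠ v ∧ w ≠ x := by grind
      simp [hw, demand, this]

end Demand

section Seymour

variable {α β : Type*} [Fintype β] {D : OrientedMultigraph α β}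

theorem boundary_eq_zero_of_notMem {M : Type*} [AddCommGroup M] {f : β → M} {X : Finset α}
    (hf : ∀ e ∉ D.inside X, f e = 0) {w : α} (hw : w ∉ X) : D.boundary f w = 0 := by
  refine sum_eq_zero fun e _ => ?_
  by_cases he : e ∈ D.inside X
  · rw [mem_inside] at he
    grind
  · simp [hf e he]

theorem sum_boundary_single {M : Type*} [AddCommGroup M] {X : Finset α} {e : β}
    (he : e ∈ D.cut X) (m : M) :
    ∑ v ∈ X, D.boundary (Pi.single e m) v = if D.src e ∈ X then m else -m := by
  rw [mem_cut] at he
  rw [sum_boundary_eq_sum_cut, sum_eq_single_of_mem e (by simpa) fun e' _ h => by simp [h]]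
  simp

theorem exists_ne_zero_add_eq (K : ZMod 3) : ∃ k₁ k₂ : ZMod 3, k₁ ≠ 0 ∧ k₂ ≠ 0 ∧ k₁ + k₂ = K := by
  by_cases hK : K = 0
  · exact ⟨1, -1, one_ne_zero, neg_ne_zero.2 one_ne_zero, by simp [hK]⟩
  · refine ⟨-K, -K, neg_ne_zero.2 hK, neg_ne_zero.2 hK, ?_⟩
    have : (3 : ZMod 3) = 0 := CharP.cast_eq_zero (ZMod 3) 3
    linear_combination (-K) * this

-- The values on `e₁` and `e₂` can be chosen freely in `{1, -1}`, which yields every residue.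
theorem exists_support_eq_of_mem_cut {S : Set β} {X : Finset α} {e₁ e₂ : β} (hne : e₁ ≠ e₂)
    (h₁ : e₁ ∈ S) (h₂ : e₂ ∈ S) (hX₁ : e₁ ∈ D.cut X) (hX₂ : e₂ ∈ D.cut X) (K : ZMod 3) :
    ∃ c : β → ZMod 3, (∀ e, c e ≠ 0 ↔ e ∈ S) ∧ ∑ v ∈ X, D.boundary c v = K := by
  set base : β → ZMod 3 := (S \ {e₁, e₂}).indicator 1 with hbase
  obtain ⟨k₁, k₂, hk₁, hk₂, hk⟩ := exists_ne_zero_add_eq (K - ∑ v ∈ X, D.boundary base v)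
  have value : ∀ e ∈ D.cut X, ∀ k : ZMod 3, k ≠ 0 →
      ∃ a ≠ 0, ∑ v ∈ X, D.boundary (Pi.single e a) v = k := fun e he k hk => by
    by_cases hs : D.src e ∈ X
    · exact ⟨k, hk, by rw [sum_boundary_single he, if_pos hs]⟩
    · exact ⟨-k, neg_ne_zero.2 hk, by rw [sum_boundary_single he, if_neg hs, neg_neg]⟩
  obtain ⟨a, ha, hak⟩ := value e₁ hX₁ k₁ hk₁
  obtain ⟨b, hb, hbk⟩ := value e₂ hX₂ k₂ hk₂
  refine ⟨base + Pi.single e₁ a + Pi.single e₂ b, fun e => ?_, ?_⟩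
  · by_cases he₁ : e = e₁
    · subst he₁; simp [hbase, hne, ha, h₁]
    by_cases he₂ : e = e₂
    · subst he₂; simp [hbase, hne.symm, hb, h₂]
    · by_cases he : e ∈ S <;> simp [hbase, he₁, he₂, he]
  · simp only [map_add, Pi.add_apply, sum_add_distrib, hak, hbk]
    linear_combination hk

theorem card_cut_add_card_cut_sdiff_le {Z A B : Finset α} (hAZ : A ⊆ Z) (hBA : B ⊆ A) :
    #(D.inside Z ∩ D.cut B) + #(D.inside Z ∩ D.cut (A \ B)) ≤
      2 * #(D.inside A ∩ D.cut B) + #(D.inside Z ∩ D.cut A) := by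
  have card_eq_sum : ∀ X Y : Finset α,
      #(D.inside X ∩ D.cut Y) = ∑ e, if e ∈ D.inside X ∧ e ∈ D.cut Y then 1 else 0 :=
    fun X Y => by simp only [← card_filter]; congr 1; ext e; simp
  simp only [card_eq_sum, mul_sum, ← sum_add_distrib]
  refine sum_le_sum fun e _ => ?_
  have hs : D.src e ∈ A → D.src e ∈ Z := @hAZ _
  have ht : D.tgt e ∈ A → D.tgt e ∈ Z := @hAZ _
  have hs' : D.src e ∈ B → D.src e ∈ A := @hBA _
  have ht' : D.tgt e ∈ B → D.tgt e ∈ A := @hBA _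
  simp only [mem_inside, mem_cut, mem_sdiff]
  by_cases hsB : D.src e ∈ B <;> by_cases htB : D.tgt e ∈ B <;> by_cases hsA : D.src e ∈ A <;>
    by_cases htA : D.tgt e ∈ A <;> simp_all

-- A minimal `A` cut off from `Z` by at most one edge: a bridge inside `A` would cut off less.
theorem exists_twoEdgeConnectedOn {Z : Finset α} (hZ : Z.Nonempty) :
    ∃ A ⊆ Z, A.Nonempty ∧ #(D.inside Z ∩ D.cut A) ≤ 1 ∧ D.TwoEdgeConnectedOn A := by
  have hZcut : D.inside Z ∩ D.cut Z = ∅ := by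
    ext e
    simp only [mem_inter, mem_inside, mem_cut, notMem_empty]
    tauto
  obtain ⟨A, ⟨hA0, hAZ, hA⟩, hmin⟩ := exists_minimal_of_wellFoundedLT
    (fun A : Finset α => A.Nonempty ∧ A ⊆ Z ∧ #(D.inside Z ∩ D.cut A) ≤ 1)
    ⟨Z, hZ, subset_rfl, by simp [hZcut]⟩
  have two_le : ∀ B ⊂ A, B.Nonempty → 2 ≤ #(D.inside Z ∩ D.cut B) := fun B hB hB0 => by
    by_contra! hlt
    exact hB.2 (hmin ⟨hB0, hB.1.trans hAZ, by omega⟩ hB.1)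
  refine ⟨A, hAZ, hA0, hA, fun B hB hB0 => ?_⟩
  have hB2 := two_le B hB hB0
  have hAB2 := two_le (A \ B) (sdiff_ssubset hB.1 hB0) (sdiff_nonempty.2 hB.2)
  have := card_cut_add_card_cut_sdiff_le (D := D) hAZ hB.1
  omega

theorem exists_attachment {A Y : Finset α} (hAY : Disjoint A Y) {e : β} (he : e ∈ D.cut A)
    (heY : D.src e ∈ Y ∨ D.tgt e ∈ Y) :
    ∃ a ∈ A, ∀ X ⊆ A, a ∈ X → e ∈ D.cut X ∧ e ∈ D.inside (Y ∪ X) := by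
  have hs := @disjoint_left.1 hAY (D.src e)
  have ht := @disjoint_left.1 hAY (D.tgt e)
  simp only [mem_cut, mem_inside, mem_union] at *
  rcases heY with hY | hY
  · refine ⟨D.tgt e, by tauto, fun X hX haX => ?_⟩
    have := @hX (D.src e)
    tauto
  · refine ⟨D.src e, by tauto, fun X hX haX => ?_⟩
    have := @hX (D.tgt e)
    tauto

theorem exists_two_attached_edges {A Y : Finset α}
    (hA : #{e ∈ D.cut A | D.src e ∉ Y ∧ D.tgt e ∉ Y} ≤ 1) (hA3 : 3 ≤ #(D.cut A)) :
    ∃ e₁ ∈ D.cut A, ∃ e₂ ∈ D.cut A, e₁ ≠ e₂ ∧ (D.src e₁ ∈ Y ∨ D.tgt e₁ ∈ Y) ∧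
      (D.src e₂ ∈ Y ∨ D.tgt e₂ ∈ Y) := by
  have hsplit := card_filter_add_card_filter_not (s := D.cut A)
    (fun e => D.src e ∉ Y ∧ D.tgt e ∉ Y)
  obtain ⟨e₁, h₁, e₂, h₂, hne⟩ :=
    one_lt_card.1 (show 1 < #{e ∈ D.cut A | ¬(D.src e ∉ Y ∧ D.tgt e ∉ Y)} by omega)
  simp only [mem_filter] at h₁ h₂
  exact ⟨e₁, h₁.1, e₂, h₂.1, hne, by tauto, by tauto⟩

end Seymour

section PartialFlow

variable {α β : Type*} [Fintype β] (D : OrientedMultigraph α β)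

/-- A stage of Seymour's construction, in which the vertices of `Y` are still to be treated:
the pair `(F, φ)` is nowhere zero on the edges not inside `Y`, and `φ` has boundary `q` off `Y`. -/
structure IsPartialSixFlow (q : α → ZMod 3) (Y : Finset α) (F : β → ZMod 2) (φ : β → ZMod 3) :
    Prop where
  three_eq_zero : ∀ e ∈ D.inside Y, φ e = 0
  two_eq_zero : ∀ e, D.src e ∈ Y ∨ D.tgt e ∈ Y → F e = 0
  ne_zero : ∀ e ∉ D.inside Y, F e ≠ 0 ∨ φ e ≠ 0
  boundary_eq : ∀ w ∉ Y, D.boundary φ w = q w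

variable {D}

-- The support of `FX` connects `X`, so the boundary of `φ` on `X` is corrected along edges on
-- which `F + FX` is already nonzero.
theorem IsPartialSixFlow.extend {q : α → ZMod 3} {X Y : Finset α} {F FX : β → ZMod 2}
    {φ c : β → ZMod 3} (hφ : D.IsPartialSixFlow q (Y ∪ X) F φ) (hXY : Disjoint X Y)
    (hFX : ∀ e ∉ D.inside X, FX e = 0) (hX : D.Connects {e | FX e ≠ 0} X)
    (hc : ∀ e, c e ≠ 0 ↔ e ∈ D.inside (Y ∪ X) ∧ e ∉ D.inside Y)
    (hsum : ∑ v ∈ X, D.boundary c v = ∑ v ∈ X, (q v - D.boundary φ v)) :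
    ∃ φ', D.IsPartialSixFlow q Y (F + FX) φ' := by
  set r : α → ZMod 3 := (X : Set α).indicator (q - D.boundary φ - D.boundary c) with hr
  have hrX : r ∈ D.boundaries (ZMod 3) ({e | FX e ≠ 0} ∩ D.inside X) := by
    refine hX.mem_boundaries_of_sum_eq_zero (fun v hv => by simp [hr, hv]) ?_
    rw [hr, sum_congr rfl fun v hv => Set.indicator_of_mem (mem_coe.2 hv) _]
    simp [hsum]
  obtain ⟨ψ, hψ, hψr⟩ := mem_boundaries.1 hrX
  have hψ0 : ∀ e, FX e = 0 → ψ e = 0 := fun e he => hψ e (by simp [he])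
  have hc0 : ∀ e ∉ D.inside (Y ∪ X), c e = 0 := fun e he => not_not.1 (mt (hc e).1 (by tauto))
  have hFX_Y : ∀ e, D.src e ∈ Y ∨ D.tgt e ∈ Y → FX e = 0 := fun e he => hFX e fun heX => by
    rw [mem_inside] at heX
    exact he.elim (disjoint_left.1 hXY heX.1) (disjoint_left.1 hXY heX.2)
  refine ⟨φ + c + ψ, fun e he => ?_, fun e he => ?_, fun e he => ?_, fun w hw => ?_⟩
  · have hcY : c e = 0 := not_not.1 (mt (hc e).1 (by tauto))
    rw [mem_inside] at he
    simp [hφ.three_eq_zero e (by simp [he]), hcY, hψ0 e (hFX_Y e (.inl he.1))]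
  · simp [hφ.two_eq_zero e (by simp only [mem_union]; tauto), hFX_Y e he]
  · by_cases hFXe : FX e = 0
    · by_cases heYX : e ∈ D.inside (Y ∪ X)
      · exact .inr (by simpa [hφ.three_eq_zero e heYX, hψ0 e hFXe] using (hc e).2 ⟨heYX, he⟩)
      · simpa [hFXe, hψ0 e hFXe, hc0 e heYX] using hφ.ne_zero e heYX
    · have heX := D.mem_inside.1 (not_imp_comm.1 (hFX e) hFXe)
      exact .inl (by simpa [hφ.two_eq_zero e (by simp [heX])] using hFXe)
  · rw [map_add, map_add, hψr]
    by_cases hwX : w ∈ X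
    · simp [hr, hwX]
    · have hwYX : w ∉ Y ∪ X := by simp [hw, hwX]
      simp [hr, hwX, hφ.boundary_eq w hwYX, boundary_eq_zero_of_notMem hc0 hwYX]

theorem exists_attached_piece [Finite α] {Y Z : Finset α} (hYZ : ∀ w, w ∈ Z ↔ w ∉ Y)
    (hZ : Z.Nonempty) (hcut : ∀ B ⊆ Z, B.Nonempty → 3 ≤ #(D.cut B)) :
    ∃ X, X.Nonempty ∧ Disjoint X Y ∧
      (∃ F : β → ZMod 2, (∀ e ∉ D.inside X, F e = 0) ∧ D.Connects {e | F e ≠ 0} X ∧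
        D.boundary F = 0) ∧
      ∃ e₁ ∈ D.cut X, ∃ e₂ ∈ D.cut X, e₁ ≠ e₂ ∧ e₁ ∈ D.inside (Y ∪ X) ∧ e₂ ∈ D.inside (Y ∪ X) := by
  obtain ⟨A, hAZ, hA0, hA1, hA⟩ := D.exists_twoEdgeConnectedOn hZ
  have hAY : Disjoint A Y := disjoint_left.2 fun w hw => (hYZ w).1 (hAZ hw)
  have hinside : D.inside Z ∩ D.cut A = {e ∈ D.cut A | D.src e ∉ Y ∧ D.tgt e ∉ Y} := by
    ext e
    simp only [mem_inter, mem_inside, mem_filter, hYZ]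
    tauto
  obtain ⟨e₁, he₁, e₂, he₂, hne, heY₁, heY₂⟩ :=
    exists_two_attached_edges (hinside ▸ hA1) (hcut A hAZ hA0)
  obtain ⟨a₁, ha₁, hattach₁⟩ := exists_attachment hAY he₁ heY₁
  obtain ⟨a₂, ha₂, hattach₂⟩ := exists_attachment hAY he₂ heY₂
  obtain ⟨X, hXA, haX₁, -, haX₂, F, hF, hFX, hFdemand⟩ := hA.exists_connected_support ha₁ ha₁ ha₂
  obtain ⟨hX₁, hYX₁⟩ := hattach₁ X hXA haX₁
  obtain ⟨hX₂, hYX₂⟩ := hattach₂ X hXA haX₂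
  refine ⟨X, ⟨a₁, haX₁⟩, disjoint_of_subset_left hXA hAY, ⟨F, hF, hFX, ?_⟩,
    e₁, hX₁, e₂, hX₂, hne, hYX₁, hYX₂⟩
  ext w
  rw [hFdemand, Pi.zero_apply, ZMod.intCast_zmod_eq_zero_iff_dvd]
  simp only [demand, Pi.add_apply, Pi.sub_apply, Pi.single_apply]
  split_ifs <;> norm_num

theorem exists_isPartialSixFlow [Finite α] (q : α → ZMod 3) {Y : Finset α}
    (hY : ∀ B : Finset α, Disjoint B Y → B.Nonempty → 3 ≤ #(D.cut B)) :
    ∃ F φ, D.IsPartialSixFlow q Y F φ ∧ D.boundary F = 0 := by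
  have := Fintype.ofFinite α
  induction hn : #Yᶜ using Nat.strong_induction_on generalizing Y with
  | _ n ih =>
  rcases Yᶜ.eq_empty_or_nonempty with hYc | hYc
  · rw [compl_eq_empty_iff] at hYc
    subst hYc
    exact ⟨0, 0, ⟨by simp, by simp, by simp, by simp⟩, map_zero _⟩
  obtain ⟨X, hX0, hXY, ⟨FX, hFX, hXconn, hFX0⟩, e₁, he₁, e₂, he₂, hne, hYX₁, hYX₂⟩ :=
    exists_attached_piece (Y := Y) (by simp) hYc
      fun B hB => hY B (disjoint_compl_left.mono_left hB)
  have hlt : #(Y ∪ X)ᶜ < n := by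
    rw [← hn]
    refine card_lt_card (compl_ssubset_compl.2 ⟨subset_union_left, fun h => ?_⟩)
    obtain ⟨x, hx⟩ := hX0
    exact disjoint_left.1 hXY hx (h (mem_union_right Y hx))
  obtain ⟨F, φ, hφ, hF0⟩ := ih _ hlt
    (fun B hB => hY B (disjoint_of_subset_right subset_union_left hB)) rfl
  have notMem_inside : ∀ e ∈ D.cut X, e ∉ D.inside Y := fun e he heY => by
    have hs := @disjoint_left.1 hXY (D.src e)
    have ht := @disjoint_left.1 hXY (D.tgt e)
    simp only [mem_cut, mem_inside] at he heY
    tauto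
  obtain ⟨c, hc, hsum⟩ := exists_support_eq_of_mem_cut
    (S := {e | e ∈ D.inside (Y ∪ X) ∧ e ∉ D.inside Y}) hne ⟨hYX₁, notMem_inside e₁ he₁⟩
    ⟨hYX₂, notMem_inside e₂ he₂⟩ he₁ he₂ (∑ v ∈ X, (q v - D.boundary φ v))
  obtain ⟨φ', hφ'⟩ := hφ.extend hXY hFX hXconn hc hsum
  exact ⟨F + FX, φ', hφ', by rw [map_add, hF0, hFX0, add_zero]⟩

theorem exists_sixFlow_of_two_le_card_cut [Fintype α] {u v x : α}
    (h2 : ∀ X : Finset α, X.Nonempty → X ≠ univ → 2 ≤ #(D.cut X))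
    (h3 : ∀ X : Finset α, X.Nonempty → X ≠ univ → ∑ w ∈ X, demand u v x w = 0 → 3 ≤ #(D.cut X)) :
    ∃ f, D.IsNowhereZeroFlow 6 (demand u v x) f := by
  have huniv : D.TwoEdgeConnectedOn univ := fun B hB hB0 => by
    rw [show D.inside univ = univ by ext e; simp, univ_inter]
    exact h2 B hB0 hB.ne
  obtain ⟨X, -, huX, hvX, hxX, FX, hFX, hXconn, hFXdemand⟩ :=
    huniv.exists_connected_support (mem_univ u) (mem_univ v) (mem_univ x)
  have demand_eq_zero : ∀ w ∉ X, demand u v x w = 0 := fun w hw => by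
    have : w ≠ u ∧ w ≠ v ∧ w ≠ x := by grind
    simp [demand, this]
  obtain ⟨F, φ, hφ, hF0⟩ := D.exists_isPartialSixFlow (fun w => (demand u v x w : ZMod 3))
    (Y := X) fun B hB hB0 => by
      refine h3 B hB0 (fun h => disjoint_left.1 hB (h ▸ mem_univ u) huX) ?_
      exact sum_eq_zero fun w hw => demand_eq_zero w (disjoint_left.1 hB hw)
  set c : β → ZMod 3 := fun e => if e ∈ D.inside X then 1 else 0 with hc
  have hc0 : ∑ w ∈ X, D.boundary c w = 0 := D.sum_boundary_eq_zero fun e he => by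
    rw [mem_cut] at he
    exact if_neg (by rw [mem_inside]; tauto)
  have hφX : ∑ w ∈ X, (demand u v x w - D.boundary φ w : ZMod 3) = 0 := by
    rw [sum_subset (subset_univ X) fun w _ hw => by simp [hφ.boundary_eq w hw], sum_sub_distrib,
      sum_univ_boundary, ← Int.cast_sum, sum_univ_demand]
    simp
  obtain ⟨φ', hφ'⟩ := IsPartialSixFlow.extend (Y := ∅) (c := c) (by rwa [empty_union])
    (disjoint_empty_right X) hFX hXconn (fun e => by simp [hc]) (by rw [hc0, hφX])
  refine exists_isNowhereZeroFlow_of_zmod_mul (m := 2) (n := 3) (by norm_num)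
    (sum_univ_demand u v x) (fun Z => ?_) (fun e => hφ'.ne_zero e (by simp)) (fun w => ?_)
    (fun w => hφ'.boundary_eq w (by simp))
  · exact (le_of_abs_le (abs_sum_demand_le u v x Z)).trans_lt (by norm_num)
  · rw [map_add, hF0, zero_add, hFXdemand]

end PartialFlow

section Contraction

variable {α β γ : Type*}

/-- The image of `D` under the vertex map `π`; contracted edges remain as loops. -/
def map (D : OrientedMultigraph α β) (π : α → γ) : OrientedMultigraph γ β where
  src := π ∘ D.src
  tgt := π ∘ D.tgt

theorem boundary_map [Fintype α] [Fintype β] (D : OrientedMultigraph α β) (π : α → γ)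
    {M : Type*} [AddCommGroup M] (f : β → M) (w : γ) :
    (D.map π).boundary f w = ∑ v with π v = w, D.boundary f v := by
  rw [sum_boundary, boundary_apply]
  exact sum_congr rfl fun e _ => by congr 2 <;> simp [map]

theorem sum_fiber_demand [Fintype α] (π : α → γ) (u v x : α) (w : γ) :
    ∑ z with π z = w, demand u v x z = demand (π u) (π v) (π x) w := by
  rw [sum_demand]
  simp only [demand, Pi.add_apply, Pi.sub_apply, Pi.single_apply, mem_filter_univ,
    eq_comm (a := w)]

/-- Identifies the vertex `b` with `a`, removing `b` from the vertex set. -/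
noncomputable def merge {a b : α} (hab : a ≠ b) (w : α) : {w // w ≠ b} :=
  if hw : w = b then ⟨a, hab⟩ else ⟨w, hw⟩

theorem merge_eq_merge_iff {a b v w : α} (hab : a ≠ b) (hva : v ≠ a) (hvb : v ≠ b) :
    merge hab w = merge hab v ↔ w = v := by
  unfold merge
  grind

theorem demand_merge {a b w : α} (hab : a ≠ b) (hwa : w ≠ a) (hwb : w ≠ b) (u v x : α) :
    demand (merge hab u) (merge hab v) (merge hab x) (merge hab w) = demand u v x w := by
  simp [demand, Pi.single_apply, eq_comm (a := merge hab w), merge_eq_merge_iff hab hwa hwb,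
    eq_comm (a := w)]

theorem boundary_map_merge [Fintype β] {D : OrientedMultigraph α β} {f : β → ℤ} {a b v : α}
    (hab : a ≠ b) (hva : v ≠ a) (hvb : v ≠ b) :
    (D.map (merge hab)).boundary f (merge hab v) = D.boundary f v := by
  simp [boundary_apply, map, merge_eq_merge_iff hab hva hvb]

end Contraction

section SmallCuts

variable {α β : Type*} [Fintype β] {D : OrientedMultigraph α β}

variable (D) in
/-- There is a function that satisfies the conditions of a nowhere-zero `k`-flow with net
outflow `p`, except perhaps Kirchhoff's law at `a` and `b`. -/
def HasNowhereZeroFlowOff (k : ℤ) (p : α → ℤ) (a b : α) : Prop :=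
  ∃ f : β → ℤ, (∀ e, f e ≠ 0 ∧ |f e| < k) ∧ ∀ w, w ≠ a → w ≠ b → D.boundary f w = p w

theorem exists_isNowhereZeroFlow_of_cut_eq_empty [Fintype α] {k : ℤ} {p : α → ℤ} {a b : α}
    (hab : D.HasNowhereZeroFlowOff k p a b) {A : Finset α} (hA : D.cut A = ∅) (ha : a ∈ A)
    (hb : b ∉ A) (hp : ∑ w, p w = 0) (hpA : ∑ w ∈ A, p w = 0) :
    ∃ f, D.IsNowhereZeroFlow k p f := by
  obtain ⟨f, hf0, hf⟩ := hab
  have hfa : D.boundary f a - p a = 0 := by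
    have hsum : ∑ w ∈ A, (D.boundary f w - p w) = 0 := by
      rw [sum_sub_distrib, hpA, D.sum_boundary_eq_zero (by simp [hA]), sub_zero]
    rwa [sum_eq_single_of_mem a ha fun w hw hwa =>
      sub_eq_zero.2 (hf w hwa (ne_of_mem_of_not_mem hw hb))] at hsum
  have hfab : (D.boundary f a - p a) + (D.boundary f b - p b) = 0 := by
    rw [← Fintype.sum_eq_add a b (ne_of_mem_of_not_mem ha hb) fun w hw =>
      sub_eq_zero.2 (hf w hw.1 hw.2), sum_sub_distrib, hp, sum_univ_boundary, sub_zero]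
  refine ⟨f, hf0, funext fun w => ?_⟩
  by_cases hwa : w = a
  · subst hwa; omega
  by_cases hwb : w = b
  · subst hwb; omega
  exact hf w hwa hwb

theorem exists_boundary_update_eq [Fintype α] {p : α → ℤ} {f : β → ℤ} {e : β}
    (he : D.src e ≠ D.tgt e) (hp : ∑ w, p w = 0)
    (hf : ∀ w, w ≠ D.src e → w ≠ D.tgt e → D.boundary f w = p w) :
    ∃ k, D.boundary (Function.update f e k) = p := by
  set m := p (D.src e) - D.boundary f (D.src e) with hm
  have hsum : m + (p (D.tgt e) - D.boundary f (D.tgt e)) = 0 := by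
    rw [hm, ← Fintype.sum_eq_add _ _ he fun w hw => sub_eq_zero.2 (hf w hw.1 hw.2).symm,
      sum_sub_distrib, hp, sum_univ_boundary, sub_zero]
  have hupdate : Function.update f e (f e + m) = f + Pi.single e m := by
    ext e'
    by_cases h : e' = e
    · subst h; simp
    · simp [h]
  refine ⟨f e + m, funext fun w => ?_⟩
  rw [hupdate, map_add, boundary_single, Pi.add_apply, Pi.sub_apply]
  by_cases hs : w = D.src e
  · subst hs; simp [he, hm]
  by_cases ht : w = D.tgt e
  · subst ht
    rw [Pi.single_eq_of_ne he.symm, Pi.single_eq_same]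
    omega
  simp [hs, ht, hf w hs ht]

theorem ne_zero_and_abs_lt_update {ι : Type*} {f : ι → ℤ} {k m : ℤ} {i : ι}
    (hf : ∀ j, f j ≠ 0 ∧ |f j| < k) (hm : m ≠ 0 ∧ |m| < k) (j : ι) :
    Function.update f i m j ≠ 0 ∧ |Function.update f i m j| < k := by
  by_cases h : j = i
  · subst h; simpa using hm
  · simpa [h] using hf j

theorem src_ne_tgt_of_mem_cut {A : Finset α} {e : β} (he : e ∈ D.cut A) : D.src e ≠ D.tgt e :=
  fun h => by simp [h] at he

theorem exists_isNowhereZeroFlow_of_cut_eq_singleton [Fintype α] {k : ℤ} {p : α → ℤ} {e₀ : β}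
    (he₀ : D.HasNowhereZeroFlowOff k p (D.src e₀) (D.tgt e₀)) {A : Finset α}
    (hA : D.cut A = {e₀}) (hp : ∑ w, p w = 0) (hpA : ∑ w ∈ A, p w ≠ 0)
    (hpAk : |∑ w ∈ A, p w| < k) : ∃ f, D.IsNowhereZeroFlow k p f := by
  obtain ⟨f, hf0, hf⟩ := he₀
  obtain ⟨m, hm⟩ := exists_boundary_update_eq (src_ne_tgt_of_mem_cut (A := A) (by simp [hA])) hp hf
  have habs := D.abs_sum_boundary_of_cut_eq_singleton (f := Function.update f e₀ m) hA
  rw [hm, Function.update_self] at habs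
  refine ⟨_, ne_zero_and_abs_lt_update hf0 ⟨?_, habs ▸ hpAk⟩, hm⟩
  exact abs_ne_zero.1 (habs ▸ abs_ne_zero.2 hpA)

theorem exists_isNowhereZeroFlow_of_cut_eq_pair [Fintype α] {k : ℤ} {p : α → ℤ} {e₀ e₁ : β}
    (he₀ : D.HasNowhereZeroFlowOff k p (D.src e₀) (D.tgt e₀)) (hne : e₀ ≠ e₁) {A : Finset α}
    (hA : D.cut A = {e₀, e₁}) (hp : ∑ w, p w = 0) (hpA : ∑ w ∈ A, p w = 0) :
    ∃ f, D.IsNowhereZeroFlow k p f := by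
  obtain ⟨f, hf0, hf⟩ := he₀
  obtain ⟨m, hm⟩ := exists_boundary_update_eq (src_ne_tgt_of_mem_cut (A := A) (by simp [hA])) hp hf
  have habs := D.abs_eq_abs_of_cut_eq_pair (f := Function.update f e₀ m) hne hA (by rw [hm, hpA])
  rw [Function.update_self, Function.update_of_ne hne.symm] at habs
  refine ⟨_, ne_zero_and_abs_lt_update hf0 ⟨?_, habs ▸ (hf0 e₁).2⟩, hm⟩
  exact abs_ne_zero.1 (habs ▸ abs_ne_zero.2 (hf0 e₁).1)

theorem exists_small_cut [Fintype α] {u v x : α}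
    (h : ¬∃ f, D.IsNowhereZeroFlow 6 (demand u v x) f) :
    ∃ A : Finset α, A.Nonempty ∧ A ≠ univ ∧
      (#(D.cut A) ≤ 1 ∨ #(D.cut A) = 2 ∧ ∑ w ∈ A, demand u v x w = 0) := by
  by_contra! hcut
  refine h (exists_sixFlow_of_two_le_card_cut (fun X hX hX' => (hcut X hX hX').1) ?_)
  exact fun X hX hX' hsum => lt_of_le_of_ne (hcut X hX hX').1
    fun h => (hcut X hX hX').2 h.symm hsum

theorem exists_sixFlow_of_small_cut [Fintype α] {u v x : α} {g : β → ℤ} {c : ℤ} (hc : c ≠ 0)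
    (hg0 : ∀ e, g e ≠ 0) (hg : D.boundary g = c • demand u v x)
    (hmerge : ∀ a b, a ≠ b → D.HasNowhereZeroFlowOff 6 (demand u v x) a b) {A : Finset α}
    (hA0 : A.Nonempty) (hA : A ≠ univ)
    (hcut : #(D.cut A) ≤ 1 ∨ #(D.cut A) = 2 ∧ ∑ w ∈ A, demand u v x w = 0) :
    ∃ f, D.IsNowhereZeroFlow 6 (demand u v x) f := by
  have hgA : ∑ w ∈ A, D.boundary g w = c * ∑ w ∈ A, demand u v x w := by simp [hg, mul_sum]
  have hmerge_cut : ∀ e ∈ D.cut A,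
      D.HasNowhereZeroFlowOff 6 (demand u v x) (D.src e) (D.tgt e) :=
    fun e he => hmerge _ _ (src_ne_tgt_of_mem_cut he)
  have hdemand := sum_univ_demand u v x
  have hcases : #(D.cut A) = 0 ∨ #(D.cut A) = 1 ∨
      #(D.cut A) = 2 ∧ ∑ w ∈ A, demand u v x w = 0 := by omega
  rcases hcases with h0 | h1 | ⟨h2, hsum⟩
  · obtain ⟨a, ha⟩ := hA0
    obtain ⟨b, hb⟩ : ∃ b, b ∉ A := by simpa [eq_univ_iff_forall] using hA
    rw [card_eq_zero] at h0
    rw [D.sum_boundary_eq_zero (by simp [h0]), eq_comm, mul_eq_zero] at hgA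
    exact exists_isNowhereZeroFlow_of_cut_eq_empty (hmerge a b (ne_of_mem_of_not_mem ha hb)) h0
      ha hb hdemand (hgA.resolve_left hc)
  · obtain ⟨e₀, he₀⟩ := card_eq_one.1 h1
    refine exists_isNowhereZeroFlow_of_cut_eq_singleton (hmerge_cut e₀ (by simp [he₀])) he₀
      hdemand (fun hsum => hg0 e₀ ?_) ((abs_sum_demand_le u v x A).trans_lt (by norm_num))
    rw [← abs_eq_zero, ← D.abs_sum_boundary_of_cut_eq_singleton he₀, hgA, hsum, mul_zero, abs_zero]
  · obtain ⟨e₀, e₁, hne, he₀₁⟩ := card_eq_two.1 h2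
    exact exists_isNowhereZeroFlow_of_cut_eq_pair (hmerge_cut e₀ (by simp [he₀₁])) hne he₀₁
      hdemand hsum

theorem boundary_map_eq_smul_demand [Finite α] {γ : Type*} (π : α → γ) {u v x : α} {g : β → ℤ}
    {c : ℤ} (hg : D.boundary g = c • demand u v x) :
    (D.map π).boundary g = c • demand (π u) (π v) (π x) := by
  have := Fintype.ofFinite α
  ext w
  simp only [boundary_map, hg, Pi.smul_apply, ← smul_sum, sum_fiber_demand]

-- A counterexample has a small cut, and stays a counterexample after a contraction there.
theorem exists_sixFlow_of_boundary_eq_smul_demand [Finite α] {u v x : α} {g : β → ℤ} {c : ℤ}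
    (hc : c ≠ 0) (hg0 : ∀ e, g e ≠ 0) (hg : D.boundary g = c • demand u v x) :
    ∃ f, D.IsNowhereZeroFlow 6 (demand u v x) f := by
  induction hn : Nat.card α using Nat.strong_induction_on generalizing α with
  | _ n ih =>
  have := Fintype.ofFinite α
  by_contra hno
  obtain ⟨A, hA0, hA, hcut⟩ := exists_small_cut hno
  refine hno (exists_sixFlow_of_small_cut hc hg0 hg (fun a b hab => ?_) hA0 hA hcut)
  obtain ⟨f, hf0, hf⟩ := ih (Nat.card {w // w ≠ b})
    (hn ▸ Finite.card_subtype_lt (x := b) (not_not.2 rfl))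
    (boundary_map_eq_smul_demand (merge hab) hg) rfl
  refine ⟨f, hf0, fun w hwa hwb => ?_⟩
  rw [← boundary_map_merge hab hwa hwb, hf, demand_merge hab hwa hwb]

end SmallCuts

section Bridge

variable {α β : Type*} [Fintype β] {D : OrientedMultigraph α β}

theorem boundary_ite_src_mem {f₁ f₂ : β → ℤ} {A : Finset α} {w : α}
    (hw : ∀ e ∈ D.cut A, w ≠ D.src e ∧ w ≠ D.tgt e) :
    D.boundary (fun e => if D.src e ∈ A then f₁ e else f₂ e) w =
      if w ∈ A then D.boundary f₁ w else D.boundary f₂ w := by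
  simp only [boundary_apply]
  split_ifs with hwA <;> refine sum_congr rfl fun e _ => ?_ <;> grind [mem_cut]

/-- Contracts the complement of `A` to the vertex `x`. -/
noncomputable def collapse (A : Finset α) (x w : α) : α :=
  if w ∈ A then w else x

theorem boundary_map_collapse {f : β → ℤ} {A : Finset α} {x w : α} (hx : x ∉ A) (hw : w ∈ A) :
    (D.map (collapse A x)).boundary f w = D.boundary f w := by
  have h (z : α) : collapse A x z = w ↔ z = w := by unfold collapse; grind
  simp [boundary_apply, map, h]

theorem boundary_map_collapse_eq_zero {f : β → ℤ} {A : Finset α} {x w : α} (hwx : w ≠ x)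
    (hw : w ∉ A) : (D.map (collapse A x)).boundary f w = 0 := by
  have h (z : α) : collapse A x z ≠ w := by unfold collapse; grind
  simp [boundary_apply, map, h]

/-- One unit at each of `u` and `v`: the contribution of a negative edge with ends `u` and `v`
to the net outflow along the positive edges. -/
noncomputable def ends (u v : α) : α → ℤ :=
  Pi.single u 1 + Pi.single v 1

theorem sum_ends (u v : α) (X : Finset α) :
    ∑ w ∈ X, ends u v w = (if u ∈ X then 1 else 0) + (if v ∈ X then 1 else 0) := by
  simp [ends, sum_add_distrib, sum_pi_single']

theorem demand_eq_ends {u v x w : α} (hw : w ≠ x) : demand u v x w = ends u v w := by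
  simp [demand, ends, hw]

theorem boundary_map_collapse_eq_smul_demand [Finite α] {A : Finset α} {u v x : α} {g : β → ℤ}
    {c : ℤ} (hu : u ∈ A) (hv : v ∈ A) (hx : x ∉ A)
    (hg : ∀ w ∈ A, D.boundary g w = c * ends u v w) :
    (D.map (collapse A x)).boundary g = c • demand u v x := by
  have := Fintype.ofFinite α
  have hoff (w : α) (hwx : w ≠ x) :
      (D.map (collapse A x)).boundary g w - (c • demand u v x) w = 0 := by
    rw [sub_eq_zero, Pi.smul_apply, demand_eq_ends hwx, smul_eq_mul]
    by_cases hw : w ∈ A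
    · rw [boundary_map_collapse hx hw, hg w hw]
    · simp [boundary_map_collapse_eq_zero hwx hw, ends, ne_of_mem_of_not_mem hu hw |>.symm,
        ne_of_mem_of_not_mem hv hw |>.symm]
  have hat : (D.map (collapse A x)).boundary g x - (c • demand u v x) x = 0 := by
    rw [← Fintype.sum_eq_single x hoff, sum_sub_distrib, sum_univ_boundary]
    simp [← mul_sum, sum_univ_demand]
  ext w
  exact sub_eq_zero.1 (if hwx : w = x then hwx ▸ hat else hoff w hwx)

theorem exists_sixFlow_on_side [Finite α] {A : Finset α} {u v x : α} {g : β → ℤ} {c : ℤ}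
    (hc : c ≠ 0) (hg0 : ∀ e, g e ≠ 0) (hu : u ∈ A) (hv : v ∈ A) (hx : x ∉ A)
    (hg : ∀ w ∈ A, D.boundary g w = c * ends u v w) :
    ∃ f : β → ℤ, (∀ e, f e ≠ 0 ∧ |f e| < 6) ∧ ∀ w ∈ A, D.boundary f w = ends u v w := by
  obtain ⟨f, hf0, hf⟩ := exists_sixFlow_of_boundary_eq_smul_demand hc hg0
    (boundary_map_collapse_eq_smul_demand hu hv hx hg)
  refine ⟨f, hf0, fun w hw => ?_⟩
  rw [← boundary_map_collapse hx hw, hf, demand_eq_ends (ne_of_mem_of_not_mem hw hx)]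

theorem exists_sixFlow_of_cut_eq_singleton [Finite α] {A : Finset α} {e₀ : β}
    (hA : D.cut A = {e₀}) {u₁ v₁ u₂ v₂ : α} (hu₁ : u₁ ∈ A) (hv₁ : v₁ ∈ A) (hu₂ : u₂ ∉ A)
    (hv₂ : v₂ ∉ A) {g : β → ℤ} {c : ℤ} (hc : c ≠ 0) (hg0 : ∀ e, g e ≠ 0)
    (hg : D.boundary g = c • (ends u₁ v₁ - ends u₂ v₂)) :
    ∃ f, D.IsNowhereZeroFlow 6 (ends u₁ v₁ - ends u₂ v₂) f := by
  have := Fintype.ofFinite α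
  have hends₂ {w : α} (hw : w ∈ A) : ends u₂ v₂ w = 0 := by
    simp [ends, ne_of_mem_of_not_mem hw hu₂, ne_of_mem_of_not_mem hw hv₂]
  have hends₁ {w : α} (hw : w ∉ A) : ends u₁ v₁ w = 0 := by
    simp [ends, (ne_of_mem_of_not_mem hu₁ hw).symm, (ne_of_mem_of_not_mem hv₁ hw).symm]
  obtain ⟨f₁, hf₁0, hf₁⟩ := exists_sixFlow_on_side (D := D) hc hg0 hu₁ hv₁ hu₂
    fun w hw => by simp [hg, hends₂ hw]
  obtain ⟨f₂, hf₂0, hf₂⟩ := exists_sixFlow_on_side (D := D) (A := Aᶜ) (x := u₁)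
    (neg_ne_zero.2 hc) hg0 (mem_compl.2 hu₂) (mem_compl.2 hv₂) (by simpa)
    fun w hw => by simp [hg, hends₁ (mem_compl.1 hw)]
  refine exists_isNowhereZeroFlow_of_cut_eq_singleton
    ⟨fun e => if D.src e ∈ A then f₁ e else (-f₂) e, fun e => ?_, fun w hws hwt => ?_⟩ hA ?_ ?_ ?_
  · dsimp only
    split_ifs
    · exact hf₁0 e
    · simpa using hf₂0 e
  · rw [boundary_ite_src_mem (D := D) (A := A) (by simp [hA, hws, hwt])]
    split_ifs with hw
    · simp [hf₁ w hw, hends₂ hw]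
    · simp [hf₂ w (mem_compl.2 hw), hends₁ hw]
  all_goals simp [sum_ends, hu₁, hv₁, hu₂, hv₂]

theorem exists_sixFlow_of_bridge [Finite α] {A : Finset α} {e₀ : β} (hA : D.cut A = {e₀})
    {u₁ v₁ u₂ v₂ : α} (h₁ : u₁ ∈ A ↔ v₁ ∈ A) (h₂ : u₂ ∈ A ↔ v₂ ∈ A) {g : β → ℤ} {c : ℤ}
    (hg0 : ∀ e, g e ≠ 0) (hg : D.boundary g = c • (ends u₁ v₁ - ends u₂ v₂)) :
    ∃ f, D.IsNowhereZeroFlow 6 (ends u₁ v₁ - ends u₂ v₂) f := by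
  have := Fintype.ofFinite α
  have hsum : |c * (∑ w ∈ A, ends u₁ v₁ w - ∑ w ∈ A, ends u₂ v₂ w)| = |g e₀| := by
    rw [← D.abs_sum_boundary_of_cut_eq_singleton hA, hg]
    simp only [Pi.smul_apply, Pi.sub_apply, smul_eq_mul, mul_sum, mul_sub, sum_sub_distrib]
  obtain ⟨hc, hne⟩ := mul_ne_zero_iff.1 (abs_ne_zero.1 (hsum ▸ abs_ne_zero.2 (hg0 e₀)))
  rw [sum_ends, sum_ends] at hne
  by_cases hu₁ : u₁ ∈ A <;> by_cases hu₂ : u₂ ∈ A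
  · simp [hu₁, hu₂, ← h₁, ← h₂] at hne
  · exact exists_sixFlow_of_cut_eq_singleton hA hu₁ (h₁.1 hu₁) hu₂ (mt h₂.2 hu₂) hc hg0 hg
  · refine exists_sixFlow_of_cut_eq_singleton (A := Aᶜ) (e₀ := e₀) ?_ (by simpa) (by simpa [← h₁])
      (by simpa) (by simpa [← h₂]) hc hg0 hg
    ext e
    rw [← hA, mem_cut, mem_cut, mem_compl, mem_compl, not_iff_not (a := _ ∈ _)]
  · simp [hu₁, hu₂, ← h₁, ← h₂] at hne

theorem mem_iff_mem_of_cut_eq_empty {A : Finset α} (hA : D.cut A = ∅) {u₁ v₁ u₂ v₂ : α}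
    {g : β → ℤ} {c : ℤ} (hc : c ≠ 0) (hg : D.boundary g = c • (ends u₁ v₁ - ends u₂ v₂)) :
    (u₁ ∈ A ↔ v₁ ∈ A) ↔ (u₂ ∈ A ↔ v₂ ∈ A) := by
  have hsum : c * (∑ w ∈ A, ends u₁ v₁ w - ∑ w ∈ A, ends u₂ v₂ w) = 0 := by
    rw [← sum_sub_distrib, mul_sum, ← D.sum_boundary_eq_zero (f := g) (X := A)
      (by simp [hA]), hg]
    rfl
  have hcount := (mul_eq_zero.1 hsum).resolve_left hc
  rw [sum_ends, sum_ends] at hcount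
  grind

end Bridge

end OrientedMultigraph

section SignedGraph

open OrientedMultigraph

variable {G : SimpleGraph V} {σ : Sym2 V → ℤ} {τ : V → Sym2 V → ℤ} {φ : Sym2 V → ℤ}

/-- The positive edges of `(G, σ)`, each directed from the first to the second component of a
chosen representative. -/
noncomputable def positivePart (G : SimpleGraph V) (σ : Sym2 V → ℤ) :
    OrientedMultigraph V {e : Sym2 V // e ∈ G.edgeSet ∧ σ e = 1} where
  src e := e.1.out.1
  tgt e := e.1.out.2

theorem positivePart_mk_src_tgt (e : {e : Sym2 V // e ∈ G.edgeSet ∧ σ e = 1}) :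
    s((positivePart G σ).src e, (positivePart G σ).tgt e) = e :=
  e.1.out_eq

theorem positivePart_adj_src_tgt (e : {e : Sym2 V // e ∈ G.edgeSet ∧ σ e = 1}) :
    G.Adj ((positivePart G σ).src e) ((positivePart G σ).tgt e) := by
  rw [← mem_edgeSet, positivePart_mk_src_tgt]
  exact e.2.1

theorem sum_ite_adj_eq_sum_ite_mem [Fintype V] (v : V) (h : Sym2 V → ℤ) :
    (∑ w, if G.Adj v w then h s(v, w) else 0) =
      ∑ e with e ∈ G.edgeSet, if v ∈ e then h e else 0 := by
  rw [← sum_filter, ← sum_filter, filter_filter]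
  refine sum_bij (fun w _ => s(v, w)) (by simp) (fun _ _ _ _ => Sym2.congr_right.1) ?_ (by simp)
  simp only [mem_filter_univ]
  rintro e ⟨he, w, rfl⟩
  exact ⟨w, he, rfl⟩

theorem IsOrientation.sum_positive_eq_neg_boundary [Fintype V] (hτ : IsOrientation G σ τ) (v : V) :
    (∑ e : {e // e ∈ G.edgeSet ∧ σ e = 1}, if v ∈ e.1 then τ v e * φ e else 0) =
      -(positivePart G σ).boundary (fun e => τ ((positivePart G σ).tgt e) e * φ e) v := by
  rw [boundary_apply, ← sum_neg_distrib]
  refine sum_congr rfl fun e _ => ?_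
  have hadj := positivePart_adj_src_tgt e
  have hτe := hτ.2 _ _ hadj
  rw [positivePart_mk_src_tgt, e.2.2] at hτe
  have hmem : v ∈ e.1 ↔ v = (positivePart G σ).src e ∨ v = (positivePart G σ).tgt e := by
    rw [← Sym2.mem_iff, positivePart_mk_src_tgt]
  have hsrc : τ ((positivePart G σ).src e) e = -τ ((positivePart G σ).tgt e) e := by
    rcases hτ.1 ((positivePart G σ).tgt e) e with h | h <;> rw [h] at hτe ⊢ <;> omega
  grind [hadj.ne]

theorem IsOrientation.ite_mem_eq_mul_ends (hτ : IsOrientation G σ τ) {u v : V} (huv : G.Adj u v)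
    (hσ : σ s(u, v) = -1) (w : V) :
    (if w ∈ s(u, v) then τ w s(u, v) * φ s(u, v) else 0) =
      τ u s(u, v) * φ s(u, v) * ends u v w := by
  have hτe := hτ.2 _ _ huv
  have hτv : τ v s(u, v) = τ u s(u, v) := by
    rcases hτ.1 u s(u, v) with h | h <;> rw [h, hσ] at hτe <;> omega
  have hne := huv.ne
  simp only [ends, Sym2.mem_iff, Pi.add_apply, Pi.single_apply]
  grind

theorem IsOrientation.sum_ite_adj_eq [Fintype V] (hτ : IsOrientation G σ τ) (hσ : IsSignature G σ)
    {u₁ v₁ u₂ v₂ : V} (hne : s(u₁, v₁) ≠ s(u₂, v₂))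
    (hN : NegEdges G σ = {s(u₁, v₁), s(u₂, v₂)}) (v : V) :
    (∑ w, if G.Adj v w then τ v s(v, w) * φ s(v, w) else 0) =
      τ u₁ s(u₁, v₁) * φ s(u₁, v₁) * ends u₁ v₁ v + τ u₂ s(u₂, v₂) * φ s(u₂, v₂) * ends u₂ v₂ v -
        (positivePart G σ).boundary (fun e => τ ((positivePart G σ).tgt e) e * φ e) v := by
  have h₁ : s(u₁, v₁) ∈ NegEdges G σ := by simp [hN]
  have h₂ : s(u₂, v₂) ∈ NegEdges G σ := by simp [hN]
  have hneg : ({e | e ∈ G.edgeSet ∧ ¬σ e = 1} : Finset (Sym2 V)) = {s(u₁, v₁), s(u₂, v₂)} := by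
    ext e
    have he : e ∈ NegEdges G σ ↔ e = s(u₁, v₁) ∨ e = s(u₂, v₂) := by simp [hN]
    simp only [mem_filter_univ, mem_insert, mem_singleton, ← he]
    refine and_congr_right fun h => ?_
    rcases hσ e h with h | h <;> simp [h]
  rw [sum_ite_adj_eq_sum_ite_mem v fun e => τ v e * φ e,
    ← sum_filter_add_sum_filter_not _ fun e => σ e = 1, filter_filter, filter_filter, hneg,
    sum_pair hne, hτ.ite_mem_eq_mul_ends h₁.1 h₁.2, hτ.ite_mem_eq_mul_ends h₂.1 h₂.2,
    sum_subtype (F := inferInstance) _ fun e => mem_filter_univ e, hτ.sum_positive_eq_neg_boundary]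
  ring

theorem IsNZFlow.exists_boundary_eq_smul [Fintype V] {k : ℤ} (hf : IsNZFlow G σ k τ φ)
    (hσ : IsSignature G σ) {u₁ v₁ u₂ v₂ : V} (hne : s(u₁, v₁) ≠ s(u₂, v₂))
    (hN : NegEdges G σ = {s(u₁, v₁), s(u₂, v₂)}) :
    ∃ (g : {e // e ∈ G.edgeSet ∧ σ e = 1} → ℤ) (c : ℤ), c ≠ 0 ∧ (∀ e, g e ≠ 0) ∧
      (positivePart G σ).boundary g = c • (ends u₁ v₁ - ends u₂ v₂) := by
  obtain ⟨⟨hτ, hφ⟩, hφ0⟩ := hf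
  have hτφ (v : V) {e : Sym2 V} (he : e ∈ G.edgeSet) : τ v e * φ e ≠ 0 :=
    mul_ne_zero (by rcases hτ.1 v e with h | h <;> simp [h]) (abs_pos.1 (hφ0 e he).1)
  have h₁ : s(u₁, v₁) ∈ NegEdges G σ := by simp [hN]
  refine ⟨_, _, hτφ u₁ h₁.1, fun e => hτφ ((positivePart G σ).tgt e) e.2.1, ?_⟩
  have hg (v : V) := sub_eq_zero.1 ((hτ.sum_ite_adj_eq hσ hne hN v).symm.trans (hφ v))
  have hopposite : τ u₂ s(u₂, v₂) * φ s(u₂, v₂) = -(τ u₁ s(u₁, v₁) * φ s(u₁, v₁)) := by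
    have hsum := sum_congr rfl fun v (_ : v ∈ univ) => hg v
    simp only [sum_univ_boundary, sum_add_distrib, ← mul_sum, sum_ends, mem_univ, if_true] at hsum
    omega
  ext v
  rw [← hg v, hopposite, Pi.smul_apply, Pi.sub_apply, smul_eq_mul]
  ring

theorem exists_isNZFlow_of_isNowhereZeroFlow [Fintype V] (hσ : IsSignature G σ)
    {u₁ v₁ u₂ v₂ : V} (hne : s(u₁, v₁) ≠ s(u₂, v₂))
    (hN : NegEdges G σ = {s(u₁, v₁), s(u₂, v₂)}) {k : ℤ} (hk : 1 < k)
    {f : {e // e ∈ G.edgeSet ∧ σ e = 1} → ℤ}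
    (hf : (positivePart G σ).IsNowhereZeroFlow k (ends u₁ v₁ - ends u₂ v₂) f) :
    ∃ τ φ, IsNZFlow G σ k τ φ ∧ φ s(u₁, v₁) = 1 ∧ φ s(u₂, v₂) = 1 := by
  have h₁ : s(u₁, v₁) ∈ NegEdges G σ := by simp [hN]
  have h₂ : s(u₂, v₂) ∈ NegEdges G σ := by simp [hN]
  let φ (e : Sym2 V) : ℤ := if h : e ∈ G.edgeSet ∧ σ e = 1 then f ⟨e, h⟩ else 1
  let τ (v : V) (e : Sym2 V) : ℤ :=
    if σ e = 1 then if v = e.out.2 then 1 else -1 else if e = s(u₁, v₁) then 1 else -1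
  have hφ₁ : φ s(u₁, v₁) = 1 := by simp [φ, h₁.2]
  have hφ₂ : φ s(u₂, v₂) = 1 := by simp [φ, h₂.2]
  have hτ : IsOrientation G σ τ := by
    refine ⟨fun v e => by grind, fun u v huv => ?_⟩
    rcases hσ s(u, v) huv with h | h
    · have hout : s(u, v).out.2 = u ∨ s(u, v).out.2 = v := Sym2.mem_iff.1 (Sym2.out_snd_mem _)
      grind [huv.ne]
    · grind
  have hτφ : (fun e : {e // e ∈ G.edgeSet ∧ σ e = 1} =>
      τ ((positivePart G σ).tgt e) e * φ e) = f := by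
    ext e
    simp [τ, φ, e.2, positivePart]
  refine ⟨τ, φ, ⟨⟨hτ, fun v => ?_⟩, fun e he => ?_⟩, hφ₁, hφ₂⟩
  · rw [hτ.sum_ite_adj_eq hσ hne hN, hτφ, hf.2]
    simp [hφ₁, hφ₂, τ, h₁.2, h₂.2, hne.symm]
  · by_cases h : σ e = 1
    · simpa [φ, he, h] using hf.1 ⟨e, he, h⟩
    · simp [φ, h, hk]

theorem exists_cut_of_isBridge [Finite V] {b : Sym2 V} (hbr : G.IsBridge b) :
    ∃ A : Finset V, ∀ u v, G.Adj u v → (¬(u ∈ A ↔ v ∈ A) ↔ s(u, v) = b) := by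
  have := Fintype.ofFinite V
  induction b with
  | h x y =>
  refine ⟨({w | (G.deleteEdges {s(x, y)}).Reachable x w} : Finset V), fun u v huv => ?_⟩
  simp only [mem_filter_univ]
  by_cases hb : s(u, v) = s(x, y)
  · have hxy := isBridge_iff.1 hbr
    rcases Sym2.eq_iff.1 hb with ⟨rfl, rfl⟩ | ⟨rfl, rfl⟩ <;> simp [hxy]
  · have hadj : (G.deleteEdges {s(x, y)}).Adj u v := by simp [huv, hb]
    simpa [hb] using ⟨(·.trans hadj.reachable), (·.trans hadj.symm.reachable)⟩

theorem mem_cut_positivePart [Fintype V] {A : Finset V} {b : Sym2 V}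
    (hA : ∀ u v, G.Adj u v → (¬(u ∈ A ↔ v ∈ A) ↔ s(u, v) = b))
    (e : {e // e ∈ G.edgeSet ∧ σ e = 1}) : e ∈ (positivePart G σ).cut A ↔ e = b := by
  rw [mem_cut, hA _ _ (positivePart_adj_src_tgt e), positivePart_mk_src_tgt]

theorem sign_eq_one_of_isBridge [Fintype V] (hσ : IsSignature G σ) {u₁ v₁ u₂ v₂ : V}
    (hne : s(u₁, v₁) ≠ s(u₂, v₂)) (hN : NegEdges G σ = {s(u₁, v₁), s(u₂, v₂)})
    {g : {e // e ∈ G.edgeSet ∧ σ e = 1} → ℤ} {c : ℤ} (hc : c ≠ 0)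
    (hg : (positivePart G σ).boundary g = c • (ends u₁ v₁ - ends u₂ v₂))
    {b : Sym2 V} (hb : b ∈ G.edgeSet) (hbr : G.IsBridge b) : σ b = 1 := by
  refine (hσ b hb).resolve_right fun hneg => ?_
  obtain ⟨A, hA⟩ := exists_cut_of_isBridge hbr
  have h₁ : s(u₁, v₁) ∈ NegEdges G σ := by simp [hN]
  have h₂ : s(u₂, v₂) ∈ NegEdges G σ := by simp [hN]
  have hcut : (positivePart G σ).cut A = ∅ := by
    refine eq_empty_of_forall_notMem fun e he => ?_
    have hpos := e.2.2
    rw [(mem_cut_positivePart hA e).1 he, hneg] at hpos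
    norm_num at hpos
  have hiff := mem_iff_mem_of_cut_eq_empty hcut hc hg
  rw [← not_iff_not, hA _ _ h₁.1, hA _ _ h₂.1] at hiff
  have hbN : b ∈ NegEdges G σ := ⟨hb, hneg⟩
  rw [hN] at hbN
  rcases hbN with rfl | rfl
  · exact hne (hiff.1 rfl).symm
  · exact hne (hiff.2 rfl)

theorem stmt11_general [Fintype V] (G : SimpleGraph V) (σ : Sym2 V → ℤ)
    (hσ : IsSignature G σ) (hadm : FlowAdmissible G σ)
    (n₁ n₂ : Sym2 V) (hne : n₁ ≠ n₂) (hN : NegEdges G σ = {n₁, n₂})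
    (b : Sym2 V) (hb : b ∈ G.edgeSet) (hbr : G.IsBridge b) :
    ∃ τ φ, IsNZFlow G σ 6 τ φ ∧ φ n₁ = 1 ∧ φ n₂ = 1 := by
  induction n₁ with | h u₁ v₁
  induction n₂ with | h u₂ v₂
  obtain ⟨k, τ, φ, hf⟩ := hadm
  obtain ⟨g, c, hc, hg0, hg⟩ := hf.exists_boundary_eq_smul hσ hne hN
  have hbpos : σ b = 1 := sign_eq_one_of_isBridge hσ hne hN hc hg hb hbr
  obtain ⟨A, hA⟩ := exists_cut_of_isBridge hbr
  have hcut : (positivePart G σ).cut A = {⟨b, hb, hbpos⟩} := by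
    ext e
    rw [mem_cut_positivePart hA, mem_singleton, Subtype.ext_iff]
  have hside {u v : V} (h : s(u, v) ∈ NegEdges G σ) : u ∈ A ↔ v ∈ A := by
    refine not_not.1 (mt (hA u v h.1).1 fun heq => ?_)
    have hneg := h.2
    rw [heq, hbpos] at hneg
    norm_num at hneg
  obtain ⟨f, hf⟩ := exists_sixFlow_of_bridge hcut (hside (by simp [hN])) (hside (by simp [hN]))
    hg0 hg
  exact exists_isNZFlow_of_isNowhereZeroFlow hσ hne hN (by norm_num) hf

end SignedGraph

/-- A flow-admissible signed cubic graph with exactly two negative edges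
containing a bridge admits a nowhere-zero 6-flow with value 1 on both negative edges. -/
theorem stmt11 [Fintype V] (G : SimpleGraph V) (σ : Sym2 V → ℤ)
    (hσ : IsSignature G σ) (hcubic : CubicGraph G) (hadm : FlowAdmissible G σ)
    (n₁ n₂ : Sym2 V) (hne : n₁ ≠ n₂) (hN : NegEdges G σ = {n₁, n₂})
    (b : Sym2 V) (hb : b ∈ G.edgeSet) (hbr : G.IsBridge b) :
    ∃ τ φ, IsNZFlow G σ 6 τ φ ∧ φ n₁ = 1 ∧ φ n₂ = 1 :=
  stmt11_general G σ hσ hadm n₁ n₂ hne hN b hb hbr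
end

section
/- Let (G, σ) be a flow-admissible signed cubic graph whose underlying graph G is a critical snark with exactly two negative edges n₁ and n₂. Then (G, σ) admits a nowhere-zero 6-flow (D, φ) with φ(n₁) = φ(n₂) = 1. -/
open Finset SimpleGraph

attribute [local instance] Classical.propDecidable

variable {V : Type}

/-!
Delete `n₁ = x₁y₁`: by criticality the rest has an all-positive nowhere-zero 4-flow. Splitting a
4-flow into two `{0, ±1}`-valued circulations `g`, `h` that cover the graph, and choosing among
`h + 2g`, `g + 2h`, `g - 2h`, we may assume that it has value 1 on `n₂ = x₂y₂`. Deleting `n₂` as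
well leaves a flow `f` from `y₂` to `x₂` with values below 4.

If directed walks along the positive arcs of `f` lead from `x₂` to both ends of `n₁`, then adding
a unit of flow along each of two such paths keeps `f` nowhere zero, raises its values to at most 5,
and lets it be completed by the value 1 on both negative edges. If not, let `S` be the set of
vertices reached from `x₂`. The values of `f` across the cut of `S` are of one sign and add up to 0
or `-1`, so at most one positive edge crosses it, and a flow on `(G, σ)` or on `G` minus one edge
contradicts such a cut.
-/

section SignedChains

variable {σ : Sym2 V → ℤ} {f : V → V → ℤ} {a b u v : V}

/-- The integer chains of a signed graph, recorded on half-edges: `g v w` is the signed amount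
carried by the half-edge at `v` of the edge `vw`. A positive edge makes `g` antisymmetric, a
negative edge makes it symmetric. -/
def signedChains (σ : Sym2 V → ℤ) : Submodule ℤ (V → V → ℤ) where
  carrier := {g | ∀ a b, g b a = -σ s(a, b) * g a b}
  add_mem' hf hg a b := by simp only [Pi.add_apply, hf a b, hg a b]; ring
  zero_mem' a b := by simp
  smul_mem' c f hf a b := by simp only [Pi.smul_apply, hf a b, smul_eq_mul]; ring

lemma swap_of_mem_signedChains_allPos (hf : f ∈ signedChains allPos) (a b : V) :
    f b a = -f a b := by
  simpa only [allPos, neg_mul, one_mul] using hf a b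

/-- The chain carrying one unit through the edge `uv`, out of `u`. -/
noncomputable def edgeChain (σ : Sym2 V → ℤ) (u v : V) : V → V → ℤ := fun a b =>
  (if a = u ∧ b = v then 1 else 0) - σ s(u, v) * (if a = v ∧ b = u then 1 else 0)

lemma edgeChain_self (h : u ≠ v) : edgeChain σ u v u v = 1 := by
  simp [edgeChain, h]

lemma edgeChain_of_ne (h : s(a, b) ≠ s(u, v)) : edgeChain σ u v a b = 0 := by
  rw [Ne, Sym2.eq_iff, not_or] at h
  simp [edgeChain, h.1, h.2]

lemma edgeChain_mem_signedChains (hσ : σ s(u, v) = 1 ∨ σ s(u, v) = -1) :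
    edgeChain σ u v ∈ signedChains σ := by
  intro a b
  by_cases h : s(a, b) = s(u, v)
  · rw [h]
    rcases hσ with hσ | hσ <;> simp only [edgeChain, hσ, and_comm] <;> ring
  · rw [edgeChain_of_ne h, edgeChain_of_ne (by rwa [Sym2.eq_swap]), mul_zero]

lemma edgeChain_allPos_mem (u v : V) : edgeChain allPos u v ∈ signedChains allPos :=
  edgeChain_mem_signedChains (.inl rfl)

variable [Fintype V]

/-- The total amount carried by the half-edges at each vertex; Kirchhoff's law is
`outflow f = 0`. -/
def outflow : (V → V → ℤ) →ₗ[ℤ] V → ℤ where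
  toFun f v := ∑ w, f v w
  map_add' f g := by ext; simp [sum_add_distrib]
  map_smul' c f := by ext; simp [mul_sum]

lemma outflow_apply (f : V → V → ℤ) (v : V) : outflow f v = ∑ w, f v w := rfl

lemma outflow_edgeChain (σ : Sym2 V → ℤ) (u v : V) :
    outflow (edgeChain σ u v) = Pi.single u 1 - σ s(u, v) • Pi.single v 1 := by
  ext a
  simp [outflow_apply, edgeChain, ite_and, Pi.single_apply]

lemma outflow_edgeChain_allPos (u v : V) :
    outflow (edgeChain allPos u v) = Pi.single u 1 - Pi.single v 1 := by
  rw [outflow_edgeChain, allPos, one_smul]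

lemma sum_outflow_eq_sum_cut (hf : f ∈ signedChains allPos) (S : Finset V) :
    ∑ a ∈ S, outflow f a = ∑ e ∈ S ×ˢ Sᶜ, f e.1 e.2 := by
  have inner : ∑ a ∈ S, ∑ b ∈ S, f a b = 0 := by
    have swap : ∑ a ∈ S, ∑ b ∈ S, f a b = -∑ a ∈ S, ∑ b ∈ S, f a b := by
      conv_lhs => rw [sum_comm]
      rw [← sum_neg_distrib]
      refine sum_congr rfl fun a _ => ?_
      rw [← sum_neg_distrib]
      exact sum_congr rfl fun b _ => swap_of_mem_signedChains_allPos hf a b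
    omega
  simp only [outflow_apply, ← sum_add_sum_compl S, sum_add_distrib, inner, zero_add, sum_product]

variable (V) in
/-- The integer circulations on `V`: antisymmetric chains satisfying Kirchhoff's law. -/
def circulations : Submodule ℤ (V → V → ℤ) :=
  signedChains allPos ⊓ LinearMap.ker outflow

lemma mem_circulations : f ∈ circulations V ↔ f ∈ signedChains allPos ∧ outflow f = 0 :=
  Iff.rfl

end SignedChains

section UnitFlows

variable [Fintype V] {r : V → V → Prop} {f p : V → V → ℤ} {s t u v : V}

/-- `p` is a flow of value one from `s` to `t` that uses only arcs of the digraph `r`, each at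
most once, such as the flow along a directed path. -/
structure IsUnitFlow (r : V → V → Prop) (s t : V) (p : V → V → ℤ) : Prop where
  antisymm : p ∈ signedChains allPos
  le_one : ∀ a b, p a b ≤ 1
  rel_of_pos : ∀ a b, 0 < p a b → r a b
  outflow_eq : outflow p = Pi.single s 1 - Pi.single t 1

lemma IsUnitFlow.swap (hp : IsUnitFlow r s t p) (a b : V) : p b a = -p a b :=
  swap_of_mem_signedChains_allPos hp.antisymm a b

lemma IsUnitFlow.mono {r' : V → V → Prop} (hp : IsUnitFlow r s t p)
    (h : ∀ a b, r a b → r' a b) : IsUnitFlow r' s t p :=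
  { hp with rel_of_pos := fun a b hab => h a b (hp.rel_of_pos a b hab) }

lemma IsUnitFlow.refl (r : V → V → Prop) (s : V) : IsUnitFlow r s s 0 where
  antisymm := zero_mem _
  le_one := by simp
  rel_of_pos := by simp
  outflow_eq := by simp

lemma IsUnitFlow.add_edgeChain (hp : IsUnitFlow r s u p) (hut : r u t) (hpt : p u t ≤ 0)
    (hpt' : p t u ≤ 0) : IsUnitFlow r s t (p + edgeChain allPos u t) where
  antisymm := add_mem hp.antisymm (edgeChain_allPos_mem u t)
  le_one a b := by
    have := hp.le_one a b
    simp only [Pi.add_apply, edgeChain, allPos]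
    grind
  rel_of_pos a b := by
    have := hp.rel_of_pos a b
    simp only [Pi.add_apply, edgeChain, allPos]
    grind
  outflow_eq := by
    rw [map_add, hp.outflow_eq, outflow_edgeChain_allPos]
    abel

lemma exists_isUnitFlow_supported_insert {S : Set V}
    (hS : ∀ t ∈ S, ∃ p, IsUnitFlow r s t p ∧ ∀ a, ∀ b ∉ S, p a b = 0)
    (hu : u ∈ S) (hv : v ∉ S) (huv : r u v) (ht : t ∈ insert v S) :
    ∃ p, IsUnitFlow r s t p ∧ ∀ a, ∀ b ∉ insert v S, p a b = 0 := by
  rcases ht with rfl | ht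
  · obtain ⟨p, hp, hpS⟩ := hS u hu
    have hput : p u t = 0 := hpS u t hv
    refine ⟨_, hp.add_edgeChain huv hput.le (by rw [hp.swap, hput, neg_zero]), fun a b hb => ?_⟩
    have hne : s(a, b) ≠ s(u, t) := by grind
    rw [Pi.add_apply, Pi.add_apply, edgeChain_of_ne hne, hpS a b fun h => hb (.inr h), add_zero]
  · obtain ⟨p, hp, hpS⟩ := hS t ht
    exact ⟨p, hp, fun a b hb => hpS a b fun h => hb (.inr h)⟩

-- Building the paths inside a growing vertex set keeps them simple, so no arc is used twice.
lemma exists_isUnitFlow_of_reflTransGen (h : Relation.ReflTransGen r s t) :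
    ∃ p, IsUnitFlow r s t p := by
  let Linked (S : Set V) : Prop :=
    s ∈ S ∧ ∀ t ∈ S, ∃ p, IsUnitFlow r s t p ∧ ∀ a, ∀ b ∉ S, p a b = 0
  have linked_singleton : Linked {s} :=
    ⟨rfl, by rintro _ rfl; exact ⟨0, .refl r _, by simp⟩⟩
  obtain ⟨S, hS, hmax⟩ := (Set.toFinite {S | Linked S}).exists_maximal ⟨_, linked_singleton⟩
  have closed : ∀ u ∈ S, ∀ v, r u v → v ∈ S := by
    intro u hu v huv
    by_contra hv
    have linked_insert : Linked (insert v S) :=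
      ⟨.inr hS.1, fun t => exists_isUnitFlow_supported_insert hS.2 hu hv huv⟩
    exact hv (hmax linked_insert (Set.subset_insert v S) (Set.mem_insert v S))
  have ht : t ∈ S := by
    induction h with
    | refl => exact hS.1
    | tail _ huv ih => exact closed _ ih _ huv
  obtain ⟨p, hp, -⟩ := hS.2 t ht
  exact ⟨p, hp⟩

/-- The vertices that can be reached from `s` in the digraph `r`. -/
noncomputable def reachable (r : V → V → Prop) (s : V) : Finset V :=
  {t | Relation.ReflTransGen r s t}

lemma mem_reachable : t ∈ reachable r s ↔ Relation.ReflTransGen r s t := by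
  simp [reachable]

lemma self_mem_reachable (r : V → V → Prop) (s : V) : s ∈ reachable r s :=
  mem_reachable.2 .refl

lemma not_rel_of_mem_reachable_of_notMem (hu : u ∈ reachable r s) (hv : v ∉ reachable r s) :
    ¬ r u v :=
  fun h => hv (mem_reachable.2 ((mem_reachable.1 hu).tail h))

lemma reflTransGen_of_circulation_pos (hf : f ∈ circulations V) (huv : 0 < f u v) :
    Relation.ReflTransGen (fun a b => 0 < f a b ∧ b ≠ v) v u := by
  rw [← mem_reachable]
  by_contra hu
  set S := reachable (fun a b => 0 < f a b ∧ b ≠ v) v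
  have hv : v ∈ S := self_mem_reachable _ v
  have nonpos : ∀ e ∈ S ×ˢ Sᶜ, f e.1 e.2 ≤ 0 := by
    rintro ⟨a, b⟩ he
    obtain ⟨ha, hb⟩ : a ∈ S ∧ b ∉ S := by simpa using he
    have hbv : b ≠ v := fun h => hb (h ▸ hv)
    exact not_lt.1 fun hab => not_rel_of_mem_reachable_of_notMem ha hb ⟨hab, hbv⟩
  have cut_eq_zero : ∑ e ∈ S ×ˢ Sᶜ, f e.1 e.2 = 0 := by
    simp [← sum_outflow_eq_sum_cut hf.1, (mem_circulations.1 hf).2]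
  have hvu : f v u = 0 :=
    (sum_eq_zero_iff_of_nonpos nonpos).1 cut_eq_zero (v, u) (by simp [hv, hu])
  have := swap_of_mem_signedChains_allPos hf.1 v u
  omega

lemma exists_unit_circulation_through (hf : f ∈ circulations V) (huv : 0 < f u v) :
    ∃ q ∈ circulations V, (∀ a b, q a b ≤ 1) ∧ (∀ a b, 0 < q a b → 0 < f a b) ∧ q u v = 1 := by
  obtain ⟨p, hp⟩ := exists_isUnitFlow_of_reflTransGen (reflTransGen_of_circulation_pos hf huv)
  have hne : u ≠ v := by
    rintro rfl
    have := swap_of_mem_signedChains_allPos hf.1 u u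
    omega
  have hpuv : p u v = 0 := by
    have hle : ¬ 0 < p u v := fun h => (hp.rel_of_pos u v h).2 rfl
    have hge : ¬ 0 < p v u := fun h => by
      have := (hp.rel_of_pos v u h).1
      have := swap_of_mem_signedChains_allPos hf.1 v u
      omega
    have := hp.swap u v
    omega
  have hq := (hp.mono fun a b h => h.1).add_edgeChain huv hpuv.le
    (by rw [hp.swap, hpuv, neg_zero])
  refine ⟨_, mem_circulations.2 ⟨hq.antisymm, ?_⟩, hq.le_one, hq.rel_of_pos, ?_⟩
  · rw [hq.outflow_eq, sub_self]
  · rw [Pi.add_apply, Pi.add_apply, hpuv, edgeChain_self hne, zero_add]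

end UnitFlows

section ModTwo

variable [Fintype V] {f : V → V → ℤ}

lemma sum_natAbs_sub_two_smul_lt {q : V → V → ℤ} {u v : V} (hf : f ∈ signedChains allPos)
    (hq : q ∈ signedChains allPos) (le_one : ∀ a b, q a b ≤ 1)
    (pos : ∀ a b, 0 < q a b → 0 < f a b) (huv : 2 ≤ f u v) (hquv : q u v = 1) :
    ∑ a, ∑ b, ((f - (2 : ℤ) • q) a b).natAbs < ∑ a, ∑ b, (f a b).natAbs := by
  have entry_le (a b : V) : ((f - (2 : ℤ) • q) a b).natAbs ≤ (f a b).natAbs := by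
    have := swap_of_mem_signedChains_allPos hf a b
    have := swap_of_mem_signedChains_allPos hq a b
    have := le_one a b
    have := le_one b a
    have := pos a b
    have := pos b a
    simp only [Pi.sub_apply, Pi.smul_apply, smul_eq_mul]
    omega
  have entry_lt : ((f - (2 : ℤ) • q) u v).natAbs < (f u v).natAbs := by
    simp only [Pi.sub_apply, Pi.smul_apply, smul_eq_mul]
    omega
  exact sum_lt_sum (fun a _ => sum_le_sum fun b _ => entry_le a b)
    ⟨u, mem_univ u, sum_lt_sum (fun b _ => entry_le u b) ⟨v, mem_univ v, entry_lt⟩⟩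

-- Pushing two units back along a directed circuit through an arc of value at least 2 preserves
-- parities and decreases the total absolute value.
lemma exists_eq_add_two_smul_of_mem_circulations (hf : f ∈ circulations V) :
    ∃ g ∈ circulations V, ∃ h ∈ circulations V, (∀ a b, |g a b| ≤ 1) ∧ f = g + (2 : ℤ) • h := by
  induction hn : ∑ a, ∑ b, (f a b).natAbs using Nat.strong_induction_on generalizing f with
  | _ n ih =>
  by_cases small : ∀ a b, |f a b| ≤ 1
  · exact ⟨f, hf, 0, zero_mem _, small, by simp⟩
  obtain ⟨u, v, huv⟩ : ∃ u v, 2 ≤ f u v := by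
    push Not at small
    obtain ⟨a, b, hab⟩ := small
    rcases lt_abs.1 hab with h | h
    · exact ⟨a, b, h⟩
    · exact ⟨b, a, by rw [swap_of_mem_signedChains_allPos hf.1]; exact h⟩
  obtain ⟨q, hq, le_one, pos, hquv⟩ := exists_unit_circulation_through hf (u := u) (v := v)
    (by omega)
  obtain ⟨g, hg, h, hh, hg1, eq⟩ := ih _
    (hn ▸ sum_natAbs_sub_two_smul_lt hf.1 hq.1 le_one pos huv hquv)
    (sub_mem hf (Submodule.smul_mem _ 2 hq)) rfl
  refine ⟨g, hg, h + q, add_mem hh hq, hg1, ?_⟩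
  rw [smul_add, ← add_assoc, ← eq, sub_add_cancel]

end ModTwo

section NowhereZeroChains

variable {G : SimpleGraph V} {σ : Sym2 V → ℤ} {k : ℤ} {g : V → V → ℤ} {u v : V}

/-- `g` is a chain of `(G, σ)` that is nonzero exactly on the edges of `G`, with absolute values
below `k`: a nowhere-zero `k`-flow without Kirchhoff's law. -/
structure IsNZChain (G : SimpleGraph V) (σ : Sym2 V → ℤ) (k : ℤ) (g : V → V → ℤ) : Prop where
  mem_signedChains : g ∈ signedChains σ
  ne_zero_iff : ∀ a b, g a b ≠ 0 ↔ G.Adj a b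
  abs_apply_lt : ∀ a b, G.Adj a b → |g a b| < k

lemma IsNZChain.neg (hg : IsNZChain G σ k g) : IsNZChain G σ k (-g) where
  mem_signedChains := neg_mem hg.mem_signedChains
  ne_zero_iff a b := by simpa using hg.ne_zero_iff a b
  abs_apply_lt a b := by simpa using hg.abs_apply_lt a b

lemma IsNZChain.congr_sign {σ' : Sym2 V → ℤ} (hg : IsNZChain G σ k g)
    (h : ∀ e ∈ G.edgeSet, σ e = σ' e) : IsNZChain G σ' k g :=
  { hg with
    mem_signedChains := fun a b => by
      by_cases hab : G.Adj a b
      · rw [← h s(a, b) hab, hg.mem_signedChains a b]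
      · have hg0 : g a b = 0 := not_not.1 fun h0 => hab ((hg.ne_zero_iff a b).1 h0)
        rw [hg.mem_signedChains a b, hg0, mul_zero, mul_zero] }

lemma IsNZChain.deleteEdge (hg : IsNZChain G σ k g) (huv : G.Adj u v)
    (hσ : σ s(u, v) = 1 ∨ σ s(u, v) = -1) :
    IsNZChain (G.deleteEdges {s(u, v)}) σ k (g - g u v • edgeChain σ u v) := by
  have mem : g - g u v • edgeChain σ u v ∈ signedChains σ :=
    sub_mem hg.mem_signedChains (Submodule.smul_mem _ _ (edgeChain_mem_signedChains hσ))
  have apply_of_ne (a b : V) (h : s(a, b) ≠ s(u, v)) :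
      (g - g u v • edgeChain σ u v) a b = g a b := by
    simp [edgeChain_of_ne h]
  have apply_uv : (g - g u v • edgeChain σ u v) u v = 0 := by
    simp [edgeChain_self huv.ne]
  have apply_eq (a b : V) (h : s(a, b) = s(u, v)) : (g - g u v • edgeChain σ u v) a b = 0 := by
    rcases Sym2.eq_iff.1 h with ⟨rfl, rfl⟩ | ⟨rfl, rfl⟩
    · exact apply_uv
    · rw [mem b a, apply_uv, mul_zero]
  refine ⟨mem, fun a b => ?_, fun a b hab => ?_⟩
  · rw [deleteEdges_adj, Set.mem_singleton_iff]
    by_cases h : s(a, b) = s(u, v)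
    · exact iff_of_false (not_not.2 (apply_eq a b h)) fun hab => hab.2 h
    · rw [apply_of_ne a b h, hg.ne_zero_iff, and_iff_left h]
  · rw [deleteEdges_adj, Set.mem_singleton_iff] at hab
    rw [apply_of_ne a b hab.2]
    exact hg.abs_apply_lt a b hab.1

lemma IsNZChain.add_smul_edgeChain {c : ℤ} (hg : IsNZChain (G.deleteEdges {s(u, v)}) σ k g)
    (huv : G.Adj u v) (hσ : σ s(u, v) = 1 ∨ σ s(u, v) = -1) (hc : c ≠ 0) (hck : |c| < k) :
    IsNZChain G σ k (g + c • edgeChain σ u v) := by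
  have mem : g + c • edgeChain σ u v ∈ signedChains σ :=
    add_mem hg.mem_signedChains (Submodule.smul_mem _ _ (edgeChain_mem_signedChains hσ))
  have apply_of_ne (a b : V) (h : s(a, b) ≠ s(u, v)) : (g + c • edgeChain σ u v) a b = g a b := by
    simp [edgeChain_of_ne h]
  have apply_uv : (g + c • edgeChain σ u v) u v = c := by
    have hg0 : g u v = 0 := not_not.1 fun h => by simpa using (hg.ne_zero_iff u v).1 h
    simp [edgeChain_self huv.ne, hg0]
  have abs_apply_eq (a b : V) (h : s(a, b) = s(u, v)) : |(g + c • edgeChain σ u v) a b| = |c| := by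
    rcases Sym2.eq_iff.1 h with ⟨rfl, rfl⟩ | ⟨rfl, rfl⟩
    · rw [apply_uv]
    · rw [mem b a, apply_uv]
      rcases hσ with hσ | hσ <;> simp [hσ]
  refine ⟨mem, fun a b => ?_, fun a b hab => ?_⟩ <;> by_cases h : s(a, b) = s(u, v)
  · have hab : G.Adj a b := by rwa [← mem_edgeSet, h, mem_edgeSet]
    rw [← abs_ne_zero, abs_apply_eq a b h, abs_ne_zero]
    exact iff_of_true hc hab
  · rw [apply_of_ne a b h, hg.ne_zero_iff]
    simp [h]
  · rwa [abs_apply_eq a b h]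
  · rw [apply_of_ne a b h]
    exact hg.abs_apply_lt a b (by simp [hab, h])

variable [Fintype V] {p : V → V → ℤ} {s t : V}

lemma IsUnitFlow.pos_add_of_pos (hp : IsUnitFlow (fun a b => 0 < g a b) s t p)
    (hg : g ∈ signedChains allPos) {a b : V} (hab : 0 < g a b) : 0 < (g + p) a b := by
  have hba : ¬ 0 < p b a := fun h => by
    have := hp.rel_of_pos b a h
    have := swap_of_mem_signedChains_allPos hg a b
    omega
  have := hp.swap a b
  rw [Pi.add_apply, Pi.add_apply]
  omega

lemma IsNZChain.add_isUnitFlow (hg : IsNZChain G allPos k g)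
    (hp : IsUnitFlow (fun a b => 0 < g a b) s t p) : IsNZChain G allPos (k + 1) (g + p) := by
  have entry (a b : V) :
      ((g + p) a b ≠ 0 ↔ g a b ≠ 0) ∧ |(g + p) a b| ≤ |g a b| + 1 := by
    have := swap_of_mem_signedChains_allPos hg.mem_signedChains a b
    have := hp.swap a b
    have := hp.le_one a b
    have := hp.le_one b a
    have := hp.rel_of_pos a b
    have := hp.rel_of_pos b a
    simp only [Pi.add_apply]
    grind
  refine ⟨add_mem hg.mem_signedChains hp.antisymm, fun a b => ?_, fun a b hab => ?_⟩
  · rw [(entry a b).1, hg.ne_zero_iff]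
  · have := (entry a b).2
    have := hg.abs_apply_lt a b hab
    omega

-- The second unit flow may use the arcs of the first, since `f + p` is positive wherever `f` is.
lemma IsNZChain.exists_add_isUnitFlow_pair {f : V → V → ℤ} {t₁ t₂ : V} (hf : IsNZChain G allPos k f)
    (h₁ : Relation.ReflTransGen (fun a b => 0 < f a b) s t₁)
    (h₂ : Relation.ReflTransGen (fun a b => 0 < f a b) s t₂) :
    ∃ g, IsNZChain G allPos (k + 2) g ∧
      outflow g = outflow f + 2 • Pi.single s 1 - Pi.single t₁ 1 - Pi.single t₂ 1 := by
  obtain ⟨p, hp⟩ := exists_isUnitFlow_of_reflTransGen h₁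
  obtain ⟨q, hq⟩ := exists_isUnitFlow_of_reflTransGen h₂
  have hpq := (hf.add_isUnitFlow hp).add_isUnitFlow
    (hq.mono fun _ _ => hp.pos_add_of_pos hf.mem_signedChains)
  refine ⟨f + p + q, by simpa only [add_assoc, one_add_one_eq_two] using hpq, ?_⟩
  rw [map_add, map_add, hp.outflow_eq, hq.outflow_eq]
  module

end NowhereZeroChains

section FourFlows

variable {G : SimpleGraph V} {f g h : V → V → ℤ} {x y : V}

lemma isNZChain_add_two_smul (hg : g ∈ signedChains allPos) (hh : h ∈ signedChains allPos)
    (hg1 : ∀ a b, |g a b| ≤ 1) (hh1 : ∀ a b, |h a b| ≤ 1)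
    (supp : ∀ a b, g a b ≠ 0 ∨ h a b ≠ 0 ↔ G.Adj a b) :
    IsNZChain G allPos 4 (g + (2 : ℤ) • h) where
  mem_signedChains := add_mem hg (Submodule.smul_mem _ 2 hh)
  ne_zero_iff a b := by
    have := abs_le.1 (hg1 a b)
    have := abs_le.1 (hh1 a b)
    rw [← supp]
    simp only [Pi.add_apply, Pi.smul_apply, smul_eq_mul]
    omega
  abs_apply_lt a b _ := by
    have := abs_le.1 (hg1 a b)
    have := abs_le.1 (hh1 a b)
    simp only [Pi.add_apply, Pi.smul_apply, smul_eq_mul, abs_lt]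
    omega

variable [Fintype V]

lemma IsNZChain.exists_covering_pair (hf : IsNZChain G allPos 4 f) (hf0 : outflow f = 0) :
    ∃ g ∈ circulations V, ∃ h ∈ circulations V, (∀ a b, |g a b| ≤ 1) ∧ (∀ a b, |h a b| ≤ 1) ∧
      ∀ a b, g a b ≠ 0 ∨ h a b ≠ 0 ↔ G.Adj a b := by
  obtain ⟨g, hg, h, hh, hg1, f_eq⟩ := exists_eq_add_two_smul_of_mem_circulations
    (mem_circulations.2 ⟨hf.mem_signedChains, hf0⟩)
  obtain ⟨h', hh', m, -, hh'1, h_eq⟩ := exists_eq_add_two_smul_of_mem_circulations hh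
  refine ⟨g, hg, h', hh', hg1, hh'1, fun a b => ?_⟩
  have f_apply : f a b = g a b + 2 * (h' a b + 2 * m a b) := by rw [f_eq, h_eq]; rfl
  have f_lt : f a b ≠ 0 → |f a b| < 4 := fun h => hf.abs_apply_lt a b ((hf.ne_zero_iff a b).1 h)
  have := abs_le.1 (hg1 a b)
  have := abs_le.1 (hh'1 a b)
  rw [abs_lt] at f_lt
  rw [← hf.ne_zero_iff]
  omega

lemma IsNZChain.exists_apply_eq_one (hf : IsNZChain G allPos 4 f) (hf0 : outflow f = 0)
    (hxy : G.Adj x y) : ∃ g, IsNZChain G allPos 4 g ∧ outflow g = 0 ∧ g x y = 1 := by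
  suffices ∃ g, IsNZChain G allPos 4 g ∧ outflow g = 0 ∧ |g x y| = 1 by
    obtain ⟨g, hg, hg0, hgxy⟩ := this
    rcases (abs_eq zero_le_one).1 hgxy with h | h
    · exact ⟨g, hg, hg0, h⟩
    · exact ⟨-g, hg.neg, by simp [hg0], by simp [h]⟩
  obtain ⟨g, hg, h, hh, hg1, hh1, supp⟩ := hf.exists_covering_pair hf0
  have outflow_eq_zero {g h : V → V → ℤ} (hg : g ∈ circulations V) (hh : h ∈ circulations V) :
      outflow (g + (2 : ℤ) • h) = 0 :=
    (mem_circulations.1 (add_mem hg (Submodule.smul_mem _ 2 hh))).2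
  have := abs_le.1 (hg1 x y)
  have := abs_le.1 (hh1 x y)
  have := (supp x y).2 hxy
  -- One of `h + 2g`, `g + 2h`, `g - 2h` takes the value `±1` on `xy`.
  by_cases hgxy : g x y = 0
  · refine ⟨_, isNZChain_add_two_smul hh.1 hg.1 hh1 hg1 fun a b => by rw [or_comm, supp],
      outflow_eq_zero hh hg, ?_⟩
    simp only [Pi.add_apply, Pi.smul_apply, smul_eq_mul]
    grind
  by_cases hsum : |g x y + 2 * h x y| = 1
  · exact ⟨_, isNZChain_add_two_smul hg.1 hh.1 hg1 hh1 supp, outflow_eq_zero hg hh, hsum⟩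
  · refine ⟨_, isNZChain_add_two_smul hg.1 (neg_mem hh.1) hg1 (by simpa using hh1)
      (by simpa using supp), outflow_eq_zero hg (neg_mem hh), ?_⟩
    simp only [Pi.add_apply, Pi.smul_apply, Pi.neg_apply, smul_eq_mul]
    grind

end FourFlows

section FlowsAsChains

lemma exists_orientation_of_chain (g : V → V → ℤ) : ∃ τ : V → Sym2 V → ℤ,
    (∀ v e, τ v e = 1 ∨ τ v e = -1) ∧ ∀ a b, τ a s(a, b) = if 0 < g a b then 1 else -1 := by
  refine ⟨fun v e => if ∃ w, e = s(v, w) ∧ 0 < g v w then 1 else -1, fun v e => ?_,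
    fun a b => ?_⟩
  · exact ite_eq_or_eq _ _ _
  · simp only [Sym2.congr_right, exists_eq_left']

variable [Fintype V] {G : SimpleGraph V} {σ : Sym2 V → ℤ} {k : ℤ} {g : V → V → ℤ}

lemma IsNZFlow.exists_isNZChain {τ : V → Sym2 V → ℤ} {φ : Sym2 V → ℤ}
    (h : IsNZFlow G σ k τ φ) : ∃ g, IsNZChain G σ k g ∧ outflow g = 0 := by
  obtain ⟨⟨⟨hτ, orient⟩, kirchhoff⟩, hφ⟩ := h
  refine ⟨fun a b => if G.Adj a b then τ a s(a, b) * φ s(a, b) else 0,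
    ⟨fun a b => ?_, fun a b => ?_, fun a b hab => ?_⟩, funext kirchhoff⟩
  · by_cases hab : G.Adj a b
    · have hτab : τ b s(a, b) = -σ s(a, b) * τ a s(a, b) := by
        rw [← orient a b hab]
        rcases hτ a s(a, b) with h | h <;> simp [h]
      simp only [hab, hab.symm, if_true, Sym2.eq_swap (a := b), hτab, mul_assoc]
    · simp [hab, G.adj_comm b a]
  · have hτ0 : τ a s(a, b) ≠ 0 := by rcases hτ a s(a, b) with h | h <;> simp [h]
    have hφ0 : G.Adj a b → φ s(a, b) ≠ 0 := fun hab => abs_pos.1 (hφ s(a, b) hab).1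
    simpa [hτ0] using hφ0
  · have abs_τ : |τ a s(a, b)| = 1 := by rcases hτ a s(a, b) with h | h <;> simp [h]
    simpa [hab, abs_mul, abs_τ] using (hφ s(a, b) hab).2

lemma IsNZFlow.exists_isNZChain_deleteEdge {τ : V → Sym2 V → ℤ} {φ : Sym2 V → ℤ} {x y : V}
    (h : IsNZFlow G allPos 4 τ φ) (hxy : G.Adj x y) :
    ∃ f, IsNZChain (G.deleteEdges {s(x, y)}) allPos 4 f ∧
      outflow f = Pi.single y 1 - Pi.single x 1 := by
  obtain ⟨g, hg, hg0⟩ := h.exists_isNZChain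
  obtain ⟨f, hf, hf0, hf1⟩ := hg.exists_apply_eq_one hg0 hxy
  refine ⟨_, hf.deleteEdge hxy (.inl rfl), ?_⟩
  rw [hf1, one_smul, map_sub, hf0, outflow_edgeChain_allPos, zero_sub, neg_sub]

lemma IsNZChain.exists_isNZFlow (hσ : IsSignature G σ) (hg : IsNZChain G σ k g)
    (hg0 : outflow g = 0) :
    ∃ τ φ, IsNZFlow G σ k τ φ ∧ ∀ a b, φ s(a, b) = |g a b| := by
  have abs_swap (a b : V) : |g a b| = |g b a| := by
    by_cases hab : G.Adj a b
    · rw [hg.mem_signedChains a b]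
      rcases hσ s(a, b) hab with h | h <;> simp [h]
    · have zero {a b : V} (h : ¬ G.Adj a b) : g a b = 0 :=
        not_not.1 fun h0 => h ((hg.ne_zero_iff a b).1 h0)
      rw [zero hab, zero (mt Adj.symm hab)]
  obtain ⟨τ, τ_cases, τ_mk⟩ := exists_orientation_of_chain g
  let φ : Sym2 V → ℤ := Sym2.lift ⟨fun a b => |g a b|, abs_swap⟩
  have φ_mk (a b : V) : φ s(a, b) = |g a b| := rfl
  refine ⟨τ, φ, ⟨⟨⟨τ_cases, fun u v huv => ?_⟩, fun v => ?_⟩, ?_⟩, φ_mk⟩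
  · have ne_zero := (hg.ne_zero_iff u v).2 huv
    have swap := hg.mem_signedChains u v
    rw [τ_mk, Sym2.eq_swap, τ_mk, Sym2.eq_swap (a := v)]
    rcases hσ s(u, v) huv with h | h <;> rw [h] at swap ⊢ <;> grind
  · refine Eq.trans ?_ (congrFun hg0 v)
    refine sum_congr rfl fun w _ => ?_
    rw [τ_mk, φ_mk]
    have := hg.ne_zero_iff v w
    grind
  · refine Sym2.ind fun a b hab => ?_
    rw [φ_mk, abs_abs]
    exact ⟨abs_pos.2 ((hg.ne_zero_iff a b).2 hab), hg.abs_apply_lt a b hab⟩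

end FlowsAsChains

section Obstruction

variable [Fintype V] {G : SimpleGraph V} {σ : Sym2 V → ℤ} {u v : V}

-- Summing `ε · outflow g = 0` by edges, an edge `ab` contributes `(ε a - σ(ab) ε b) g a b`.
lemma FlowAdmissible.eq_sign_mul_of_forall_ne (hG : FlowAdmissible G σ) (huv : G.Adj u v)
    {ε : V → ℤ} (hε : ∀ a b, G.Adj a b → s(a, b) ≠ s(u, v) → ε a = σ s(a, b) * ε b) :
    ε u = σ s(u, v) * ε v := by
  obtain ⟨k, τ, φ, hflow⟩ := hG
  obtain ⟨g, hg, hg0⟩ := hflow.exists_isNZChain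
  let T (e : V × V) : ℤ := ε e.1 * g e.1 e.2 + ε e.2 * g e.2 e.1
  have T_eq (a b : V) : T (a, b) = (ε a - σ s(a, b) * ε b) * g a b := by
    simp only [T, hg.mem_signedChains a b]
    ring
  have T_other (e : V × V) (he : e ≠ (u, v) ∧ e ≠ (v, u)) : T e = 0 := by
    obtain ⟨a, b⟩ := e
    rw [T_eq]
    by_cases hab : G.Adj a b
    · rw [← hε a b hab (by grind), sub_self, zero_mul]
    · rw [not_not.1 (mt (hg.ne_zero_iff a b).1 hab), mul_zero]
  have sum_half : ∑ a, ∑ b, ε a * g a b = 0 := by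
    simp [← mul_sum, ← outflow_apply, hg0]
  have sum_T : ∑ e, T e = 0 := by
    rw [Fintype.sum_prod_type]
    simp only [T, sum_add_distrib]
    rw [sum_half, sum_comm, sum_half, add_zero]
  have T_uv : T (u, v) = 0 := by
    rw [Fintype.sum_eq_add (u, v) (v, u) (by simp [huv.ne]) T_other] at sum_T
    have : T (v, u) = T (u, v) := add_comm _ _
    omega
  rw [T_eq] at T_uv
  exact sub_eq_zero.1 ((mul_eq_zero.1 T_uv).resolve_right ((hg.ne_zero_iff u v).2 huv))

lemma FlowAdmissible.mem_iff_mem_of_forall_ne (hG : FlowAdmissible G allPos) (huv : G.Adj u v)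
    {S : Finset V} (hS : ∀ a b, G.Adj a b → s(a, b) ≠ s(u, v) → (a ∈ S ↔ b ∈ S)) :
    u ∈ S ↔ v ∈ S := by
  have := hG.eq_sign_mul_of_forall_ne huv (ε := fun a => if a ∈ S then 1 else 0)
    fun a b hab hne => by simp [allPos, hS a b hab hne]
  simp only [allPos] at this
  grind

end Obstruction

section TwoNegativeEdges

variable {G : SimpleGraph V} {σ : Sym2 V → ℤ} {x₁ y₁ x₂ y₂ u v : V} {S : Finset V}

lemma IsSignature.eq_one_of_notMem {e : Sym2 V} (hσ : IsSignature G σ) (he : e ∈ G.edgeSet)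
    (hneg : e ∉ NegEdges G σ) : σ e = 1 :=
  (hσ e he).resolve_right fun h => hneg ⟨he, h⟩

lemma mem_iff_mem_congr {a b : V} (h : s(a, b) = s(u, v)) :
    (a ∈ S ↔ b ∈ S) ↔ (u ∈ S ↔ v ∈ S) := by
  rcases Sym2.eq_iff.1 h with ⟨rfl, rfl⟩ | ⟨rfl, rfl⟩
  · rfl
  · exact iff_comm

lemma deleteEdges_pair_adj_iff (hN : NegEdges G σ = {s(x₁, y₁), s(x₂, y₂)}) {a b : V} :
    ((G.deleteEdges {s(x₁, y₁)}).deleteEdges {s(x₂, y₂)}).Adj a b ↔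
      G.Adj a b ∧ s(a, b) ∉ NegEdges G σ := by
  simp only [hN, deleteEdges_adj, Set.mem_insert_iff, Set.mem_singleton_iff, not_or, and_assoc]

lemma exists_unique_ne_zero_of_sum_eq_neg_one {ι : Type*} {s : Finset ι} {f : ι → ℤ}
    (nonpos : ∀ i ∈ s, f i ≤ 0) (hsum : ∑ i ∈ s, f i = -1) : ∃! i, i ∈ s ∧ f i ≠ 0 := by
  obtain ⟨i, hi, hfi⟩ := exists_ne_zero_of_sum_ne_zero (by omega : ∑ i ∈ s, f i ≠ 0)
  have rest_nonpos : ∀ j ∈ s.erase i, f j ≤ 0 := fun j hj => nonpos j (mem_of_mem_erase hj)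
  have rest_eq_zero : ∑ j ∈ s.erase i, f j = 0 := by
    have := add_sum_erase s f hi
    have := nonpos i hi
    have := sum_nonpos rest_nonpos
    omega
  refine ⟨i, ⟨hi, hfi⟩, fun j ⟨hj, hfj⟩ => by_contra fun hne => hfj ?_⟩
  exact (sum_eq_zero_iff_of_nonpos rest_nonpos).1 rest_eq_zero j (mem_erase.2 ⟨hne, hj⟩)

variable [Fintype V]

lemma mem_of_no_crossing (hσ : IsSignature G σ) (hG : FlowAdmissible G σ)
    (hG₂ : FlowAdmissible (G.deleteEdges {s(x₂, y₂)}) allPos)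
    (hne : s(x₁, y₁) ≠ s(x₂, y₂)) (hN : NegEdges G σ = {s(x₁, y₁), s(x₂, y₂)})
    (hS : ∀ a b, G.Adj a b → s(a, b) ∉ NegEdges G σ → (a ∈ S ↔ b ∈ S))
    (hx₂ : x₂ ∈ S) (hy₂ : y₂ ∈ S) : x₁ ∈ S ∧ y₁ ∈ S := by
  have neg₁ : s(x₁, y₁) ∈ NegEdges G σ := by simp [hN]
  have neg₂ : s(x₂, y₂) ∈ NegEdges G σ := by simp [hN]
  have n₁_not_crossing : x₁ ∈ S ↔ y₁ ∈ S := by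
    refine hG₂.mem_iff_mem_of_forall_ne (deleteEdges_adj.2 ⟨neg₁.1, hne⟩) fun a b hab h₁ => ?_
    obtain ⟨hab, h₂⟩ := deleteEdges_adj.1 hab
    exact hS a b hab (by simpa [hN, h₁] using h₂)
  by_contra hout
  have hx₁ : x₁ ∉ S := fun h => hout ⟨h, n₁_not_crossing.1 h⟩
  have hy₁ : y₁ ∉ S := fun h => hout ⟨n₁_not_crossing.2 h, h⟩
  -- `n₂` would be the only negative edge meeting `S`.
  have balanced (a b : V) (hab : G.Adj a b) (h₂ : s(a, b) ≠ s(x₂, y₂)) :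
      (if a ∈ S then (1 : ℤ) else 0) = σ s(a, b) * (if b ∈ S then 1 else 0) := by
    by_cases h₁ : s(a, b) = s(x₁, y₁)
    · rcases Sym2.eq_iff.1 h₁ with ⟨rfl, rfl⟩ | ⟨rfl, rfl⟩ <;> simp [hx₁, hy₁]
    · have hpos : s(a, b) ∉ NegEdges G σ := by simp [hN, h₁, h₂]
      simp [hσ.eq_one_of_notMem hab hpos, hS a b hab hpos]
  have := hG.eq_sign_mul_of_forall_ne (ε := fun a => if a ∈ S then 1 else 0) neg₂.1 balanced
  simp [hx₂, hy₂, neg₂.2] at this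

lemma not_both_crossing_of_unique_crossing (hσ : IsSignature G σ) (hG : FlowAdmissible G σ)
    (hN : NegEdges G σ = {s(x₁, y₁), s(x₂, y₂)}) (huv : G.Adj u v)
    (hpos : s(u, v) ∉ NegEdges G σ) (hu : u ∈ S) (hv : v ∉ S)
    (hS : ∀ a b, G.Adj a b → s(a, b) ∉ NegEdges G σ → s(a, b) ≠ s(u, v) → (a ∈ S ↔ b ∈ S)) :
    (x₁ ∈ S ↔ y₁ ∈ S) ∨ (x₂ ∈ S ↔ y₂ ∈ S) := by
  by_contra! both
  -- Switching at `S` would leave `uv` as the only negative edge.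
  have balanced (a b : V) (hab : G.Adj a b) (h : s(a, b) ≠ s(u, v)) :
      (if a ∈ S then (1 : ℤ) else -1) = σ s(a, b) * (if b ∈ S then 1 else -1) := by
    by_cases hneg : s(a, b) ∈ NegEdges G σ
    · have crossing : ¬ (a ∈ S ↔ b ∈ S) := by
        rcases hN ▸ hneg with h | h <;> rw [mem_iff_mem_congr h] <;> tauto
      rw [hneg.2]
      by_cases ha : a ∈ S <;> by_cases hb : b ∈ S <;> simp_all
    · simp [hσ.eq_one_of_notMem hab hneg, hS a b hab hneg h]
  have := hG.eq_sign_mul_of_forall_ne (ε := fun a => if a ∈ S then 1 else -1) huv balanced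
  simp [hu, hv, hσ.eq_one_of_notMem huv hpos] at this

lemma mem_iff_mem_of_unique_crossing (hσ : IsSignature G σ) (hG : FlowAdmissible G σ)
    (huv : G.Adj u v) (hGuv : FlowAdmissible (G.deleteEdges {s(u, v)}) allPos)
    (hN : NegEdges G σ = {s(x₁, y₁), s(x₂, y₂)})
    (hpos : s(u, v) ∉ NegEdges G σ) (hu : u ∈ S) (hv : v ∉ S)
    (hS : ∀ a b, G.Adj a b → s(a, b) ∉ NegEdges G σ → s(a, b) ≠ s(u, v) → (a ∈ S ↔ b ∈ S)) :
    x₂ ∈ S ↔ y₂ ∈ S := by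
  have neg₂ : s(x₂, y₂) ∈ NegEdges G σ := by simp [hN]
  rcases not_both_crossing_of_unique_crossing hσ hG hN huv hpos hu hv hS with
    n₁_not_crossing | n₂_not_crossing
  · have hne : s(x₂, y₂) ≠ s(u, v) := fun h => hpos (h ▸ neg₂)
    refine hGuv.mem_iff_mem_of_forall_ne (deleteEdges_adj.2 ⟨neg₂.1, hne⟩) fun a b hab h₂ => ?_
    obtain ⟨hab, h⟩ := deleteEdges_adj.1 hab
    by_cases h₁ : s(a, b) = s(x₁, y₁)
    · exact (mem_iff_mem_congr h₁).2 n₁_not_crossing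
    · exact hS a b hab (by simp [hN, h₁, h₂]) h
  · exact n₂_not_crossing

lemma sum_cut_eq_of_outflow_eq {f : V → V → ℤ} {x y : V} (hf : f ∈ signedChains allPos)
    (hout : outflow f = Pi.single y 1 - Pi.single x 1) (hx : x ∈ S) :
    ∑ e ∈ S ×ˢ Sᶜ, f e.1 e.2 = (if y ∈ S then 1 else 0) - 1 := by
  simp [← sum_outflow_eq_sum_cut hf, hout, sum_pi_single', hx]

lemma mem_of_cut_nonpos (hσ : IsSignature G σ) (hG : FlowAdmissible G σ)
    (hcrit : ∀ e ∈ G.edgeSet, FlowAdmissible (G.deleteEdges {e}) allPos)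
    (hN : NegEdges G σ = {s(x₁, y₁), s(x₂, y₂)}) {f : V → V → ℤ}
    (hf : f ∈ signedChains allPos)
    (supp : ∀ a b, f a b ≠ 0 ↔ G.Adj a b ∧ s(a, b) ∉ NegEdges G σ)
    (hout : outflow f = Pi.single y₂ 1 - Pi.single x₂ 1) (hx₂ : x₂ ∈ S)
    (nonpos : ∀ e ∈ S ×ˢ Sᶜ, f e.1 e.2 ≤ 0) : y₂ ∈ S := by
  by_contra hy₂
  have cut := sum_cut_eq_of_outflow_eq hf hout hx₂
  rw [if_neg hy₂, zero_sub] at cut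
  obtain ⟨⟨u, v⟩, ⟨huv, hfuv⟩, unique⟩ := exists_unique_ne_zero_of_sum_eq_neg_one nonpos cut
  obtain ⟨hu, hv⟩ : u ∈ S ∧ v ∉ S := by simpa using huv
  obtain ⟨adj, hpos⟩ := (supp u v).1 hfuv
  have eq_of_crossing {a b : V} (hab : f a b ≠ 0) (ha : a ∈ S) (hb : b ∉ S) :
      s(a, b) = s(u, v) :=
    congrArg (fun e : V × V => s(e.1, e.2)) (unique (a, b) ⟨by simp [ha, hb], hab⟩)
  refine hy₂ ((mem_iff_mem_of_unique_crossing hσ hG adj (hcrit _ adj) hN hpos hu hv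
    fun a b hab hneg hne => ?_).1 hx₂)
  have hfab := (supp a b).2 ⟨hab, hneg⟩
  have hfba := (supp b a).2 ⟨hab.symm, by rwa [Sym2.eq_swap]⟩
  exact ⟨fun ha => by_contra fun hb => hne (eq_of_crossing hfab ha hb),
    fun hb => by_contra fun ha => hne (Sym2.eq_swap.trans (eq_of_crossing hfba hb ha))⟩

lemma reflTransGen_ends_of_outflow_eq (hσ : IsSignature G σ) (hG : FlowAdmissible G σ)
    (hcrit : ∀ e ∈ G.edgeSet, FlowAdmissible (G.deleteEdges {e}) allPos)
    (hne : s(x₁, y₁) ≠ s(x₂, y₂)) (hN : NegEdges G σ = {s(x₁, y₁), s(x₂, y₂)})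
    {f : V → V → ℤ} (hf : f ∈ signedChains allPos)
    (supp : ∀ a b, f a b ≠ 0 ↔ G.Adj a b ∧ s(a, b) ∉ NegEdges G σ)
    (hout : outflow f = Pi.single y₂ 1 - Pi.single x₂ 1) :
    Relation.ReflTransGen (fun a b => 0 < f a b) x₂ x₁ ∧
      Relation.ReflTransGen (fun a b => 0 < f a b) x₂ y₁ := by
  simp only [← mem_reachable]
  set S := reachable (fun a b => 0 < f a b) x₂
  have hx₂ : x₂ ∈ S := self_mem_reachable _ x₂
  have nonpos : ∀ e ∈ S ×ˢ Sᶜ, f e.1 e.2 ≤ 0 := by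
    rintro ⟨a, b⟩ he
    obtain ⟨ha, hb⟩ : a ∈ S ∧ b ∉ S := by simpa using he
    exact not_lt.1 fun hab => not_rel_of_mem_reachable_of_notMem ha hb hab
  have hy₂ : y₂ ∈ S := mem_of_cut_nonpos hσ hG hcrit hN hf supp hout hx₂ nonpos
  have cut := sum_cut_eq_of_outflow_eq hf hout hx₂
  rw [if_pos hy₂, sub_self] at cut
  have eq_zero_of_crossing {a b : V} (ha : a ∈ S) (hb : b ∉ S) : f a b = 0 :=
    (sum_eq_zero_iff_of_nonpos nonpos).1 cut (a, b) (by simp [ha, hb])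
  have neg₂ : s(x₂, y₂) ∈ NegEdges G σ := by simp [hN]
  refine mem_of_no_crossing hσ hG (hcrit _ neg₂.1) hne hN (fun a b hab hneg => ?_) hx₂ hy₂
  have hfab := (supp a b).2 ⟨hab, hneg⟩
  have hfba := (supp b a).2 ⟨hab.symm, by rwa [Sym2.eq_swap]⟩
  exact ⟨fun ha => by_contra fun hb => hfab (eq_zero_of_crossing ha hb),
    fun hb => by_contra fun ha => hfba (eq_zero_of_crossing hb ha)⟩

lemma IsNZChain.exists_extend_two_negative_edges {k : ℤ} {f : V → V → ℤ} (hk : 1 < k)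
    (hσ : IsSignature G σ) (hne : s(x₁, y₁) ≠ s(x₂, y₂))
    (hN : NegEdges G σ = {s(x₁, y₁), s(x₂, y₂)})
    (hf : IsNZChain ((G.deleteEdges {s(x₁, y₁)}).deleteEdges {s(x₂, y₂)}) allPos k f)
    (hout : outflow f =
      Pi.single x₂ 1 + Pi.single y₂ 1 - Pi.single x₁ 1 - Pi.single y₁ 1) :
    ∃ g, IsNZChain G σ k g ∧ outflow g = 0 ∧ |g x₁ y₁| = 1 ∧ |g x₂ y₂| = 1 := by
  have neg₁ : s(x₁, y₁) ∈ NegEdges G σ := by simp [hN]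
  have neg₂ : s(x₂, y₂) ∈ NegEdges G σ := by simp [hN]
  have hfσ : IsNZChain ((G.deleteEdges {s(x₁, y₁)}).deleteEdges {s(x₂, y₂)}) σ k f := by
    refine hf.congr_sign (Sym2.ind fun a b hab => ?_)
    obtain ⟨adj, hpos⟩ := (deleteEdges_pair_adj_iff hN).1 hab
    exact (hσ.eq_one_of_notMem adj hpos).symm
  have apply_eq_zero {a b : V} (hneg : s(a, b) ∈ NegEdges G σ) : f a b = 0 := by
    by_contra h
    exact ((deleteEdges_pair_adj_iff hN).1 ((hf.ne_zero_iff a b).1 h)).2 hneg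
  have adj₂ : (G.deleteEdges {s(x₁, y₁)}).Adj x₂ y₂ := deleteEdges_adj.2 ⟨neg₂.1, hne.symm⟩
  refine ⟨f + (-1 : ℤ) • edgeChain σ x₂ y₂ + (1 : ℤ) • edgeChain σ x₁ y₁,
    (hfσ.add_smul_edgeChain adj₂ (.inr neg₂.2) (by simp) (by simpa)).add_smul_edgeChain
      neg₁.1 (.inr neg₁.2) one_ne_zero (by simpa), ?_, ?_, ?_⟩
  · simp only [map_add, map_smul, outflow_edgeChain, hout, neg₁.2, neg₂.2]
    module
  · simp [apply_eq_zero neg₁, edgeChain_of_ne hne, edgeChain_self (G.ne_of_adj neg₁.1)]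
  · simp [apply_eq_zero neg₂, edgeChain_of_ne hne.symm, edgeChain_self (G.ne_of_adj neg₂.1)]

end TwoNegativeEdges

theorem stmt14_general [Fintype V] (G : SimpleGraph V) (σ : Sym2 V → ℤ)
    (hσ : IsSignature G σ)
    (hcrit : ∀ e ∈ G.edgeSet,
      ∃ τ φ, IsNZFlow (G.deleteEdges {e}) allPos 4 τ φ)
    (hadm : FlowAdmissible G σ)
    (n₁ n₂ : Sym2 V) (hne : n₁ ≠ n₂) (hN : NegEdges G σ = {n₁, n₂}) :
    ∃ τ φ, IsNZFlow G σ 6 τ φ ∧ φ n₁ = 1 ∧ φ n₂ = 1 := by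
  induction n₁ with | _ x₁ y₁
  induction n₂ with | _ x₂ y₂
  have neg₁ : s(x₁, y₁) ∈ NegEdges G σ := by simp [hN]
  have neg₂ : s(x₂, y₂) ∈ NegEdges G σ := by simp [hN]
  obtain ⟨τ, φ, hflow⟩ := hcrit _ neg₁.1
  obtain ⟨f, hf, hf_out⟩ :=
    hflow.exists_isNZChain_deleteEdge (deleteEdges_adj.2 ⟨neg₂.1, hne.symm⟩)
  have supp (a b : V) : f a b ≠ 0 ↔ G.Adj a b ∧ s(a, b) ∉ NegEdges G σ :=
    (hf.ne_zero_iff a b).trans (deleteEdges_pair_adj_iff hN)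
  obtain ⟨reach_x₁, reach_y₁⟩ := reflTransGen_ends_of_outflow_eq hσ hadm
    (fun e he => ⟨4, hcrit e he⟩) hne hN hf.mem_signedChains supp hf_out
  obtain ⟨F, hF, hF_out⟩ := hf.exists_add_isUnitFlow_pair reach_x₁ reach_y₁
  obtain ⟨g, hg, hg0, hg₁, hg₂⟩ := hF.exists_extend_two_negative_edges (by norm_num) hσ hne hN
    (by rw [hF_out, hf_out]; module)
  obtain ⟨τ', φ', hflow', hφ'⟩ := hg.exists_isNZFlow hσ hg0
  exact ⟨τ', φ', hflow', (hφ' x₁ y₁).trans hg₁, (hφ' x₂ y₂).trans hg₂⟩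

/-- A flow-admissible signed cubic graph whose underlying graph is a
critical snark, with exactly two negative edges, admits a nowhere-zero 6-flow with
value 1 on both negative edges. -/
theorem stmt14 [Fintype V] (G : SimpleGraph V) (σ : Sym2 V → ℤ)
    (hσ : IsSignature G σ) (hcubic : CubicGraph G) (hbl : Bridgeless G)
    (hsnark : ¬ ∃ c : Sym2 V → Fin 3, IsProper3EdgeColoring G c)
    (hcrit : ∀ e ∈ G.edgeSet,
      ∃ τ φ, IsNZFlow (G.deleteEdges {e}) allPos 4 τ φ)
    (hadm : FlowAdmissible G σ)
    (n₁ n₂ : Sym2 V) (hne : n₁ ≠ n₂) (hN : NegEdges G σ = {n₁, n₂}) :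
    ∃ τ φ, IsNZFlow G σ 6 τ φ ∧ φ n₁ = 1 ∧ φ n₂ = 1 := by
  exact stmt14_general G σ hσ hcrit hadm n₁ n₂ hne hN
end
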